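/- Set D = ln κ / ln(κ/a) and ν = ln(κ/a). For Λ > 0 let N(Λ) denote the number of eigenvalues in (0, Λ] of the Dirichlet problem y(0) = y(1) = 0 for the equation −y'' − λρy = 0 with weight ρ the distributional derivative of the Cantor-type self-similar function P with parameters κ, a, b; assume N(Λ) is finite for every Λ > 0. Suppose s : ℝ → ℝ is a continuous ν-periodic function such that N(Λ) = Λ^D·(s(ln Λ) + o(1)) as Λ → +∞. Then there exists a nondecreasing function σ : [0, ν] → ℝ whose Lebesgue–Stieltjes measure is mutually singular with Lebesgue measure (a purely singular nondecreasing function), such that s(t) = e^{−Dt}·σ(t) for all t ∈ [0, ν]. -/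

import Mathlib

open MeasureTheory

/-- A continuous function `f : [0,1] → ℝ` is a *self-similar function of Cantor type*
with parameters `κ`, `a`, `b` if `f 0 = 0`, `f 1 = 1`, `f` is constant on each interval
`(α_{2k-1}, α_{2k})` for `k ∈ {1, …, κ-1}` (where `α_{2k} = k(a+b)`, `α_{2k+1} = α_{2k} + a`),
and for each `k ∈ {0, …, κ-1}` the function `x ↦ κ·f(α_{2k} + a·x)` differs from `f`
by an additive constant. -/
def CantorType (κ : ℕ) (a b : ℝ) (f : ℝ → ℝ) : Prop :=
  ContinuousOn f (Set.Icc 0 1) ∧ f 0 = 0 ∧ f 1 = 1 ∧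
  (∀ k : ℕ, 1 ≤ k → k ≤ κ - 1 →
    ∃ c : ℝ, ∀ x ∈ Set.Ioo (((k : ℝ) - 1) * (a + b) + a) ((k : ℝ) * (a + b)), f x = c) ∧
  (∀ k : ℕ, k ≤ κ - 1 → ∃ c : ℝ, ∀ x ∈ Set.Icc (0 : ℝ) 1,
    (κ : ℝ) * f ((k : ℝ) * (a + b) + a * x) = f x + c)

/-- `lam` is an eigenvalue of the Dirichlet problem `-y'' - λ ρ y = 0`, `y(0) = y(1) = 0`,
where `ρ` is the distributional derivative of the function whose Lebesgue–Stieltjes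
measure is `μ`. -/
def IsDirichletEigen (μ : Measure ℝ) (lam : ℝ) : Prop :=
  ∃ y g : ℝ → ℝ, ContinuousOn y (Set.Icc 0 1) ∧ ContinuousOn g (Set.Icc 0 1) ∧
    (∃ x ∈ Set.Icc (0 : ℝ) 1, y x ≠ 0) ∧
    (∀ x ∈ Set.Icc (0 : ℝ) 1, y x = y 0 + ∫ t in (0 : ℝ)..x, g t) ∧
    (∀ x ∈ Set.Icc (0 : ℝ) 1, g x = g 0 - lam * ∫ t in Set.Icc (0 : ℝ) x, y t ∂μ) ∧
    y 0 = 0 ∧ y 1 = 0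

/-!
The eigenvalues are the zeros of the upper right entry of the monodromy matrix `!![c, s; d, c]` of
the string. Self-similarity makes `d` and the half-trace `θ` over one cell (a block and the adjacent
gap) at the parameter `τ l`, `τ = κ / a`, explicit Chebyshev expressions in their values at `l`. By
the assumed asymptotics the renormalized counting functions `N (τ ^ k l) / κ ^ k` have a limit
`F l`, which at `l = exp t` is `exp (D t)` times the periodic coefficient at `t`; so the claim is
that `F ∘ exp` is singular.

The eigenvalues interlace with the zeros of `d`. Between consecutive zeros `z < z'` of `d`, the
half-trace, normalized by the sign of `c z`, first falls from `1` to `-1` (a band) and then stays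
below `-1` (a gap). Gaps are mapped into gaps by `l ↦ τ l`, so `F` is constant on them. A Pick
function inequality controls the distortion of these intervals, so that at every scale `κ ^ (-k)`
gaps fill a definite proportion of the space between consecutive zeros of `d (τ ^ k l)`, whereas the
increments of `F` there are all comparable to `κ ^ (-k)`. This is incompatible with a positive
derivative of `F` at any point, and a monotone function without positive derivatives is singular.
-/

namespace CantorString

open Set

section BanachAlgebra

variable {R : Type*} [NormedRing R] [NormedAlgebra ℝ R] [CompleteSpace R] {T : R}

lemma isUnit_one_add_smul_of_norm_pow_le (hT : ∀ n : ℕ, ‖T ^ n‖ ≤ 1 / n.factorial) (l : ℝ) :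
    IsUnit (1 + l • T) := by
  have hsum : Summable ((-(l • T)) ^ · : ℕ → R) := by
    refine Summable.of_norm_bounded (Real.summable_pow_div_factorial |l|) fun n => ?_
    rw [← neg_smul, smul_pow, norm_smul, norm_pow, norm_neg, Real.norm_eq_abs, div_eq_mul_one_div]
    gcongr
    exact hT n
  rw [← sub_neg_eq_add]
  exact ⟨⟨_, _, hsum.one_sub_mul_tsum_pow, hsum.tsum_pow_mul_one_sub⟩, rfl⟩

lemma continuous_inverse_one_add_smul_of_norm_pow_le (hT : ∀ n : ℕ, ‖T ^ n‖ ≤ 1 / n.factorial) :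
    Continuous fun l : ℝ => Ring.inverse (1 + l • T) := by
  refine continuous_iff_continuousAt.2 fun l => ?_
  obtain ⟨u, hu⟩ := isUnit_one_add_smul_of_norm_pow_le hT l
  have h := NormedRing.inverse_continuousAt u
  rw [hu] at h
  exact h.comp_of_eq (by fun_prop) rfl

end BanachAlgebra

section Volterra

variable {μ : Measure ℝ} [IsProbabilityMeasure μ]

lemma abs_intervalIntegral_le_of_abs_le {f : ℝ → ℝ} {C t : ℝ} (ht : 0 ≤ t)
    (h : ∀ x ∈ Icc 0 t, |f x| ≤ C) : |∫ x in 0..t, f x ∂μ| ≤ C := by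
  have hC : 0 ≤ C := (abs_nonneg _).trans (h 0 ⟨le_rfl, ht⟩)
  rw [intervalIntegral.integral_of_le ht]
  calc ‖∫ x in Ioc 0 t, f x ∂μ‖ ≤ C * μ.real (Ioc 0 t) :=
        norm_setIntegral_le_of_norm_le_const (measure_lt_top _ _)
          fun x hx => h x (Ioc_subset_Icc_self hx)
    _ ≤ C * 1 := by gcongr; exact measureReal_le_one
    _ = C := mul_one C

/-- The constant extension of a continuous function on the unit interval to the real line. -/
noncomputable abbrev extend (f : C(unitInterval, ℝ)) : ℝ → ℝ := IccExtend zero_le_one f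

lemma continuous_extend (f : C(unitInterval, ℝ)) : Continuous (extend f) :=
  f.continuous.Icc_extend'

lemma abs_extend_le_norm (f : C(unitInterval, ℝ)) (x : ℝ) : |extend f x| ≤ ‖f‖ :=
  f.norm_coe_le_norm _

variable (μ) in
lemma continuous_integral_extend :
    Continuous fun f : C(unitInterval, ℝ) => ∫ x in 0..1, extend f x ∂μ := by
  refine LipschitzWith.continuous (K := 1) (LipschitzWith.of_dist_le_mul fun f g => ?_)
  rw [Real.dist_eq, dist_eq_norm, NNReal.coe_one, one_mul, ← intervalIntegral.integral_sub
    ((continuous_extend f).intervalIntegrable _ _) ((continuous_extend g).intervalIntegrable _ _)]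
  exact abs_intervalIntegral_le_of_abs_le zero_le_one fun x _ => abs_extend_le_norm (f - g) x

variable [NullSingletonClass μ]

lemma continuous_integral_of_continuous {f : ℝ → ℝ} (hf : Continuous f) :
    Continuous fun t => ∫ x in 0..t, f x ∂μ :=
  intervalIntegral.continuous_primitive (fun _ _ => hf.intervalIntegrable _ _) 0

lemma abs_integral_integral_le {f : ℝ → ℝ} (hf : Continuous f) {C x : ℝ} {n : ℕ} (hC : 0 ≤ C)
    (hx : 0 ≤ x) (h : ∀ s ∈ Icc 0 x, |f s| ≤ C * s ^ n) :
    |∫ t in 0..x, ∫ s in 0..t, f s ∂μ| ≤ C * x ^ (n + 1) / (n + 1) := by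
  have inner : ∀ t ∈ Icc 0 x, |∫ s in 0..t, f s ∂μ| ≤ C * t ^ n := fun t ht =>
    abs_intervalIntegral_le_of_abs_le ht.1 fun s hs =>
      (h s ⟨hs.1, hs.2.trans ht.2⟩).trans <|
        mul_le_mul_of_nonneg_left (pow_le_pow_left₀ hs.1 hs.2 n) hC
  calc |∫ t in 0..x, ∫ s in 0..t, f s ∂μ| ≤ ∫ t in 0..x, |∫ s in 0..t, f s ∂μ| :=
        intervalIntegral.abs_integral_le_integral_abs hx
    _ ≤ ∫ t in 0..x, C * t ^ n :=
        intervalIntegral.integral_mono_on hx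
          ((continuous_integral_of_continuous hf).abs.intervalIntegrable _ _)
          ((by fun_prop : Continuous fun t : ℝ => C * t ^ n).intervalIntegrable _ _) inner
    _ = C * x ^ (n + 1) / (n + 1) := by
        rw [intervalIntegral.integral_const_mul, integral_pow]
        simp [mul_div_assoc]

lemma continuous_integral_integral {f : ℝ → ℝ} (hf : Continuous f) :
    Continuous fun x : ℝ => ∫ t in 0..x, ∫ s in 0..t, f s ∂μ :=
  intervalIntegral.continuous_primitive
    (fun _ _ => (continuous_integral_of_continuous hf).intervalIntegrable _ _) 0

variable (μ)

/-- The Volterra operator `f ↦ ∫₀ˣ ∫₀ᵗ f dμ dt` as a linear map. -/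
noncomputable def volterraLinear : C(unitInterval, ℝ) →ₗ[ℝ] C(unitInterval, ℝ) where
  toFun f :=
    ⟨fun x => ∫ t in 0..(x : ℝ), ∫ s in 0..t, extend f s ∂μ,
      (continuous_integral_integral (continuous_extend f)).comp continuous_subtype_val⟩
  map_add' f g := by
    ext x
    have inner : ∀ t : ℝ, ∫ s in 0..t, extend (f + g) s ∂μ =
        (∫ s in 0..t, extend f s ∂μ) + ∫ s in 0..t, extend g s ∂μ := fun t =>
      intervalIntegral.integral_add ((continuous_extend f).intervalIntegrable _ _)
        ((continuous_extend g).intervalIntegrable _ _)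
    simp only [ContinuousMap.coe_mk, ContinuousMap.add_apply, inner]
    exact intervalIntegral.integral_add
      ((continuous_integral_of_continuous (continuous_extend f)).intervalIntegrable _ _)
      ((continuous_integral_of_continuous (continuous_extend g)).intervalIntegrable _ _)
  map_smul' r f := by
    ext x
    have inner : ∀ t : ℝ, ∫ s in 0..t, extend (r • f) s ∂μ = r * ∫ s in 0..t, extend f s ∂μ :=
      fun t => intervalIntegral.integral_const_mul r _
    simp only [ContinuousMap.coe_mk, ContinuousMap.smul_apply, smul_eq_mul, inner, RingHom.id_apply,
      intervalIntegral.integral_const_mul]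

/-- The Volterra operator `f ↦ ∫₀ˣ ∫₀ᵗ f dμ dt` on `C([0, 1])`. -/
noncomputable def volterra : C(unitInterval, ℝ) →L[ℝ] C(unitInterval, ℝ) :=
  (volterraLinear μ).mkContinuous 1 fun f => by
    rw [one_mul, ContinuousMap.norm_le _ (norm_nonneg f)]
    intro x
    have h := abs_integral_integral_le (μ := μ) (continuous_extend f) (n := 0) (norm_nonneg f)
      x.2.1 fun s _ => by simpa using abs_extend_le_norm f s
    refine h.trans ?_
    simpa using mul_le_of_le_one_right (norm_nonneg f) x.2.2

lemma volterra_apply (f : C(unitInterval, ℝ)) (x : unitInterval) :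
    volterra μ f x = ∫ t in 0..(x : ℝ), ∫ s in 0..t, extend f s ∂μ := rfl

lemma abs_volterra_pow_apply_le (n : ℕ) (f : C(unitInterval, ℝ)) (x : unitInterval) :
    |(volterra μ ^ n) f x| ≤ ‖f‖ / n.factorial * (x : ℝ) ^ n := by
  induction n generalizing x with
  | zero => simpa using f.norm_coe_le_norm x
  | succ n ih =>
    rw [pow_succ', mul_apply_eq_comp, volterra_apply]
    have h := abs_integral_integral_le (μ := μ) (continuous_extend ((volterra μ ^ n) f))
      (n := n) (by positivity : 0 ≤ ‖f‖ / n.factorial) x.2.1 fun s hs => by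
        rw [extend, IccExtend_of_mem _ _ ⟨hs.1, hs.2.trans x.2.2⟩]
        exact ih _
    refine h.trans_eq ?_
    rw [Nat.factorial_succ]
    push_cast
    field_simp

lemma norm_volterra_pow_le (n : ℕ) : ‖volterra μ ^ n‖ ≤ 1 / n.factorial := by
  refine ContinuousLinearMap.opNorm_le_bound _ (by positivity) fun f => ?_
  rw [ContinuousMap.norm_le _ (by positivity)]
  intro x
  calc |(volterra μ ^ n) f x| ≤ ‖f‖ / n.factorial * (x : ℝ) ^ n := abs_volterra_pow_apply_le μ n f x
    _ ≤ ‖f‖ / n.factorial * 1 := by gcongr; exact pow_le_one₀ x.2.1 x.2.2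
    _ = 1 / n.factorial * ‖f‖ := by ring

lemma isUnit_one_add_smul_volterra (l : ℝ) : IsUnit (1 + l • volterra μ) :=
  isUnit_one_add_smul_of_norm_pow_le (R := C(unitInterval, ℝ) →L[ℝ] C(unitInterval, ℝ))
    (norm_volterra_pow_le μ) l

lemma continuous_inverse_one_add_smul_volterra :
    Continuous fun l : ℝ => Ring.inverse (1 + l • volterra μ) :=
  continuous_inverse_one_add_smul_of_norm_pow_le
    (R := C(unitInterval, ℝ) →L[ℝ] C(unitInterval, ℝ)) (norm_volterra_pow_le μ)

end Volterra

/-- `y, g` solve `y' = g`, `dg = -l y dμ` on `[0, 1]`, in integrated form. The values outside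
`[0, 1]` are irrelevant; continuity on the whole line saves extending solutions. -/
structure IsSolution (μ : Measure ℝ) (l : ℝ) (y g : ℝ → ℝ) : Prop where
  continuous_fst : Continuous y
  continuous_snd : Continuous g
  fst_eq : ∀ x ∈ Icc (0 : ℝ) 1, y x = y 0 + ∫ t in 0..x, g t
  snd_eq : ∀ x ∈ Icc (0 : ℝ) 1, g x = g 0 - l * ∫ t in 0..x, y t ∂μ

namespace IsSolution

variable {μ : Measure ℝ} {l l₁ l₂ : ℝ} {y g y₁ g₁ y₂ g₂ : ℝ → ℝ}

lemma fst_eq_volterra [IsProbabilityMeasure μ] [NullSingletonClass μ] (h : IsSolution μ l y g)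
    {x : ℝ} (hx : x ∈ Icc (0 : ℝ) 1) :
    y x = y 0 + g 0 * x - l * ∫ t in 0..x, ∫ s in 0..t, y s ∂μ := by
  have hg : ∫ t in 0..x, g t = ∫ t in 0..x, (g 0 - l * ∫ s in 0..t, y s ∂μ) := by
    refine intervalIntegral.integral_congr fun t ht => ?_
    rw [uIcc_of_le hx.1] at ht
    exact h.snd_eq t ⟨ht.1, ht.2.trans hx.2⟩
  have hint := continuous_integral_of_continuous (μ := μ) h.continuous_fst
  rw [h.fst_eq x hx, hg, intervalIntegral.integral_sub (by simp)
    ((hint.intervalIntegrable _ _).const_mul _), intervalIntegral.integral_const_mul]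
  simp only [intervalIntegral.integral_const, sub_zero, smul_eq_mul]
  ring

variable [IsFiniteMeasure μ]

lemma linear_comb (h₁ : IsSolution μ l y₁ g₁) (h₂ : IsSolution μ l y₂ g₂) (p q : ℝ) :
    IsSolution μ l (fun x => p * y₁ x + q * y₂ x) (fun x => p * g₁ x + q * g₂ x) where
  continuous_fst := (h₁.continuous_fst.const_mul p).add (h₂.continuous_fst.const_mul q)
  continuous_snd := (h₁.continuous_snd.const_mul p).add (h₂.continuous_snd.const_mul q)
  fst_eq x hx := by
    rw [intervalIntegral.integral_add ((h₁.continuous_snd.intervalIntegrable _ _).const_mul p)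
      ((h₂.continuous_snd.intervalIntegrable _ _).const_mul q),
      intervalIntegral.integral_const_mul, intervalIntegral.integral_const_mul,
      h₁.fst_eq x hx, h₂.fst_eq x hx]
    ring
  snd_eq x hx := by
    rw [intervalIntegral.integral_add ((h₁.continuous_fst.intervalIntegrable _ _).const_mul p)
      ((h₂.continuous_fst.intervalIntegrable _ _).const_mul q),
      intervalIntegral.integral_const_mul, intervalIntegral.integral_const_mul,
      h₁.snd_eq x hx, h₂.snd_eq x hx]
    ring

end IsSolution

section Fundamental

variable (μ : Measure ℝ) [IsProbabilityMeasure μ] [NullSingletonClass μ]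

/-- The function `x ↦ A + B x` on the unit interval. -/
noncomputable def affine (A B : ℝ) : C(unitInterval, ℝ) := ⟨fun x => A + B * x, by fun_prop⟩

/-- The solution with initial values `y(0) = A`, `y'(0) = B`, as an element of `C([0, 1])`: the
initial value problem reads `(1 + l V) y = A + B x` with `V` the Volterra operator. -/
noncomputable def solCM (A B l : ℝ) : C(unitInterval, ℝ) :=
  Ring.inverse (1 + l • volterra μ) (affine A B)

/-- The solution with initial values `y(0) = A`, `y'(0) = B`. -/
noncomputable def sol (A B l : ℝ) : ℝ → ℝ := extend (solCM μ A B l)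

/-- The derivative of `sol`. -/
noncomputable def solDeriv (A B l x : ℝ) : ℝ := B - l * ∫ t in 0..x, sol μ A B l t ∂μ

lemma continuous_sol (A B l : ℝ) : Continuous (sol μ A B l) := continuous_extend _

lemma continuous_affine : Continuous fun p : ℝ × ℝ => affine p.1 p.2 :=
  ContinuousMap.continuous_of_continuous_uncurry _ <|
    show Continuous fun q : (ℝ × ℝ) × unitInterval => q.1.1 + q.1.2 * (q.2 : ℝ) by fun_prop

lemma continuous_solCM : Continuous fun p : ℝ × ℝ × ℝ => solCM μ p.1 p.2.1 p.2.2 :=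
  ((continuous_inverse_one_add_smul_volterra μ).comp (continuous_snd.comp continuous_snd)).clm_apply
    (continuous_affine.comp (continuous_fst.prodMk (continuous_fst.comp continuous_snd)))

variable {μ} in
lemma solCM_unique {A B l : ℝ} {f : C(unitInterval, ℝ)}
    (hf : (1 + l • volterra μ) f = affine A B) : solCM μ A B l = f := by
  rw [solCM, ← hf, ← mul_apply_eq_comp,
    Ring.inverse_mul_cancel _ (isUnit_one_add_smul_volterra μ l), one_apply_eq_self]

lemma sol_eq_volterra (A B l : ℝ) {x : ℝ} (hx : x ∈ Icc (0 : ℝ) 1) :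
    sol μ A B l x = A + B * x - l * ∫ t in 0..x, ∫ s in 0..t, sol μ A B l s ∂μ := by
  have hV : (1 + l • volterra μ) (solCM μ A B l) = affine A B := by
    rw [solCM, ← mul_apply_eq_comp,
      Ring.mul_inverse_cancel _ (isUnit_one_add_smul_volterra μ l), one_apply_eq_self]
  have hx' : solCM μ A B l ⟨x, hx⟩ + l * volterra μ (solCM μ A B l) ⟨x, hx⟩ = A + B * x :=
    DFunLike.congr_fun hV ⟨x, hx⟩
  rw [volterra_apply] at hx'
  rw [sol, extend, IccExtend_of_mem _ _ hx, ← hx']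
  ring

@[simp]
lemma sol_zero (A B l : ℝ) : sol μ A B l 0 = A := by
  rw [sol_eq_volterra μ A B l ⟨le_rfl, zero_le_one⟩]
  simp

@[simp]
lemma solDeriv_zero (A B l : ℝ) : solDeriv μ A B l 0 = B := by simp [solDeriv]

lemma isSolution_sol (A B l : ℝ) : IsSolution μ l (sol μ A B l) (solDeriv μ A B l) where
  continuous_fst := continuous_sol μ A B l
  continuous_snd := continuous_const.sub
    ((continuous_integral_of_continuous (continuous_sol μ A B l)).const_mul l)
  fst_eq x hx := by
    have hint := continuous_integral_of_continuous (μ := μ) (continuous_sol μ A B l)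
    simp only [solDeriv]
    rw [intervalIntegral.integral_sub (by simp) ((hint.intervalIntegrable _ _).const_mul l),
      intervalIntegral.integral_const_mul, sol_eq_volterra μ A B l hx]
    simp only [sol_zero, intervalIntegral.integral_const, sub_zero, smul_eq_mul]
    ring
  snd_eq x _ := by simp [solDeriv]

variable {μ}

lemma IsSolution.fst_eq_sol {l : ℝ} {y g : ℝ → ℝ} (h : IsSolution μ l y g) {x : ℝ}
    (hx : x ∈ Icc (0 : ℝ) 1) : y x = sol μ (y 0) (g 0) l x := by
  let f : C(unitInterval, ℝ) := ⟨fun x => y x, h.continuous_fst.comp continuous_subtype_val⟩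
  have hext : EqOn (extend f) y (Icc 0 1) := fun t ht => IccExtend_of_mem _ _ ht
  have hf : solCM μ (y 0) (g 0) l = f := by
    refine solCM_unique (ContinuousMap.ext fun t => ?_)
    have hinner : ∫ r in 0..(t : ℝ), ∫ s in 0..r, extend f s ∂μ =
        ∫ r in 0..(t : ℝ), ∫ s in 0..r, y s ∂μ := by
      refine intervalIntegral.integral_congr fun r hr => intervalIntegral.integral_congr ?_
      rw [uIcc_of_le t.2.1] at hr
      rw [uIcc_of_le hr.1]
      exact hext.mono (Icc_subset_Icc_right (hr.2.trans t.2.2))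
    change y t + l * volterra μ f t = y 0 + g 0 * t
    rw [volterra_apply, hinner, h.fst_eq_volterra t.2]
    ring
  rw [sol, hf, hext hx]

lemma IsSolution.snd_eq_solDeriv {l : ℝ} {y g : ℝ → ℝ} (h : IsSolution μ l y g) {x : ℝ}
    (hx : x ∈ Icc (0 : ℝ) 1) : g x = solDeriv μ (y 0) (g 0) l x := by
  rw [h.snd_eq x hx, solDeriv]
  congr 2
  refine intervalIntegral.integral_congr fun t ht => ?_
  rw [uIcc_of_le hx.1] at ht
  exact h.fst_eq_sol ⟨ht.1, ht.2.trans hx.2⟩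

lemma sol_eq_linear_comb (A B l : ℝ) {x : ℝ} (hx : x ∈ Icc (0 : ℝ) 1) :
    sol μ A B l x = A * sol μ 1 0 l x + B * sol μ 0 1 l x := by
  simpa using
    (((isSolution_sol μ 1 0 l).linear_comb (isSolution_sol μ 0 1 l) A B).fst_eq_sol hx).symm

lemma solDeriv_eq_linear_comb (A B l : ℝ) {x : ℝ} (hx : x ∈ Icc (0 : ℝ) 1) :
    solDeriv μ A B l x = A * solDeriv μ 1 0 l x + B * solDeriv μ 0 1 l x := by
  simpa using
    (((isSolution_sol μ 1 0 l).linear_comb (isSolution_sol μ 0 1 l) A B).snd_eq_solDeriv hx).symm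

variable (μ)

lemma continuous_integral_sol_mul_sol :
    Continuous fun p : (ℝ × ℝ × ℝ) × (ℝ × ℝ × ℝ) =>
      ∫ x in 0..1, sol μ p.1.1 p.1.2.1 p.1.2.2 x * sol μ p.2.1 p.2.2.1 p.2.2.2 x ∂μ :=
  (continuous_integral_extend μ).comp <|
    ((continuous_solCM μ).comp continuous_fst).mul ((continuous_solCM μ).comp continuous_snd)

lemma continuous_solCM_of_init (A B : ℝ) : Continuous (solCM μ A B) :=
  (continuous_solCM μ).comp (by fun_prop : Continuous fun l : ℝ => (A, B, l))

lemma continuous_sol_apply_one (A B : ℝ) : Continuous fun l => sol μ A B l 1 := by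
  have h := (continuous_eval_const (1 : unitInterval)).comp (continuous_solCM_of_init μ A B)
  exact h.congr fun l => (IccExtend_of_mem _ _ (by simp)).symm

lemma continuous_integral_sol (A B : ℝ) : Continuous fun l => ∫ t in 0..1, sol μ A B l t ∂μ :=
  (continuous_integral_extend μ).comp (continuous_solCM_of_init μ A B)

lemma continuous_solDeriv_apply_one (A B : ℝ) : Continuous fun l => solDeriv μ A B l 1 :=
  continuous_const.sub (continuous_id.mul (continuous_integral_sol μ A B))

lemma continuous_integral_integral_sol (A B : ℝ) :
    Continuous fun l => ∫ t in 0..1, ∫ s in 0..t, sol μ A B l s ∂μ :=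
  (continuous_eval_const (1 : unitInterval)).comp
    ((volterra μ).continuous.comp (continuous_solCM_of_init μ A B))

end Fundamental

section Lagrange

lemma integral_mul_integral_eq_integral_integral_mul {μ ν : Measure ℝ} [IsLocallyFiniteMeasure μ]
    [IsLocallyFiniteMeasure ν] [NullSingletonClass ν] {f q : ℝ → ℝ} (hf : Continuous f)
    (hq : Continuous q) {u v : ℝ} (huv : u ≤ v) :
    ∫ t in u..v, f t * (∫ s in u..t, q s ∂μ) ∂ν = ∫ s in u..v, (∫ t in s..v, f t ∂ν) * q s ∂μ := by
  have hS : MeasurableSet {p : ℝ × ℝ | p.2 ≤ p.1} := measurableSet_le measurable_snd measurable_fst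
  have hint := (hf.integrableOn_Ioc (μ := ν) (a := u) (b := v)).mul_prod
    (hq.integrableOn_Ioc (μ := μ) (a := u) (b := v)) |>.indicator hS
  simp only [intervalIntegral.integral_of_le huv]
  calc
    _ = ∫ t in Ioc u v, ∫ s in Ioc u v,
          {p : ℝ × ℝ | p.2 ≤ p.1}.indicator (fun p => f p.1 * q p.2) (t, s) ∂μ ∂ν := by
      refine setIntegral_congr_fun measurableSet_Ioc fun t ht => ?_
      have hslice : ∀ s, {p : ℝ × ℝ | p.2 ≤ p.1}.indicator (fun p => f p.1 * q p.2) (t, s) =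
          (Iic t).indicator (fun s => f t * q s) s := fun s => by simp [indicator]
      simp only [hslice]
      rw [setIntegral_indicator measurableSet_Iic, Ioc_inter_Iic, min_eq_right ht.2,
        integral_const_mul, intervalIntegral.integral_of_le ht.1.le]
    _ = ∫ s in Ioc u v, ∫ t in Ioc u v,
          {p : ℝ × ℝ | p.2 ≤ p.1}.indicator (fun p => f p.1 * q p.2) (t, s) ∂ν ∂μ :=
      integral_integral_swap hint
    _ = _ := by
      refine setIntegral_congr_fun measurableSet_Ioc fun s hs => ?_
      have hslice : ∀ t, {p : ℝ × ℝ | p.2 ≤ p.1}.indicator (fun p => f p.1 * q p.2) (t, s) =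
          (Ici s).indicator (fun t => f t * q s) t := fun t => by simp [indicator]
      have hIcc : Ioc u v ∩ Ici s = Icc s v := by
        ext t
        exact ⟨fun h => ⟨h.2, h.1.2⟩, fun h => ⟨⟨hs.1.trans_le h.1, h.2⟩, h.1⟩⟩
      simp only [hslice]
      rw [setIntegral_indicator measurableSet_Ici, hIcc, integral_mul_const,
        intervalIntegral.integral_of_le hs.2, integral_Icc_eq_integral_Ioc]

namespace IsSolution

variable {μ : Measure ℝ} {l l₁ l₂ : ℝ} {y g y₁ g₁ y₂ g₂ : ℝ → ℝ}

lemma integral_snd (h : IsSolution μ l y g) {x x' : ℝ} (hx : x ∈ Icc (0 : ℝ) 1)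
    (hx' : x' ∈ Icc (0 : ℝ) 1) : ∫ t in x..x', g t = y x' - y x := by
  have hadd := intervalIntegral.integral_add_adjacent_intervals
    (h.continuous_snd.intervalIntegrable (μ := volume) 0 x)
    (h.continuous_snd.intervalIntegrable x x')
  rw [h.fst_eq x hx, h.fst_eq x' hx', ← hadd]
  ring

lemma mul_integral_fst [IsLocallyFiniteMeasure μ] (h : IsSolution μ l y g) {x x' : ℝ}
    (hx : x ∈ Icc (0 : ℝ) 1) (hx' : x' ∈ Icc (0 : ℝ) 1) :
    l * ∫ t in x..x', y t ∂μ = g x - g x' := by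
  have hadd := intervalIntegral.integral_add_adjacent_intervals
    (h.continuous_fst.intervalIntegrable (μ := μ) 0 x) (h.continuous_fst.intervalIntegrable x x')
  rw [h.snd_eq x hx, h.snd_eq x' hx', ← hadd]
  ring

variable [IsProbabilityMeasure μ] [NullSingletonClass μ]

lemma integral_snd_mul_snd (h₁ : IsSolution μ l₁ y₁ g₁) (h₂ : IsSolution μ l₂ y₂ g₂) :
    ∫ t in 0..1, g₁ t * g₂ t =
      y₁ 1 * g₂ 1 - y₁ 0 * g₂ 0 + l₂ * ∫ t in 0..1, y₁ t * y₂ t ∂μ := by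
  have mem0 : (0 : ℝ) ∈ Icc (0 : ℝ) 1 := by simp
  have mem1 : (1 : ℝ) ∈ Icc (0 : ℝ) 1 := by simp
  have hY₂ := continuous_integral_of_continuous (μ := μ) h₂.continuous_fst
  calc
    _ = ∫ t in 0..1, (g₁ t * g₂ 0 - l₂ * (g₁ t * ∫ s in 0..t, y₂ s ∂μ)) := by
      refine intervalIntegral.integral_congr fun t ht => ?_
      rw [uIcc_of_le zero_le_one] at ht
      simp only [h₂.snd_eq t ht]
      ring
    _ = (y₁ 1 - y₁ 0) * g₂ 0 - l₂ * ∫ s in 0..1, (∫ t in s..1, g₁ t) * y₂ s ∂μ := by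
      rw [intervalIntegral.integral_sub
        ((h₁.continuous_snd.fun_mul continuous_const).intervalIntegrable _ _)
        (((h₁.continuous_snd.fun_mul hY₂).const_mul l₂).intervalIntegrable _ _),
        intervalIntegral.integral_mul_const, intervalIntegral.integral_const_mul,
        integral_mul_integral_eq_integral_integral_mul h₁.continuous_snd h₂.continuous_fst
          zero_le_one, h₁.integral_snd mem0 mem1]
    _ = (y₁ 1 - y₁ 0) * g₂ 0 - l₂ * ∫ s in 0..1, (y₁ 1 * y₂ s - y₁ s * y₂ s) ∂μ := by
      congr 2
      refine intervalIntegral.integral_congr fun s hs => ?_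
      rw [uIcc_of_le zero_le_one] at hs
      simp only [h₁.integral_snd hs mem1]
      ring
    _ = _ := by
      rw [intervalIntegral.integral_sub ((h₂.continuous_fst.const_mul _).intervalIntegrable _ _)
        ((h₁.continuous_fst.fun_mul h₂.continuous_fst).intervalIntegrable _ _),
        intervalIntegral.integral_const_mul]
      linear_combination (-y₁ 1) * h₂.mul_integral_fst mem0 mem1

lemma lagrange_identity (h₁ : IsSolution μ l₁ y₁ g₁) (h₂ : IsSolution μ l₂ y₂ g₂) :
    (y₁ 1 * g₂ 1 - g₁ 1 * y₂ 1) - (y₁ 0 * g₂ 0 - g₁ 0 * y₂ 0) =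
      (l₁ - l₂) * ∫ t in 0..1, y₁ t * y₂ t ∂μ := by
  have h₁₂ := h₁.integral_snd_mul_snd h₂
  have h₂₁ := h₂.integral_snd_mul_snd h₁
  simp only [mul_comm (g₂ _) (g₁ _), mul_comm (y₂ _) (y₁ _)] at h₂₁
  linear_combination h₂₁ - h₁₂

lemma fst_eq_affine_of_ae_eq_zero (h : IsSolution μ l y g)
    (h0 : ∀ᵐ t ∂μ.restrict (Ioc 0 1), y t = 0) {x : ℝ} (hx : x ∈ Icc (0 : ℝ) 1) :
    y x = y 0 + g 0 * x := by
  have hint : ∀ t ∈ Icc (0 : ℝ) x, ∫ s in 0..t, y s ∂μ = 0 := fun t ht => by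
    rw [intervalIntegral.integral_of_le ht.1]
    exact integral_eq_zero_of_ae
      (ae_restrict_of_ae_restrict_of_subset (Ioc_subset_Ioc_right (ht.2.trans hx.2)) h0)
  rw [h.fst_eq_volterra hx, intervalIntegral.integral_congr (g := fun _ => (0 : ℝ))
    fun t ht => hint t (by rwa [uIcc_of_le hx.1] at ht)]
  simp

lemma integral_fst_sq_pos (hμ : μ (Ioc 0 1) = 1) (h : IsSolution μ l y g)
    (hne : y 0 ≠ 0 ∨ g 0 ≠ 0) : 0 < ∫ t in 0..1, y t * y t ∂μ := by
  have hint := (h.continuous_fst.mul h.continuous_fst).integrableOn_Ioc (μ := μ) (a := 0) (b := 1)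
  have hnonneg : 0 ≤ fun t => y t * y t := fun t => mul_self_nonneg (y t)
  rw [intervalIntegral.integral_of_le zero_le_one]
  refine (integral_nonneg hnonneg).lt_of_ne fun hzero => ?_
  have h0 : ∀ᵐ t ∂μ.restrict (Ioc 0 1), y t = 0 :=
    ((integral_eq_zero_iff_of_nonneg hnonneg hint).1 hzero.symm).mono fun t ht =>
      mul_self_eq_zero.1 ht
  have hroot : ∀ᵐ t ∂μ.restrict (Ioc 0 1), t = -(y 0) / g 0 := by
    filter_upwards [h0, ae_restrict_mem measurableSet_Ioc] with t hyt ht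
    have haff := h.fst_eq_affine_of_ae_eq_zero h0 (Ioc_subset_Icc_self ht)
    rw [hyt] at haff
    have hg : g 0 ≠ 0 := fun hg => hne.elim (fun hy => hy (by rw [hg] at haff; linarith)) (· hg)
    rw [eq_div_iff hg]
    linarith
  have hnull : μ.restrict (Ioc 0 1) univ = 0 := by
    have hsing : μ.restrict (Ioc 0 1) {-(y 0) / g 0} = 0 := by simp
    rw [← measure_add_measure_compl (measurableSet_singleton (-(y 0) / g 0)), hsing, zero_add]
    exact hroot
  simp [hμ] at hnull

end IsSolution

lemma det_fundamental_eq_one {μ : Measure ℝ} [IsProbabilityMeasure μ] [NullSingletonClass μ]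
    (l : ℝ) :
    sol μ 1 0 l 1 * solDeriv μ 0 1 l 1 - solDeriv μ 1 0 l 1 * sol μ 0 1 l 1 = 1 := by
  have h := (isSolution_sol μ 1 0 l).lagrange_identity (isSolution_sol μ 0 1 l)
  simp only [sol_zero, solDeriv_zero, sub_self, zero_mul, mul_one, sub_zero] at h
  linear_combination h

end Lagrange

section SelfSimilar

/-- `μ` is the Cantor measure on `[0, 1]` with `κ` blocks of length `a` separated by gaps of length
`b`: the left end points of the blocks are `k (a + b)`, `k < κ`, each block carries a copy of `μ`
scaled by `1 / κ`, and the gaps are null sets. -/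
structure IsCantorMeasure (κ : ℕ) (a b : ℝ) (μ : Measure ℝ) : Prop where
  two_le : 2 ≤ κ
  a_pos : 0 < a
  b_pos : 0 < b
  length_eq : (κ - 1) * (a + b) + a = 1
  measure_Ioc : μ (Ioc 0 1) = 1
  restrict_block : ∀ k < κ, μ.restrict (Ioc (k * (a + b)) (k * (a + b) + a)) =
    (κ : ENNReal)⁻¹ • (μ.restrict (Ioc 0 1)).map fun x => k * (a + b) + a * x
  measure_gap : ∀ k : ℕ, k + 1 < κ → μ (Ioc (k * (a + b) + a) ((k + 1) * (a + b))) = 0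

namespace IsCantorMeasure

variable {κ : ℕ} {a b : ℝ} {μ : Measure ℝ}

lemma a_mul_lt_one (hμ : IsCantorMeasure κ a b μ) : a * κ < 1 := by
  have hκ : (2 : ℝ) ≤ κ := by exact_mod_cast hμ.two_le
  nlinarith [hμ.length_eq, hμ.b_pos]

lemma a_lt_one (hμ : IsCantorMeasure κ a b μ) : a < 1 := by
  have hκ : (2 : ℝ) ≤ κ := by exact_mod_cast hμ.two_le
  nlinarith [hμ.a_mul_lt_one, hμ.a_pos]

lemma one_lt_ratio (hμ : IsCantorMeasure κ a b μ) : 1 < κ / a := by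
  rw [one_lt_div hμ.a_pos]
  exact hμ.a_lt_one.trans (by exact_mod_cast hμ.two_le)

lemma block_subset (hμ : IsCantorMeasure κ a b μ) {k : ℕ} (hk : k < κ) {t : ℝ}
    (ht : t ∈ Icc (0 : ℝ) 1) : k * (a + b) + a * t ∈ Icc (0 : ℝ) 1 := by
  have ha := hμ.a_pos
  have hb := hμ.b_pos
  have hk' : (k : ℝ) ≤ κ - 1 := by
    rw [le_sub_iff_add_le]
    exact_mod_cast hk
  have hat : a * t ≤ a := mul_le_of_le_one_right ha.le ht.2
  have hblock : k * (a + b) ≤ (κ - 1) * (a + b) := by gcongr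
  exact ⟨add_nonneg (by positivity) (mul_nonneg ha.le ht.1), by linarith [hμ.length_eq]⟩

lemma integral_block (hμ : IsCantorMeasure κ a b μ) {k : ℕ} (hk : k < κ) {t : ℝ}
    (ht : t ∈ Icc (0 : ℝ) 1) {f : ℝ → ℝ} (hf : Continuous f) :
    ∫ s in (k * (a + b))..(k * (a + b) + a * t), f s ∂μ =
      (κ : ℝ)⁻¹ * ∫ s in 0..t, f (k * (a + b) + a * s) ∂μ := by
  have ha := hμ.a_pos
  set α : ℝ := k * (a + b)
  have hφ : Measurable fun s : ℝ => α + a * s := by fun_prop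
  have hat : a * t ≤ a := mul_le_of_le_one_right ha.le ht.2
  have hpre : (fun s => α + a * s) ⁻¹' Ioc α (α + a * t) = Ioc 0 t := by
    ext x
    simp [ha]
  rw [intervalIntegral.integral_of_le (by linarith [mul_nonneg ha.le ht.1]),
    intervalIntegral.integral_of_le ht.1,
    ← Measure.restrict_restrict_of_subset (Ioc_subset_Ioc_right (by linarith : α + a * t ≤ α + a)),
    hμ.restrict_block k hk, Measure.restrict_smul, integral_smul_measure,
    setIntegral_map measurableSet_Ioc hf.aestronglyMeasurable hφ.aemeasurable, hpre,
    Measure.restrict_restrict_of_subset (Ioc_subset_Ioc_right ht.2)]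
  simp

end IsCantorMeasure

namespace IsSolution

variable {κ : ℕ} {a b l : ℝ} {μ : Measure ℝ} {y g : ℝ → ℝ}

lemma block [IsLocallyFiniteMeasure μ] (hμ : IsCantorMeasure κ a b μ)
    (h : IsSolution μ (κ / a * l) y g) {k : ℕ} (hk : k < κ) :
    IsSolution μ l (fun t => y (k * (a + b) + a * t)) (fun t => a * g (k * (a + b) + a * t)) := by
  have ha := hμ.a_pos
  have hκ : (κ : ℝ) ≠ 0 := by exact_mod_cast (pos_of_gt hk).ne'
  have mem := fun t ht => hμ.block_subset hk (t := t) ht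
  have mem0 := mem 0 (by simp)
  have hy := h.continuous_fst
  have hg := h.continuous_snd
  refine ⟨by fun_prop, by fun_prop, fun t ht => ?_, fun t ht => ?_⟩
  · have hsub := h.integral_snd mem0 (mem t ht)
    rw [intervalIntegral.integral_const_mul, intervalIntegral.integral_comp_add_mul g ha.ne',
      smul_eq_mul, mul_inv_cancel_left₀ ha.ne', hsub]
    ring
  · have hsub := h.mul_integral_fst mem0 (mem t ht)
    rw [mul_zero, add_zero, hμ.integral_block hk ht hy] at hsub
    simp only [mul_zero, add_zero]
    field_simp at hsub ⊢
    linarith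

lemma gap [IsLocallyFiniteMeasure μ] (hμ : IsCantorMeasure κ a b μ) (h : IsSolution μ l y g)
    {k : ℕ} (hk : k + 1 < κ) :
    g ((k + 1) * (a + b)) = g (k * (a + b) + a) ∧
      y ((k + 1) * (a + b)) = y (k * (a + b) + a) + b * g (k * (a + b) + a) := by
  have hend : (k + 1) * (a + b) = k * (a + b) + a + b := by ring
  have hβ : (k * (a + b) + a : ℝ) ∈ Icc (0 : ℝ) 1 := by
    simpa using hμ.block_subset (k.lt_succ_self.trans hk) (t := 1) (by simp)
  have hβ' : (k * (a + b) + a + b : ℝ) ∈ Icc (0 : ℝ) 1 := by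
    simpa [← hend] using hμ.block_subset hk (t := 0) (by simp)
  have hnull := hμ.measure_gap k hk
  rw [hend] at hnull ⊢
  set β : ℝ := k * (a + b) + a
  have hb := hμ.b_pos
  have hconst : ∀ x ∈ Icc β (β + b), g x = g β := fun x hx => by
    have hzero : ∫ t in β..x, y t ∂μ = 0 := by
      rw [intervalIntegral.integral_of_le hx.1,
        Measure.restrict_eq_zero.2 (measure_mono_null (Ioc_subset_Ioc_right hx.2) hnull),
        integral_zero_measure]
    have hsub := h.mul_integral_fst hβ ⟨hβ.1.trans hx.1, hx.2.trans hβ'.2⟩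
    rw [hzero] at hsub
    linarith
  refine ⟨hconst _ ⟨by linarith, le_rfl⟩, ?_⟩
  have hsub := h.integral_snd hβ hβ'
  rw [intervalIntegral.integral_congr (g := fun _ => g β)
    fun t ht => hconst t (by rwa [uIcc_of_le (by linarith)] at ht),
    intervalIntegral.integral_const, add_sub_cancel_left, smul_eq_mul] at hsub
  linarith

end IsSolution

open Polynomial in
lemma matrix_pow_eq_chebyshev_of_det_eq_one {R : Type*} [CommRing R] [Nontrivial R]
    {M : Matrix (Fin 2) (Fin 2) R}
    (hdet : M.det = 1) {x : R} (htr : M.trace = 2 * x) (n : ℕ) :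
    M ^ (n + 1) = (Chebyshev.U R n).eval x • M - (Chebyshev.U R (n - 1)).eval x • 1 := by
  have hsq : M * M = (2 * x) • M - 1 := by
    have h := M.aeval_self_charpoly
    rw [Matrix.charpoly_fin_two, hdet, htr] at h
    simp only [map_add, map_sub, map_mul, map_one, aeval_X, aeval_C, pow_two,
      Algebra.algebraMap_eq_smul_one, smul_mul_assoc, one_mul] at h
    rw [eq_sub_iff_add_eq, ← sub_eq_zero, ← h]
    module
  induction n with
  | zero => simp
  | succ n ih =>
    have hU := Chebyshev.U_add_two R ((n : ℤ) - 1)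
    rw [show (n : ℤ) - 1 + 2 = n + 1 by ring, show (n : ℤ) - 1 + 1 = n by ring] at hU
    rw [pow_succ, ih, sub_mul, smul_mul_assoc, hsq, smul_mul_assoc, one_mul]
    push_cast
    rw [hU, add_sub_cancel_right]
    simp only [eval_sub, eval_mul, eval_X, eval_ofNat]
    module

section Monodromy

variable {κ : ℕ} {a b l : ℝ} {μ : Measure ℝ}

/-- The matrix taking the data of a solution across a gap of length `b`. -/
def gapMatrix (b : ℝ) : Matrix (Fin 2) (Fin 2) ℝ := !![1, b; 0, 1]

lemma IsSolution.data_gap [IsLocallyFiniteMeasure μ] (hμ : IsCantorMeasure κ a b μ)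
    {y g : ℝ → ℝ} (h : IsSolution μ l y g) {k : ℕ} (hk : k + 1 < κ) :
    ![y ((k + 1) * (a + b)), g ((k + 1) * (a + b))] =
      (gapMatrix b).mulVec ![y (k * (a + b) + a), g (k * (a + b) + a)] := by
  obtain ⟨hg, hy⟩ := h.gap hμ hk
  simp only [gapMatrix, Matrix.cons_mulVec, Matrix.empty_mulVec, Matrix.vec2_dotProduct', hg, hy,
    one_mul, zero_mul, zero_add]

variable [IsProbabilityMeasure μ] [NullSingletonClass μ]

variable (μ) in
/-- The matrix taking the initial data `(y(0), y'(0))` of a solution to `(y(1), y'(1))`. -/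
noncomputable def monodromy (l : ℝ) : Matrix (Fin 2) (Fin 2) ℝ :=
  !![sol μ 1 0 l 1, sol μ 0 1 l 1; solDeriv μ 1 0 l 1, solDeriv μ 0 1 l 1]

variable (μ) in
/-- The matrix taking the data of a solution for the parameter `(κ / a) l` across one block. -/
noncomputable def blockMatrix (a l : ℝ) : Matrix (Fin 2) (Fin 2) ℝ :=
  !![sol μ 1 0 l 1, a * sol μ 0 1 l 1; solDeriv μ 1 0 l 1 / a, solDeriv μ 0 1 l 1]

variable (μ) in
/-- Half the trace of the transfer matrix over a block and the following gap. -/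
noncomputable def halfTrace (a b l : ℝ) : ℝ :=
  (sol μ 1 0 l 1 + solDeriv μ 0 1 l 1 + b / a * solDeriv μ 1 0 l 1) / 2

lemma det_gapMatrix_mul_blockMatrix (ha : a ≠ 0) :
    (gapMatrix b * blockMatrix μ a l).det = 1 := by
  rw [Matrix.det_mul, gapMatrix, blockMatrix, Matrix.det_fin_two_of, Matrix.det_fin_two_of]
  field_simp
  linear_combination det_fundamental_eq_one (μ := μ) l

lemma trace_gapMatrix_mul_blockMatrix :
    (gapMatrix b * blockMatrix μ a l).trace = 2 * halfTrace μ a b l := by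
  simp only [gapMatrix, blockMatrix, halfTrace, Matrix.trace_fin_two, Matrix.mul_apply,
    Fin.sum_univ_two, Matrix.of_apply, Matrix.cons_val_zero, Matrix.cons_val_one]
  ring

namespace IsSolution

variable {y g : ℝ → ℝ}

lemma data_one (h : IsSolution μ l y g) :
    ![y 1, g 1] = (monodromy μ l).mulVec ![y 0, g 0] := by
  have mem1 : (1 : ℝ) ∈ Icc (0 : ℝ) 1 := by simp
  rw [h.fst_eq_sol mem1, h.snd_eq_solDeriv mem1, sol_eq_linear_comb _ _ _ mem1,
    solDeriv_eq_linear_comb _ _ _ mem1]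
  simp only [monodromy, Matrix.cons_mulVec, Matrix.empty_mulVec, Matrix.vec2_dotProduct', mul_comm]

lemma data_block (hμ : IsCantorMeasure κ a b μ) (h : IsSolution μ (κ / a * l) y g) {k : ℕ}
    (hk : k < κ) :
    ![y (k * (a + b) + a), g (k * (a + b) + a)] =
      (blockMatrix μ a l).mulVec ![y (k * (a + b)), g (k * (a + b))] := by
  have ha := hμ.a_pos.ne'
  have hone := (h.block hμ hk).data_one
  simp only [monodromy, Matrix.cons_mulVec, Matrix.empty_mulVec, Matrix.vec2_dotProduct',
    mul_one, mul_zero, add_zero, Matrix.vecCons_inj, and_true] at hone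
  simp only [blockMatrix, Matrix.cons_mulVec, Matrix.empty_mulVec, Matrix.vec2_dotProduct',
    Matrix.vecCons_inj, and_true]
  refine ⟨by linear_combination hone.1, ?_⟩
  field_simp
  linear_combination hone.2

lemma data_eq_pow_mulVec (hμ : IsCantorMeasure κ a b μ) (h : IsSolution μ (κ / a * l) y g) {k : ℕ}
    (hk : k < κ) :
    ![y (k * (a + b)), g (k * (a + b))] =
      ((gapMatrix b * blockMatrix μ a l) ^ k).mulVec ![y 0, g 0] := by
  induction k with
  | zero => simp
  | succ k ih =>
    rw [Nat.cast_succ, h.data_gap hμ hk, h.data_block hμ (k.lt_succ_self.trans hk),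
      ih (k.lt_succ_self.trans hk), Matrix.mulVec_mulVec, Matrix.mulVec_mulVec, pow_succ',
      Matrix.mul_assoc]

end IsSolution

lemma gapMatrix_mul_monodromy (hμ : IsCantorMeasure κ a b μ) (l : ℝ) :
    gapMatrix b * monodromy μ (κ / a * l) = (gapMatrix b * blockMatrix μ a l) ^ κ := by
  obtain ⟨n, rfl⟩ : ∃ n, κ = n + 1 := ⟨κ - 1, by have := hμ.two_le; omega⟩
  have hend : n * (a + b) + a = 1 := by simpa using hμ.length_eq
  have hcol : ∀ A B : ℝ, (gapMatrix b * monodromy μ ((n + 1 : ℕ) / a * l)).mulVec ![A, B] =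
      ((gapMatrix b * blockMatrix μ a l) ^ (n + 1)).mulVec ![A, B] := fun A B => by
    have h := isSolution_sol μ A B ((n + 1 : ℕ) / a * l)
    have hn := h.data_block hμ n.lt_succ_self
    have hone := h.data_one
    rw [hend, h.data_eq_pow_mulVec hμ n.lt_succ_self, hone, Matrix.mulVec_mulVec, sol_zero,
      solDeriv_zero] at hn
    rw [← Matrix.mulVec_mulVec, hn, Matrix.mulVec_mulVec, pow_succ', Matrix.mul_assoc]
  refine Matrix.mulVec_injective (funext fun v => ?_)
  have hv : v = ![v 0, v 1] := by
    ext i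
    fin_cases i <;> rfl
  rw [hv]
  exact hcol _ _

open Polynomial in
lemma monodromy_scale (hμ : IsCantorMeasure κ a b μ) (l : ℝ) :
    monodromy μ (κ / a * l) =
      (Chebyshev.U ℝ (κ - 1)).eval (halfTrace μ a b l) • blockMatrix μ a l -
        (Chebyshev.U ℝ (κ - 2)).eval (halfTrace μ a b l) • gapMatrix (-b) := by
  obtain ⟨n, hn⟩ : ∃ n, κ = n + 1 := ⟨κ - 1, by have := hμ.two_le; omega⟩
  have hinv : gapMatrix (-b) * gapMatrix b = 1 := by simp [gapMatrix, Matrix.one_fin_two]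
  have hpow := matrix_pow_eq_chebyshev_of_det_eq_one
    (det_gapMatrix_mul_blockMatrix (μ := μ) (b := b) (l := l) hμ.a_pos.ne')
    trace_gapMatrix_mul_blockMatrix n
  rw [← hn, ← gapMatrix_mul_monodromy hμ] at hpow
  rw [← one_mul (monodromy μ _), ← hinv, Matrix.mul_assoc, hpow, Matrix.mul_sub, Matrix.mul_smul,
    Matrix.mul_smul, ← Matrix.mul_assoc, hinv, one_mul, mul_one,
    show (κ : ℤ) - 1 = n by omega, show (κ : ℤ) - 2 = n - 1 by omega]

end Monodromy

end SelfSimilar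

section Scaling

open Filter Topology

variable {τ : ℝ}

lemma forall_of_scaling {p : ℝ → Prop} (hτ : 1 < τ) (h0 : ∀ᶠ l in 𝓝 0, p l)
    (hstep : ∀ l, p l → p (τ * l)) (l : ℝ) : p l := by
  have hτ0 : τ ≠ 0 := by positivity
  have hlim : Tendsto (fun n : ℕ => l / τ ^ n) atTop (𝓝 0) :=
    (tendsto_pow_atTop_atTop_of_one_lt hτ).const_div_atTop l
  obtain ⟨n, hn⟩ := (hlim.eventually h0).exists
  have hiter : ∀ k : ℕ, p (τ ^ k * (l / τ ^ n)) := fun k => by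
    induction k with
    | zero => simpa using hn
    | succ k ih =>
      rw [pow_succ', mul_assoc]
      exact hstep _ ih
  simpa [mul_div_cancel₀, hτ0] using hiter n

lemma eq_zero_of_scaling {q m : ℝ → ℝ} (hτ : 1 < τ) (hq : ContinuousAt q 0) (hm : ContinuousAt m 0)
    (hm0 : |m 0| < 1) (hscale : ∀ l, q (τ * l) = m l * q l) (l : ℝ) : q l = 0 := by
  refine forall_of_scaling (p := fun l => q l = 0) hτ ?_ (fun l hl => by simp [hscale, hl]) l
  have hτ0 : 0 < τ := by positivity
  obtain ⟨r, hr, hr1⟩ := exists_between hm0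
  obtain ⟨δ, hδ, hball⟩ := Metric.eventually_nhds_iff_ball.1 (hm.abs.eventually_lt_const hr)
  filter_upwards [Metric.ball_mem_nhds 0 hδ] with l hl
  have hmem : ∀ n : ℕ, l / τ ^ n ∈ Metric.ball 0 δ := fun n => by
    rw [mem_ball_zero_iff, norm_div, norm_pow] at *
    exact (div_le_self (norm_nonneg l) (one_le_pow₀ (hτ.le.trans (le_abs_self τ)))).trans_lt hl
  have hbound : ∀ n : ℕ, |q l| ≤ r ^ n * |q (l / τ ^ n)| := fun n => by
    induction n with
    | zero => simp
    | succ n ih =>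
      have hn : l / τ ^ n = τ * (l / τ ^ (n + 1)) := by
        rw [pow_succ', ← mul_div_assoc, mul_div_mul_left _ _ hτ0.ne']
      calc |q l| ≤ r ^ n * |q (l / τ ^ n)| := ih
        _ = r ^ n * (|m (l / τ ^ (n + 1))| * |q (l / τ ^ (n + 1))|) := by
          rw [hn, hscale, abs_mul]
        _ ≤ r ^ n * (r * |q (l / τ ^ (n + 1))|) := by
          have hr0 : 0 ≤ r := (abs_nonneg _).trans hr.le
          gcongr
          exact (hball _ (hmem (n + 1))).le
        _ = r ^ (n + 1) * |q (l / τ ^ (n + 1))| := by ring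
  have hlim : Tendsto (fun n : ℕ => r ^ n * |q (l / τ ^ n)|) atTop (𝓝 (0 * |q 0|)) :=
    (tendsto_pow_atTop_nhds_zero_of_lt_one ((abs_nonneg _).trans hr.le) hr1).mul
      (hq.tendsto.comp ((tendsto_pow_atTop_atTop_of_one_lt hτ).const_div_atTop l)).abs
  rw [zero_mul] at hlim
  exact abs_nonpos_iff.1 (ge_of_tendsto' hlim hbound)

end Scaling

section Pick

open Topology

/-- The two-point Pick inequality `(m y - m x)² ≤ (y - x)² m'(x) m'(y)`, for a function with
continuous positive derivative on `S`. Restrictions of Nevanlinna functions to real intervals have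
this property, and it is all that is needed from them. -/
structure IsPickOn (m : ℝ → ℝ) (S : Set ℝ) : Prop where
  deriv_pos : ∀ x ∈ S, 0 < deriv m x
  continuousOn_deriv : ContinuousOn (deriv m) S
  sq_sub_le : ∀ x ∈ S, ∀ y ∈ S, (m y - m x) ^ 2 ≤ (y - x) ^ 2 * (deriv m x * deriv m y)

lemma exists_excursion {f : ℝ → ℝ} {x y ξ L : ℝ} (hf : ContinuousOn f (Icc x y))
    (hξ : ξ ∈ Icc x y) (hx : f x ≤ L) (hy : f y ≤ L) (hL : L < f ξ) :
    ∃ x' y', x ≤ x' ∧ x' < ξ ∧ ξ < y' ∧ y' ≤ y ∧ f x' ≤ L ∧ f y' ≤ L ∧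
      ∀ t ∈ Ioo x' y', L < f t := by
  have hcompact : ∀ u v, Icc u v ⊆ Icc x y → IsCompact (Icc u v ∩ f ⁻¹' Iic L) := fun u v huv =>
    isCompact_Icc.of_isClosed_subset
      ((hf.mono huv).preimage_isClosed_of_isClosed isClosed_Icc isClosed_Iic) inter_subset_left
  obtain ⟨x', ⟨⟨hxx', hx'ξ⟩, hfx'⟩, hmax⟩ :=
    (hcompact x ξ (Icc_subset_Icc_right hξ.2)).exists_isGreatest ⟨x, ⟨le_rfl, hξ.1⟩, hx⟩
  obtain ⟨y', ⟨⟨hξy', hy'y⟩, hfy'⟩, hmin⟩ :=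
    (hcompact ξ y (Icc_subset_Icc_left hξ.1)).exists_isLeast ⟨y, ⟨hξ.2, le_rfl⟩, hy⟩
  refine ⟨x', y', hxx', hx'ξ.lt_of_ne ?_, hξy'.lt_of_ne ?_, hy'y, hfx', hfy', fun t ht => ?_⟩
  · rintro rfl
    exact hL.not_ge hfx'
  · rintro rfl
    exact hL.not_ge hfy'
  · by_contra! htL
    rcases le_total t ξ with htξ | htξ
    · exact ht.1.not_ge (hmax ⟨⟨hxx'.trans ht.1.le, htξ⟩, htL⟩)
    · exact ht.2.not_ge (hmin ⟨⟨htξ, ht.2.le.trans hy'y⟩, htL⟩)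

namespace IsPickOn

variable {m m₁ m₂ : ℝ → ℝ} {S S' : Set ℝ}

lemma mono (h : IsPickOn m S) (hS : S' ⊆ S) : IsPickOn m S' :=
  ⟨fun x hx => h.deriv_pos x (hS hx), h.continuousOn_deriv.mono hS,
    fun x hx y hy => h.sq_sub_le x (hS hx) y (hS hy)⟩

lemma differentiableAt (h : IsPickOn m S) {x : ℝ} (hx : x ∈ S) : DifferentiableAt ℝ m x :=
  differentiableAt_of_deriv_ne_zero (h.deriv_pos x hx).ne'

lemma continuousOn (h : IsPickOn m S) : ContinuousOn m S :=
  fun _ hx => (h.differentiableAt hx).continuousAt.continuousWithinAt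

lemma strictMonoOn (h : IsPickOn m S) (hS : Convex ℝ S) : StrictMonoOn m S :=
  strictMonoOn_of_deriv_pos hS h.continuousOn fun x hx => h.deriv_pos x (interior_subset hx)

lemma of_kernel {K : ℝ → ℝ → ℝ} (hS : IsOpen S)
    (hsub : ∀ x ∈ S, ∀ y ∈ S, m y - m x = (y - x) * K x y) (hpos : ∀ x ∈ S, 0 < K x x)
    (hsq : ∀ x ∈ S, ∀ y ∈ S, K x y ^ 2 ≤ K x x * K y y)
    (hK : ContinuousOn (Function.uncurry K) (S ×ˢ S)) : IsPickOn m S := by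
  have hderiv : ∀ x ∈ S, HasDerivAt m (K x x) x := fun x hx => by
    have hline : ContinuousOn (K x) S :=
      hK.comp (by fun_prop : ContinuousOn (fun y => (x, y)) S) fun y hy => ⟨hx, hy⟩
    rw [hasDerivAt_iff_tendsto_slope]
    refine ((hline.continuousAt (hS.mem_nhds hx)).tendsto.mono_left nhdsWithin_le_nhds).congr' ?_
    filter_upwards [nhdsWithin_le_nhds (hS.mem_nhds hx), self_mem_nhdsWithin] with y hy hyx
    rw [slope_def_field, hsub x hx y hy, mul_div_cancel_left₀ _ (sub_ne_zero.2 hyx)]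
  refine ⟨fun x hx => (hderiv x hx).deriv ▸ hpos x hx, ?_, fun x hx y hy => ?_⟩
  · exact (hK.comp (by fun_prop : ContinuousOn (fun x => (x, x)) S) fun x hx => ⟨hx, hx⟩).congr
      fun x hx => (hderiv x hx).deriv
  · rw [(hderiv x hx).deriv, (hderiv y hy).deriv, hsub x hx y hy, mul_pow]
    exact mul_le_mul_of_nonneg_left (hsq x hx y hy) (sq_nonneg _)

lemma sub_mul_sub_le (h₁ : IsPickOn m₁ S) (h₂ : IsPickOn m₂ S) {x y : ℝ} (hx : x ∈ S)
    (hy : y ∈ S) : (m₁ y - m₁ x) * (m₂ y - m₂ x) ≤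
      (y - x) ^ 2 * (deriv m₁ x * deriv m₂ y + deriv m₂ x * deriv m₁ y) / 2 := by
  have h₁x := h₁.deriv_pos x hx
  have h₁y := h₁.deriv_pos y hy
  have h₂x := h₂.deriv_pos x hx
  have h₂y := h₂.deriv_pos y hy
  refine le_of_sq_le_sq ?_ (by positivity)
  calc ((m₁ y - m₁ x) * (m₂ y - m₂ x)) ^ 2
      = (m₁ y - m₁ x) ^ 2 * (m₂ y - m₂ x) ^ 2 := mul_pow _ _ 2
    _ ≤ ((y - x) ^ 2 * (deriv m₁ x * deriv m₁ y)) * ((y - x) ^ 2 * (deriv m₂ x * deriv m₂ y)) :=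
      mul_le_mul (h₁.sq_sub_le x hx y hy) (h₂.sq_sub_le x hx y hy) (sq_nonneg _) (by positivity)
    _ ≤ _ := by
      nlinarith [mul_nonneg (sq_nonneg ((y - x) ^ 2))
        (sq_nonneg (deriv m₁ x * deriv m₂ y - deriv m₂ x * deriv m₁ y))]

lemma linear_comb (hS : IsOpen S) (h₁ : IsPickOn m₁ S) (h₂ : IsPickOn m₂ S) {p q r : ℝ}
    (hp : 0 ≤ p) (hq : 0 ≤ q) (hpq : 0 < p + q) (hm : ∀ x ∈ S, m x = p * m₁ x + q * m₂ x + r) :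
    IsPickOn m S := by
  have hderiv : ∀ x ∈ S, deriv m x = p * deriv m₁ x + q * deriv m₂ x := fun x hx => by
    have hcomb := (((h₁.differentiableAt hx).hasDerivAt.const_mul p).add
      ((h₂.differentiableAt hx).hasDerivAt.const_mul q)).add_const r
    exact (hcomb.congr_of_eventuallyEq (Filter.eventually_of_mem (hS.mem_nhds hx) hm)).deriv
  refine ⟨fun x hx => ?_, ?_, fun x hx y hy => ?_⟩
  · rw [hderiv x hx]
    have h₁x := h₁.deriv_pos x hx
    have h₂x := h₂.deriv_pos x hx
    rcases hp.eq_or_lt with rfl | hp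
    · rw [zero_add] at hpq
      positivity
    · positivity
  · exact ((h₁.continuousOn_deriv.const_mul p).add (h₂.continuousOn_deriv.const_mul q)).congr hderiv
  · have hcross := h₁.sub_mul_sub_le h₂ hx hy
    calc (m y - m x) ^ 2
        = p ^ 2 * (m₁ y - m₁ x) ^ 2 + q ^ 2 * (m₂ y - m₂ x) ^ 2 +
            2 * (p * q) * ((m₁ y - m₁ x) * (m₂ y - m₂ x)) := by
          rw [hm x hx, hm y hy]
          ring
      _ ≤ p ^ 2 * ((y - x) ^ 2 * (deriv m₁ x * deriv m₁ y)) +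
            q ^ 2 * ((y - x) ^ 2 * (deriv m₂ x * deriv m₂ y)) + 2 * (p * q) *
            ((y - x) ^ 2 * (deriv m₁ x * deriv m₂ y + deriv m₂ x * deriv m₁ y) / 2) := by
          gcongr
          exacts [h₁.sq_sub_le x hx y hy, h₂.sq_sub_le x hx y hy]
      _ = (y - x) ^ 2 * (deriv m x * deriv m y) := by
          rw [hderiv x hx, hderiv y hy]
          ring

lemma deriv_le_max (h : IsPickOn m S) {x y ξ : ℝ} (hS : Icc x y ⊆ S) (hξ : ξ ∈ Icc x y) :
    deriv m ξ ≤ max (deriv m x) (deriv m y) := by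
  by_contra! hlt
  obtain ⟨x', y', hxx', hx'ξ, hξy', hy'y, hx', hy', hgt⟩ := exists_excursion
    (h.continuousOn_deriv.mono hS) hξ (le_max_left _ _) (le_max_right _ _) hlt
  set L := max (deriv m x) (deriv m y)
  have hS' : Icc x' y' ⊆ S := (Icc_subset_Icc hxx' hy'y).trans hS
  have hlt' : x' < y' := hx'ξ.trans hξy'
  have hx'S := hS' (left_mem_Icc.2 hlt'.le)
  have hy'S := hS' (right_mem_Icc.2 hlt'.le)
  obtain ⟨η, hη, hslope⟩ := exists_deriv_eq_slope m hlt' (h.continuousOn.mono hS')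
    fun t ht => (h.differentiableAt (hS' (Ioo_subset_Icc_self ht))).differentiableWithinAt
  have hL : 0 < L := (h.deriv_pos x' hx'S).trans_le hx'
  have hsq : (deriv m η) ^ 2 ≤ L ^ 2 := by
    rw [hslope, div_pow, div_le_iff₀ (by positivity), mul_comm, sq L]
    refine (h.sq_sub_le x' hx'S y' hy'S).trans ?_
    gcongr
    exact (h.deriv_pos y' hy'S).le
  exact (le_of_sq_le_sq hsq hL.le).not_gt (hgt η hη)

end IsPickOn

end Pick

lemma injOn_of_isPickOn {f d : ℝ → ℝ} {I : Set ℝ} (hI : Convex ℝ I) (hd : ∀ l ∈ I, d l ≠ 0)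
    (hf : ∀ k ∈ Icc (-1 : ℝ) 1, IsPickOn (fun l => (f l - k) / d l) {l | d l ≠ 0}) :
    InjOn f (I ∩ f ⁻¹' Icc (-1) 1) := by
  rintro x ⟨hxI, hx⟩ y ⟨hyI, -⟩ hxy
  refine (((hf (f x) hx).mono hd).strictMonoOn hI).injOn hxI hyI ?_
  simp [hxy]

lemma le_mul_card_add_one_of_forall_notMem {N : ℝ → ℝ → ℕ} {K : ℕ} {p : ℝ → Prop}
    (hadd : ∀ {α β γ}, α ≤ β → β ≤ γ → N α γ = N α β + N β γ)
    (hK : ∀ {α β}, (∀ l ∈ Ioo α β, p l) → N α β ≤ K) (W : Finset ℝ) :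
    ∀ {α β}, (∀ l ∈ Ioo α β, l ∉ W → p l) → N α β ≤ K * (W.card + 1) := by
  induction W using Finset.induction_on_max with
  | empty => exact fun h => by simpa using hK fun l hl => h l hl (by simp)
  | insert m W hm ih =>
    intro α β h
    have hmW : m ∉ W := fun hmem => (hm m hmem).false
    rw [Finset.card_insert_of_notMem hmW]
    by_cases hmem : m ∈ Ioo α β
    · have hleft : N α m ≤ K * (W.card + 1) := ih fun l hl hlW =>
        h l ⟨hl.1, hl.2.trans hmem.2⟩ (by simp [hl.2.ne, hlW])
      have hright : N m β ≤ K := hK fun l hl =>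
        h l ⟨hmem.1.trans hl.1, hl.2⟩ (by simpa [hl.1.ne'] using fun hlW => (hm l hlW).not_gt hl.1)
      rw [hadd hmem.1.le hmem.2.le]
      linarith
    · have hle : N α β ≤ K * (W.card + 1) := ih fun l hl hlW =>
        h l hl (by simpa [hlW] using fun hlm : l = m => hmem (hlm ▸ hl))
      exact hle.trans (by gcongr; simp)

lemma exists_strictAntiOn_rightInverse {f : ℝ → ℝ} (hf : Continuous f) {α β : ℝ} (hαβ : α ≤ β)
    (hlt : f β < f α) :
    ∃ x : ℝ → ℝ, StrictAntiOn x (Icc (f β) (f α)) ∧ x (f α) = α ∧ x (f β) = β ∧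
      ∀ t ∈ Icc (f β) (f α), f (x t) = t := by
  -- `x t` is the first point where `f` is at most `t`, except that the lowest level goes to `β`.
  have hfirst : ∀ t ∈ Icc (f β) (f α), ∃ x, IsLeast (Icc α β ∩ f ⁻¹' Iic t) x := fun t ht =>
    (isCompact_Icc.inter_right (isClosed_Iic.preimage hf)).exists_isLeast
      ⟨β, right_mem_Icc.2 hαβ, ht.1⟩
  choose! y hy using hfirst
  have hval : ∀ t ∈ Icc (f β) (f α), f (y t) = t := fun t ht => by
    have hmem := (hy t ht).1.1
    obtain ⟨u, hu, hut⟩ := intermediate_value_Icc' hmem.1 hf.continuousOn ⟨(hy t ht).1.2, ht.2⟩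
    have hyu : y t ≤ u := (hy t ht).2 ⟨⟨hu.1, hu.2.trans hmem.2⟩, hut.le⟩
    rw [← hu.2.antisymm hyu, hut]
  have hanti : StrictAntiOn y (Icc (f β) (f α)) := fun t ht u hu htu => by
    refine ((hy u hu).2 ⟨(hy t ht).1.1, (hval t ht).trans_le htu.le⟩).lt_of_ne fun heq => ?_
    exact htu.ne ((hval t ht).symm.trans ((congrArg f heq).symm.trans (hval u hu)))
  have hα := right_mem_Icc.2 hlt.le
  have hyα : y (f α) = α := ((hy _ hα).2 ⟨left_mem_Icc.2 hαβ, le_refl (f α)⟩).antisymm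
    (hy _ hα).1.1.1
  refine ⟨Function.update y (f β) β, fun t ht u hu htu => ?_, ?_, by simp, fun t ht => ?_⟩
  · have huβ : u ≠ f β := (ht.1.trans_lt htu).ne'
    rcases eq_or_ne t (f β) with rfl | htβ
    · rw [Function.update_self, Function.update_of_ne huβ]
      exact (hy u hu).1.1.2.lt_of_ne fun h => huβ ((hval u hu).symm.trans (congrArg f h))
    · rw [Function.update_of_ne htβ, Function.update_of_ne huβ]
      exact hanti ht hu htu
  · rw [Function.update_of_ne hlt.ne', hyα]
  · rcases eq_or_ne t (f β) with rfl | htβ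
    · rw [Function.update_self]
    · rw [Function.update_of_ne htβ, hval t ht]

lemma exists_deriv_mul_sub_eq {m : ℝ → ℝ} {u v : ℝ} (huv : u < v)
    (hm : ∀ l ∈ Icc u v, DifferentiableAt ℝ m l) :
    ∃ ξ ∈ Ioo u v, deriv m ξ * (v - u) = m v - m u := by
  obtain ⟨ξ, hξ, hslope⟩ := exists_deriv_eq_slope m huv
    (fun l hl => (hm l hl).continuousAt.continuousWithinAt)
    fun l hl => (hm l (Ioo_subset_Icc_self hl)).differentiableWithinAt
  exact ⟨ξ, hξ, by rw [hslope, div_mul_cancel₀ _ (sub_pos.2 huv).ne']⟩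

/- If both inequalities failed, the mean value theorem would give points on either side of `[y, x]`
where `m'` is smaller than somewhere on `[y, x]`. -/
lemma IsPickOn.mul_sub_le_or {m : ℝ → ℝ} {S : Set ℝ} (h : IsPickOn m S) {p y x q B : ℝ}
    (hpy : p < y) (hyx : y < x) (hxq : x < q) (hS : Icc p q ⊆ S) (hleft : m y - m p ≤ B)
    (hright : m q - m x ≤ B) :
    (m x - m y) * (y - p) ≤ B * (x - y) ∨ (m x - m y) * (q - x) ≤ B * (x - y) := by
  have hmvt : ∀ {u v}, p ≤ u → u < v → v ≤ q →
      ∃ ξ ∈ Ioo u v, deriv m ξ * (v - u) = m v - m u := fun hu huv hv =>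
    exists_deriv_mul_sub_eq huv fun l hl =>
      h.differentiableAt (hS ⟨hu.trans hl.1, hl.2.trans hv⟩)
  obtain ⟨ξ, hξ, hmξ⟩ := hmvt hpy.le hyx hxq.le
  obtain ⟨l, hl, hml⟩ := hmvt le_rfl hpy (hyx.trans hxq).le
  obtain ⟨r, hr, hmr⟩ := hmvt (hpy.trans hyx).le hxq le_rfl
  have hmax := h.deriv_le_max (fun t ht => hS ⟨hl.1.le.trans ht.1, ht.2.trans hr.2.le⟩)
    ⟨(hl.2.trans hξ.1).le, (hξ.2.trans hr.1).le⟩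
  have hcompare : ∀ {w t}, 0 < w → deriv m ξ ≤ deriv m t → deriv m t * w ≤ B →
      (m x - m y) * w ≤ B * (x - y) := fun {w t} hw hle hB => by
    rw [← hmξ, mul_right_comm]
    exact mul_le_mul_of_nonneg_right ((mul_le_mul_of_nonneg_right hle hw.le).trans hB)
      (sub_pos.2 hyx).le
  rcases le_max_iff.1 hmax with hle | hle
  · exact Or.inl (hcompare (sub_pos.2 hpy) hle (hml.trans_le hleft))
  · exact Or.inr (hcompare (sub_pos.2 hxq) hle (hmr.trans_le hright))

section Plateau

/-- `F` has in `(z, z')` a plateau `[y, x]` flanked by two intervals `[p, y]` and `[x, q]` over each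
of which it increases by at least `η`; the plateau is at least `γ` times as long as one of them. -/
def HasPlateau (F : ℝ → ℝ) (γ η z z' : ℝ) : Prop :=
  ∃ p y x q, z < p ∧ p < y ∧ y < x ∧ x < q ∧ q < z' ∧ F y = F x ∧ η ≤ F y - F p ∧ η ≤ F q - F x ∧
    (γ * (y - p) ≤ x - y ∨ γ * (q - x) ≤ x - y)

lemma HasPlateau.of_scale {F : ℝ → ℝ} {γ η z z' t K : ℝ} (ht : 0 < t) (hK : 0 < K) (hz : 0 ≤ z)
    (hF : ∀ l, 0 ≤ l → F (t * l) = K * F l) (h : HasPlateau F γ (K * η) (t * z) (t * z')) :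
    HasPlateau F γ η z z' := by
  obtain ⟨p, y, x, q, hzp, hpy, hyx, hxq, hqz', hflat, hleft, hright, hγ⟩ := h
  obtain ⟨p, rfl⟩ : ∃ u, p = t * u := ⟨p / t, (mul_div_cancel₀ _ ht.ne').symm⟩
  obtain ⟨y, rfl⟩ : ∃ u, y = t * u := ⟨y / t, (mul_div_cancel₀ _ ht.ne').symm⟩
  obtain ⟨x, rfl⟩ : ∃ u, x = t * u := ⟨x / t, (mul_div_cancel₀ _ ht.ne').symm⟩
  obtain ⟨q, rfl⟩ : ∃ u, q = t * u := ⟨q / t, (mul_div_cancel₀ _ ht.ne').symm⟩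
  rw [mul_lt_mul_iff_right₀ ht] at hzp hpy hyx hxq hqz'
  rw [hF y (by linarith), hF x (by linarith), mul_right_inj' hK.ne'] at hflat
  rw [hF y (by linarith), hF p (by linarith), ← mul_sub, mul_le_mul_iff_right₀ hK] at hleft
  rw [hF q (by linarith), hF x (by linarith), ← mul_sub, mul_le_mul_iff_right₀ hK] at hright
  refine ⟨p, y, x, q, hzp, hpy, hyx, hxq, hqz', hflat, hleft, hright, ?_⟩
  simpa only [← mul_sub, mul_left_comm γ t, mul_le_mul_iff_right₀ ht] using hγ

/- Where `F` is `ε`-close to an affine function of slope `ρ`, the plateau has length at most `2ε/ρ`,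
while its flanks have length at least `(η - 2ε)/ρ`. -/
lemma HasPlateau.mul_le_of_affine_approx {F : ℝ → ℝ} {γ η z z' x₀ A ρ ε : ℝ} (hγ : 0 < γ)
    (hρ : 0 < ρ) (h : HasPlateau F γ η z z')
    (happrox : ∀ t ∈ Icc z z', |F t - A - ρ * (t - x₀)| ≤ ε) : γ * η ≤ 2 * (1 + γ) * ε := by
  obtain ⟨p, y, x, q, hzp, hpy, hyx, hxq, hqz', hflat, hleft, hright, hcase⟩ := h
  have hp := abs_le.1 (happrox p ⟨by linarith, by linarith⟩)
  have hy := abs_le.1 (happrox y ⟨by linarith, by linarith⟩)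
  have hx := abs_le.1 (happrox x ⟨by linarith, by linarith⟩)
  have hq := abs_le.1 (happrox q ⟨by linarith, by linarith⟩)
  have hplateau : ρ * (x - y) ≤ 2 * ε := by linarith
  have hcompare : ∀ {w}, η - 2 * ε ≤ ρ * w → γ * w ≤ x - y → γ * η ≤ 2 * (1 + γ) * ε :=
    fun {w} hw hwγ => by
      have hηw := mul_le_mul_of_nonneg_left hw hγ.le
      have hwp := mul_le_mul_of_nonneg_left hwγ hρ.le
      linarith [hplateau]
  rcases hcase with hle | hle
  · exact hcompare (by linarith) hle
  · exact hcompare (by linarith) hle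

lemma not_hasDerivAt_of_hasPlateau {F : ℝ → ℝ} {γ K x ρ : ℝ} (hγ : 0 < γ) (hK : 0 < K) (hρ : 0 < ρ)
    (hplateau : ∀ δ > 0, ∃ z z' η, x - δ < z ∧ z ≤ x ∧ x < z' ∧ z' < x + δ ∧ 0 < η ∧
      F z' - F z ≤ K * η ∧ HasPlateau F γ η z z') : ¬HasDerivAt F ρ x := by
  intro hderiv
  set ε := min (ρ / 4) (γ * ρ / (8 * (1 + γ) * K))
  have hε0 : 0 < ε := by positivity
  obtain ⟨δ, hδ, happrox⟩ := Metric.eventually_nhds_iff.1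
    ((hasDerivAt_iff_isLittleO.1 hderiv).def hε0)
  obtain ⟨z, z', η, hz, hzx, hxz', hz', hη, hinc, hplat⟩ := hplateau δ hδ
  have hclose : ∀ t ∈ Icc z z', |F t - F x - ρ * (t - x)| ≤ ε * (z' - z) := fun t ht => by
    have ht' : |t - x| ≤ z' - z := abs_le.2 ⟨by linarith [ht.1], by linarith [ht.2]⟩
    have hle := @happrox t (abs_lt.2 ⟨by linarith [ht.1], by linarith [ht.2]⟩)
    rw [smul_eq_mul, Real.norm_eq_abs, Real.norm_eq_abs, mul_comm (t - x)] at hle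
    exact hle.trans (by gcongr)
  have hlen : ρ * (z' - z) ≤ 2 * K * η := by
    have hl := abs_le.1 (hclose z ⟨le_rfl, by linarith⟩)
    have hr := abs_le.1 (hclose z' ⟨by linarith, le_rfl⟩)
    have hερ : ε * (z' - z) ≤ ρ / 4 * (z' - z) := by
      gcongr
      exacts [by linarith, min_le_left _ _]
    linarith
  have hlow := hplat.mul_le_of_affine_approx hγ hρ hclose
  have hεK : ε * (8 * (1 + γ) * K) ≤ γ * ρ := (le_div_iff₀ (by positivity)).1 (min_le_right _ _)
  nlinarith [mul_le_mul_of_nonneg_left hlen (by positivity : 0 ≤ 2 * (1 + γ) * ε),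
    mul_le_mul_of_nonneg_right hεK hη.le, mul_le_mul_of_nonneg_left hlow hρ.le,
    mul_pos (mul_pos hγ hη) hρ]

end Plateau

lemma exists_lt_and_lt_of_hasDerivAt_pos {F : ℝ → ℝ} {x ρ δ : ℝ} (hF : HasDerivAt F ρ x)
    (hρ : 0 < ρ) (hδ : 0 < δ) :
    (∃ u ∈ Ioo (x - δ) x, F u < F x) ∧ ∃ v ∈ Ioo x (x + δ), F x < F v := by
  have hslope := (hasDerivAt_iff_tendsto_slope.1 hF).eventually_const_lt hρ
  obtain ⟨u, hu, huI⟩ := ((hslope.filter_mono (nhdsLT_le_nhdsNE x)).and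
    (Ioo_mem_nhdsLT (sub_lt_self x hδ))).exists
  obtain ⟨v, hv, hvI⟩ := ((hslope.filter_mono (nhdsGT_le_nhdsNE x)).and
    (Ioo_mem_nhdsGT (lt_add_of_pos_right x hδ))).exists
  rw [slope_comm] at hu
  exact ⟨⟨u, huI, (slope_pos_iff huI.2).1 hu⟩, v, hvI, (slope_pos_iff hvI.1).1 hv⟩

section Chebyshev

/-- The value at `x` of the Chebyshev polynomial of the first kind `T_n`. -/
noncomputable def chebT (n : ℕ) (x : ℝ) : ℝ := (Polynomial.Chebyshev.T ℝ n).eval x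

/-- The value at `x` of the Chebyshev polynomial of the second kind `U_{n-1}`, shifted so that
`chebU n (cos φ) * sin φ = sin (n φ)`. -/
noncomputable def chebU (n : ℕ) (x : ℝ) : ℝ := (Polynomial.Chebyshev.U ℝ (n - 1)).eval x

lemma chebU_one (n : ℕ) : chebU n 1 = n := by simp [chebU]

open Polynomial (eval_add eval_sub eval_mul eval_X eval_pow eval_one)

variable (n : ℕ) {x : ℝ}

lemma chebU_succ (x : ℝ) : chebU (n + 1) x = x * chebU n x + chebT n x := by
  have h := Polynomial.Chebyshev.U_eq_X_mul_U_add_T ℝ ((n : ℤ) - 1)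
  rw [sub_add_cancel] at h
  simp only [chebU, chebT, Nat.cast_succ, add_sub_cancel_right, h, eval_add, eval_mul, eval_X]

lemma chebT_succ (x : ℝ) : chebT (n + 1) x = x * chebT n x - (1 - x ^ 2) * chebU n x := by
  have h := Polynomial.Chebyshev.T_eq_X_mul_T_sub_pol_U ℝ ((n : ℤ) - 1)
  rw [sub_add_cancel, show (n : ℤ) - 1 + 2 = n + 1 by ring] at h
  simp only [chebU, chebT, Nat.cast_succ, h, eval_sub, eval_mul, eval_X, eval_pow, eval_one]

lemma one_sub_chebT_sq (x : ℝ) : 1 - chebT n x ^ 2 = chebU n x ^ 2 * (1 - x ^ 2) := by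
  induction n with
  | zero => simp [chebT, chebU]
  | succ n ih =>
    rw [chebT_succ, chebU_succ]
    linear_combination ih

lemma chebT_mul_and_chebU_mul {ε : ℝ} (hε : ε ^ 2 = 1) (x : ℝ) :
    chebT n (ε * x) = ε ^ n * chebT n x ∧ chebU n (ε * x) = ε ^ n * ε * chebU n x := by
  induction n with
  | zero => simp [chebT, chebU]
  | succ n ih =>
    rw [chebT_succ, chebU_succ, ih.1, ih.2, chebT_succ, chebU_succ]
    constructor
    · linear_combination ε ^ n * ε * chebU n x * x ^ 2 * hε
    · linear_combination -ε ^ n * chebT n x * hε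

lemma abs_chebT_le_one (hx : |x| ≤ 1) : |chebT n x| ≤ 1 :=
  Polynomial.Chebyshev.abs_eval_T_real_le_one n hx

lemma abs_chebU_le (hx : |x| ≤ 1) : |chebU n x| ≤ n := by
  induction n with
  | zero => simp [chebU]
  | succ n ih =>
    calc |chebU (n + 1) x| ≤ |x| * |chebU n x| + |chebT n x| := by
          rw [chebU_succ, ← abs_mul]
          exact abs_add_le _ _
      _ ≤ 1 * n + 1 := by
          gcongr
          exact abs_chebT_le_one n hx
      _ = (n + 1 : ℕ) := by push_cast; ring

lemma one_le_chebT (hx : 1 ≤ x) : 1 ≤ chebT n x :=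
  Polynomial.Chebyshev.one_le_eval_T_real n hx

lemma chebU_succ_pos (hx : 1 ≤ x) : 0 < chebU (n + 1) x := by
  induction n with
  | zero => simp [chebU]
  | succ n ih =>
    rw [chebU_succ]
    linarith [one_le_chebT (n + 1) hx, mul_pos (one_pos.trans_le hx) ih]

variable {n}

lemma chebT_mul_chebU_mul_pos (hn : n ≠ 0) (hx : 1 ≤ |x|) : 0 < chebT n x * chebU n x * x := by
  obtain ⟨n, rfl⟩ := Nat.exists_eq_succ_of_ne_zero hn
  have hpos : ∀ y : ℝ, 1 ≤ y → 0 < chebT (n + 1) y * chebU (n + 1) y * y := fun y hy => by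
    have hT := one_le_chebT (n + 1) hy
    have hU := chebU_succ_pos n hy
    positivity
  rcases le_abs'.1 hx with hx | hx
  · have hsymm := chebT_mul_and_chebU_mul (n + 1) (ε := -1) (by norm_num) (-x)
    rw [show -1 * -x = x by ring] at hsymm
    have hsign : ((-1 : ℝ) ^ (n + 1)) ^ 2 = 1 := by rw [← pow_mul, pow_mul', neg_one_sq, one_pow]
    rw [hsymm.1, hsymm.2]
    linear_combination hpos (-x) (by linarith) +
      chebT (n + 1) (-x) * chebU (n + 1) (-x) * x * hsign
  · exact hpos x hx

lemma abs_lt_one_of_chebU_eq_zero (hn : n ≠ 0) (hx : chebU n x = 0) : |x| < 1 := by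
  by_contra! h
  simpa [hx] using chebT_mul_chebU_mul_pos hn h

variable (n)

lemma chebT_cos (φ : ℝ) : chebT n (Real.cos φ) = Real.cos (n * φ) := by
  simp [chebT]

lemma chebU_cos_mul_sin (φ : ℝ) : chebU n (Real.cos φ) * Real.sin φ = Real.sin (n * φ) := by
  simp [chebU]

variable {n}

lemma chebU_cos_pos (hn : n ≠ 0) {φ : ℝ} (hφ : φ ∈ Ico 0 (Real.pi / n)) :
    0 < chebU n (Real.cos φ) := by
  have hn' : 1 ≤ (n : ℝ) := by exact_mod_cast hn.bot_lt
  have hnφ : n * φ < Real.pi := by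
    have hlt := (lt_div_iff₀ (by linarith)).1 hφ.2
    rwa [mul_comm] at hlt
  rcases hφ.1.eq_or_lt with rfl | hpos
  · rw [Real.cos_zero, chebU_one]
    linarith
  · refine pos_of_mul_pos_left (b := Real.sin φ) ?_ (Real.sin_pos_of_pos_of_lt_pi hpos ?_).le
    · rw [chebU_cos_mul_sin]
      exact Real.sin_pos_of_pos_of_lt_pi (by positivity) hnφ
    · nlinarith

lemma antitoneOn_chebU_cos (n : ℕ) :
    AntitoneOn (fun φ => chebU n (Real.cos φ)) (Icc 0 (Real.pi / n)) := by
  have hπ := Real.pi_pos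
  induction n with
  | zero => simp [chebU]
  | succ n ih =>
    rcases eq_or_ne n 0 with rfl | hn
    · simp [chebU, antitoneOn_const]
    have hn' : 1 ≤ (n : ℝ) := by exact_mod_cast hn.bot_lt
    intro φ hφ ψ hψ hle
    rw [Nat.cast_succ] at hφ hψ
    have hlt : Real.pi / (n + 1) < Real.pi / n := by gcongr; linarith
    have hmem : ∀ {t}, t ∈ Icc 0 (Real.pi / (n + 1)) → t ∈ Ico 0 (Real.pi / n) :=
      fun ht => ⟨ht.1, ht.2.trans_lt hlt⟩
    have hhalf : ∀ {t}, t ∈ Icc 0 (Real.pi / (n + 1)) → t ≤ Real.pi / 2 := fun ht =>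
      ht.2.trans (by gcongr; linarith)
    have hU : chebU n (Real.cos ψ) ≤ chebU n (Real.cos φ) :=
      ih (Ico_subset_Icc_self (hmem hφ)) (Ico_subset_Icc_self (hmem hψ)) hle
    have hUpos := (chebU_cos_pos hn (hmem hψ)).le
    have hcos : Real.cos ψ ≤ Real.cos φ :=
      Real.cos_le_cos_of_nonneg_of_le_pi hφ.1 (by linarith [hhalf hψ]) hle
    have hcosφ : 0 ≤ Real.cos φ :=
      Real.cos_nonneg_of_neg_pi_div_two_le_of_le (by linarith [hφ.1]) (hhalf hφ)
    have hT : Real.cos (n * ψ) ≤ Real.cos (n * φ) := by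
      refine Real.cos_le_cos_of_nonneg_of_le_pi (mul_nonneg (by linarith) hφ.1) ?_ (by gcongr)
      have hψn := (le_div_iff₀ (by linarith)).1 (hmem hψ).2.le
      linarith
    simp only [chebU_succ, chebT_cos]
    gcongr

lemma chebU_pos (hn : n ≠ 0) {x : ℝ} (hx : Real.cos (Real.pi / n) < x) (hx1 : x ≤ 1) :
    0 < chebU n x := by
  have hπ := Real.pi_pos
  have hx0 : -1 ≤ x := (Real.neg_one_le_cos _).trans hx.le
  have hn' : 1 ≤ (n : ℝ) := by exact_mod_cast hn.bot_lt
  have hlt := Real.strictAntiOn_arccos (Real.cos_mem_Icc _) ⟨hx0, hx1⟩ hx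
  rw [Real.arccos_cos (by positivity) (div_le_self hπ.le hn')] at hlt
  simpa only [Real.cos_arccos hx0 hx1] using chebU_cos_pos hn ⟨Real.arccos_nonneg x, hlt⟩

lemma monotoneOn_chebU (hn : n ≠ 0) : MonotoneOn (chebU n) (Icc (Real.cos (Real.pi / n)) 1) := by
  have hn' : 1 ≤ (n : ℝ) := by exact_mod_cast hn.bot_lt
  have harccos : ∀ x ∈ Icc (Real.cos (Real.pi / n)) 1,
      Real.arccos x ∈ Icc 0 (Real.pi / n) ∧ Real.cos (Real.arccos x) = x := fun x hx => by
    have hle := Real.antitone_arccos hx.1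
    rw [Real.arccos_cos (by positivity) (div_le_self Real.pi_pos.le hn')] at hle
    exact ⟨⟨Real.arccos_nonneg x, hle⟩,
      Real.cos_arccos ((Real.neg_one_le_cos _).trans hx.1) hx.2⟩
  intro x hx y hy hxy
  have hanti := antitoneOn_chebU_cos n (harccos y hy).1 (harccos x hx).1
    (Real.antitone_arccos hxy)
  simpa only [(harccos x hx).2, (harccos y hy).2] using hanti

lemma hasDerivAt_chebT (n : ℕ) (x : ℝ) : HasDerivAt (chebT n) (n * chebU n x) x := by
  have h := (Polynomial.Chebyshev.T ℝ n).hasDerivAt x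
  rw [Polynomial.Chebyshev.T_derivative_eq_U, Polynomial.eval_mul, Int.cast_natCast,
    Polynomial.eval_natCast] at h
  exact h

lemma one_add_chebT_le (hn : n ≠ 0) {x : ℝ} (hx : Real.cos (Real.pi / n) < x) (hx1 : x ≤ 1) :
    1 + chebT n x ≤ n * chebU n x * (x - Real.cos (Real.pi / n)) := by
  have hT : chebT n (Real.cos (Real.pi / n)) = -1 := by
    rw [chebT_cos, mul_div_cancel₀ _ (by exact_mod_cast hn), Real.cos_pi]
  have hmvt := (convex_Icc (Real.cos (Real.pi / n)) x).image_sub_le_mul_sub_of_deriv_le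
    (f := chebT n) (C := n * chebU n x)
    (fun y _ => (hasDerivAt_chebT n y).continuousAt.continuousWithinAt)
    (fun y _ => (hasDerivAt_chebT n y).differentiableAt.differentiableWithinAt)
    (fun y hy => ?_) _ (left_mem_Icc.2 hx.le) _ (right_mem_Icc.2 hx.le) hx.le
  · rw [hT] at hmvt
    linarith
  · rw [interior_Icc] at hy
    rw [(hasDerivAt_chebT n y).deriv]
    gcongr
    exact monotoneOn_chebU hn ⟨hy.1.le, hy.2.le.trans hx1⟩ ⟨hx.le, hx1⟩ hy.2.le

end Chebyshev

section Symmetry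

variable {κ : ℕ} {a b : ℝ} {μ : Measure ℝ} [IsProbabilityMeasure μ] [NullSingletonClass μ]

lemma sol_scale (hμ : IsCantorMeasure κ a b μ) (l : ℝ) :
    sol μ 1 0 (κ / a * l) 1 = chebU κ (halfTrace μ a b l) * sol μ 1 0 l 1 -
      (Polynomial.Chebyshev.U ℝ (κ - 2)).eval (halfTrace μ a b l) := by
  simpa [chebU, monodromy, blockMatrix, gapMatrix] using congr_fun₂ (monodromy_scale hμ l) 0 0

lemma solDeriv_zero_one_scale (hμ : IsCantorMeasure κ a b μ) (l : ℝ) :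
    solDeriv μ 0 1 (κ / a * l) 1 = chebU κ (halfTrace μ a b l) * solDeriv μ 0 1 l 1 -
      (Polynomial.Chebyshev.U ℝ (κ - 2)).eval (halfTrace μ a b l) := by
  simpa [chebU, monodromy, blockMatrix, gapMatrix] using congr_fun₂ (monodromy_scale hμ l) 1 1

lemma solDeriv_one_zero_scale (hμ : IsCantorMeasure κ a b μ) (l : ℝ) :
    solDeriv μ 1 0 (κ / a * l) 1 = chebU κ (halfTrace μ a b l) * solDeriv μ 1 0 l 1 / a := by
  simpa [chebU, monodromy, blockMatrix, gapMatrix, mul_div_assoc] using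
    congr_fun₂ (monodromy_scale hμ l) 1 0

lemma halfTrace_zero : halfTrace μ a b 0 = 1 := by
  have hsol : sol μ 1 0 0 1 = 1 := by simpa using sol_eq_volterra μ 1 0 0 (x := 1) (by simp)
  simp [halfTrace, hsol, solDeriv]

lemma continuous_halfTrace : Continuous (halfTrace μ a b) :=
  (((continuous_sol_apply_one μ 1 0).add (continuous_solDeriv_apply_one μ 0 1)).add
    ((continuous_solDeriv_apply_one μ 1 0).const_mul _)).div_const 2

-- The quotient of the difference by `l` is multiplied by `(a / κ) U_{κ-1}` under scaling, which
-- equals `a < 1` at `l = 0`, so it vanishes.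
lemma sol_one_zero_eq_solDeriv_zero_one (hμ : IsCantorMeasure κ a b μ) (l : ℝ) :
    sol μ 1 0 l 1 = solDeriv μ 0 1 l 1 := by
  set q : ℝ → ℝ := fun l =>
    (∫ t in 0..1, sol μ 0 1 l t ∂μ) - ∫ t in 0..1, ∫ s in 0..t, sol μ 1 0 l s ∂μ
  have hdiff : ∀ l, sol μ 1 0 l 1 - solDeriv μ 0 1 l 1 = l * q l := fun l => by
    rw [sol_eq_volterra μ 1 0 l (by simp), solDeriv]
    ring
  have hκ : (0 : ℝ) < κ := by exact_mod_cast pos_of_gt hμ.two_le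
  have ha := hμ.a_pos
  have hq : Continuous q :=
    (continuous_integral_sol μ 0 1).sub (continuous_integral_integral_sol μ 1 0)
  have hm : Continuous fun l => a / κ * chebU κ (halfTrace μ a b l) :=
    ((Polynomial.continuous _).comp continuous_halfTrace).const_mul _
  have hscale : ∀ l, q (κ / a * l) = a / κ * chebU κ (halfTrace μ a b l) * q l := by
    refine congr_fun (Continuous.ext_on (dense_compl_singleton 0) (by fun_prop) (hm.mul hq)
      fun l hl => mul_left_cancel₀ (mul_ne_zero (by positivity : κ / a ≠ 0) hl) ?_)
    have hdiff' := hdiff (κ / a * l)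
    rw [sol_scale hμ, solDeriv_zero_one_scale hμ] at hdiff'
    calc κ / a * l * q (κ / a * l) = chebU κ (halfTrace μ a b l) * (l * q l) := by
          rw [← hdiff', ← hdiff]
          ring
      _ = _ := by field_simp
  have hm0 : |a / κ * chebU κ (halfTrace μ a b 0)| < 1 := by
    rw [halfTrace_zero, chebU_one, div_mul_cancel₀ _ hκ.ne', abs_of_pos hμ.a_pos]
    exact hμ.a_lt_one
  rw [← sub_eq_zero, hdiff, eq_zero_of_scaling hμ.one_lt_ratio hq.continuousAt hm.continuousAt
    hm0 hscale, mul_zero]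

end Symmetry

section CauchySchwarz

lemma sq_intervalIntegral_mul_le {μ : Measure ℝ} [IsLocallyFiniteMeasure μ] {f g : ℝ → ℝ}
    (hf : Continuous f) (hg : Continuous g) {u v : ℝ} (huv : u ≤ v) :
    (∫ x in u..v, f x * g x ∂μ) ^ 2 ≤
      (∫ x in u..v, f x * f x ∂μ) * ∫ x in u..v, g x * g x ∂μ := by
  have hint : ∀ {p : ℝ → ℝ}, Continuous p → IntervalIntegrable p μ u v :=
    fun hp => hp.intervalIntegrable _ _
  have hquad : ∀ t : ℝ, 0 ≤ (∫ x in u..v, f x * f x ∂μ) * (t * t) +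
      2 * (∫ x in u..v, f x * g x ∂μ) * t + ∫ x in u..v, g x * g x ∂μ := fun t =>
    calc 0 ≤ ∫ x in u..v, (t * f x + g x) * (t * f x + g x) ∂μ :=
          intervalIntegral.integral_nonneg_of_forall huv fun x => mul_self_nonneg _
      _ = ∫ x in u..v, (t * t * (f x * f x) + 2 * t * (f x * g x)) + g x * g x ∂μ := by
          congr with x
          ring
      _ = _ := by
          rw [intervalIntegral.integral_add (hint (by fun_prop)) (hint (by fun_prop)),
            intervalIntegral.integral_add (hint (by fun_prop)) (hint (by fun_prop)),
            intervalIntegral.integral_const_mul, intervalIntegral.integral_const_mul]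
          ring
  have hdiscrim := discrim_le_zero hquad
  rw [discrim] at hdiscrim
  linarith

end CauchySchwarz

section PickProperty

variable {μ : Measure ℝ} [IsProbabilityMeasure μ] [NullSingletonClass μ]

lemma sol_apply_one_of_sq_eq_one {l ε : ℝ} (hsymm : sol μ 1 0 l 1 = solDeriv μ 0 1 l 1)
    (hε : ε ^ 2 = 1) (hl : solDeriv μ 1 0 l 1 ≠ 0) :
    sol μ ((sol μ 1 0 l 1 - ε) / solDeriv μ 1 0 l 1) (-1) l 1 =
        -ε * ((sol μ 1 0 l 1 - ε) / solDeriv μ 1 0 l 1) ∧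
      solDeriv μ ((sol μ 1 0 l 1 - ε) / solDeriv μ 1 0 l 1) (-1) l 1 = -ε := by
  have mem1 : (1 : ℝ) ∈ Icc (0 : ℝ) 1 := by simp
  have hdet := det_fundamental_eq_one (μ := μ) l
  rw [← hsymm] at hdet
  generalize hm : (sol μ 1 0 l 1 - ε) / solDeriv μ 1 0 l 1 = m
  rw [div_eq_iff hl] at hm
  rw [sol_eq_linear_comb m (-1) l mem1, solDeriv_eq_linear_comb m (-1) l mem1, ← hsymm]
  refine ⟨mul_right_cancel₀ hl ?_, ?_⟩
  · linear_combination hdet - hε - (sol μ 1 0 l 1 + ε) * hm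
  · linear_combination -hm

-- For the solutions `f_l` of the preceding lemma, Lagrange's identity reads
-- `2 (m x - m y) = (x - y) ∫ f_x f_y dμ`.
lemma isPickOn_sol_sub_div_of_sq_eq_one (hμ : μ (Ioc 0 1) = 1)
    (hsymm : ∀ l, sol μ 1 0 l 1 = solDeriv μ 0 1 l 1) {ε : ℝ} (hε : ε ^ 2 = 1) :
    IsPickOn (fun l => (sol μ 1 0 l 1 - ε) / solDeriv μ 1 0 l 1) {l | solDeriv μ 1 0 l 1 ≠ 0} := by
  set m : ℝ → ℝ := fun l => (sol μ 1 0 l 1 - ε) / solDeriv μ 1 0 l 1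
  set S : Set ℝ := {l | solDeriv μ 1 0 l 1 ≠ 0}
  have hend : ∀ l ∈ S, sol μ (m l) (-1) l 1 = -ε * m l ∧ solDeriv μ (m l) (-1) l 1 = -ε :=
    fun l hl => sol_apply_one_of_sq_eq_one (hsymm l) hε hl
  have hcont : ContinuousOn m S :=
    ((continuous_sol_apply_one μ 1 0).sub continuous_const).continuousOn.div
      (continuous_solDeriv_apply_one μ 1 0).continuousOn fun l hl => hl
  refine IsPickOn.of_kernel
    (K := fun x y => 2⁻¹ * ∫ t in 0..1, sol μ (m x) (-1) x t * sol μ (m y) (-1) y t ∂μ)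
    (isOpen_ne_fun (continuous_solDeriv_apply_one μ 1 0) continuous_const)
    (fun x hx y hy => ?_) (fun x _ => ?_) (fun x _ y _ => ?_) ?_
  · have hlag := (isSolution_sol μ (m x) (-1) x).lagrange_identity (isSolution_sol μ (m y) (-1) y)
    simp only [(hend x hx).1, (hend x hx).2, (hend y hy).1, (hend y hy).2, sol_zero,
      solDeriv_zero] at hlag
    linear_combination -hlag / 2 + (m x - m y) / 2 * hε
  · have hpos := (isSolution_sol μ (m x) (-1) x).integral_fst_sq_pos hμ (Or.inr (by simp))
    positivity
  · have hcs := sq_intervalIntegral_mul_le (μ := μ) (continuous_sol μ (m x) (-1) x)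
      (continuous_sol μ (m y) (-1) y) zero_le_one
    linear_combination hcs / 4
  · refine ((continuous_integral_sol_mul_sol μ).comp_continuousOn (s := S ×ˢ S)
      (f := fun p : ℝ × ℝ => ((m p.1, -1, p.1), (m p.2, -1, p.2))) ?_).const_mul 2⁻¹
    have h₁ : ContinuousOn (fun p : ℝ × ℝ => m p.1) (S ×ˢ S) :=
      hcont.comp continuousOn_fst fun p hp => hp.1
    have h₂ : ContinuousOn (fun p : ℝ × ℝ => m p.2) (S ×ˢ S) :=
      hcont.comp continuousOn_snd fun p hp => hp.2
    exact (h₁.prodMk (continuousOn_const.prodMk continuousOn_fst)).prodMk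
      (h₂.prodMk (continuousOn_const.prodMk continuousOn_snd))

lemma isPickOn_sol_sub_div (hμ : μ (Ioc 0 1) = 1)
    (hsymm : ∀ l, sol μ 1 0 l 1 = solDeriv μ 0 1 l 1) {k : ℝ} (hk : k ∈ Icc (-1 : ℝ) 1) :
    IsPickOn (fun l => (sol μ 1 0 l 1 - k) / solDeriv μ 1 0 l 1) {l | solDeriv μ 1 0 l 1 ≠ 0} :=
  IsPickOn.linear_comb (p := (1 - k) / 2) (q := (1 + k) / 2) (r := 0)
    (isOpen_ne_fun (continuous_solDeriv_apply_one μ 1 0) continuous_const)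
    (isPickOn_sol_sub_div_of_sq_eq_one hμ hsymm (ε := -1) (by norm_num))
    (isPickOn_sol_sub_div_of_sq_eq_one hμ hsymm (ε := 1) (by norm_num))
    (by linarith [hk.2]) (by linarith [hk.1]) (by linarith) fun l _ => by ring

lemma exists_solDeriv_eq_sub_mul (hμ : μ (Ioc 0 1) = 1) {z : ℝ} (hz : solDeriv μ 1 0 z 1 = 0) :
    ∃ K : ℝ → ℝ, Continuous K ∧ 0 < K z ∧
      ∀ l, sol μ 1 0 z 1 * solDeriv μ 1 0 l 1 = (z - l) * K l := by
  refine ⟨fun l => ∫ t in 0..1, sol μ 1 0 z t * sol μ 1 0 l t ∂μ, ?_, ?_, fun l => ?_⟩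
  · exact (continuous_integral_sol_mul_sol μ).comp
      (f := fun l : ℝ => ((1, 0, z), (1, 0, l))) (by fun_prop)
  · exact (isSolution_sol μ 1 0 z).integral_fst_sq_pos hμ (Or.inl (by simp))
  · have hlag := (isSolution_sol μ 1 0 z).lagrange_identity (isSolution_sol μ 1 0 l)
    simp only [sol_zero, solDeriv_zero, hz] at hlag
    linear_combination hlag

end PickProperty

/-- The properties of the monodromy matrix of a self-similar string on which the spectral analysis
rests. The matrix is `!![c, s; d, c]` as a function of the spectral parameter, and `θ` is half the
trace over a cell, that is, a copy of the string followed by a gap. For a string with `κ` blocks of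
length `a` and gaps of length `b`, the constants are `τ = κ / a`, `h = b / (2 a)` and
`C = b (1 - a) / (2 a ^ 2)`. -/
structure ScalingMonodromy (κ : ℕ) where
  (c d s θ : ℝ → ℝ)
  (a h C τ : ℝ)
  two_le : 2 ≤ κ
  a_pos : 0 < a
  a_mul_lt_one : a * κ < 1
  h_pos : 0 < h
  C_pos : 0 < C
  one_lt_τ : 1 < τ
  continuous_c : Continuous c
  continuous_d : Continuous d
  continuous_s : Continuous s
  det_eq_one : ∀ l, c l ^ 2 - s l * d l = 1
  θ_eq : ∀ l, θ l = c l + h * d l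
  d_scale : ∀ l, d (τ * l) = chebU κ (θ l) * d l / a
  θ_scale : ∀ l, θ (τ * l) = chebT κ (θ l) + C * (chebU κ (θ l) * d l)
  c_zero : c 0 = 1
  d_zero : d 0 = 0
  s_zero : s 0 = 1
  isPickOn : ∀ k ∈ Icc (-1 : ℝ) 1, IsPickOn (fun l => (c l - k) / d l) {l | d l ≠ 0}
  exists_d_eq_sub_mul : ∀ z, d z = 0 →
    ∃ K : ℝ → ℝ, Continuous K ∧ 0 < K z ∧ ∀ l, c z * d l = (z - l) * K l

namespace IsCantorMeasure

variable {κ : ℕ} {a b : ℝ} {μ : Measure ℝ} [IsProbabilityMeasure μ] [NullSingletonClass μ]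

lemma halfTrace_eq (hμ : IsCantorMeasure κ a b μ) (l : ℝ) :
    halfTrace μ a b l = sol μ 1 0 l 1 + b / (2 * a) * solDeriv μ 1 0 l 1 := by
  rw [halfTrace, ← sol_one_zero_eq_solDeriv_zero_one hμ]
  ring

lemma halfTrace_scale (hμ : IsCantorMeasure κ a b μ) (l : ℝ) :
    halfTrace μ a b (κ / a * l) = chebT κ (halfTrace μ a b l) +
      b * (1 - a) / (2 * a ^ 2) * (chebU κ (halfTrace μ a b l) * solDeriv μ 1 0 l 1) := by
  have ha := hμ.a_pos
  have hT : chebT κ (halfTrace μ a b l) = halfTrace μ a b l * chebU κ (halfTrace μ a b l) -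
      (Polynomial.Chebyshev.U ℝ (κ - 2)).eval (halfTrace μ a b l) := by
    have hTU := Polynomial.Chebyshev.T_eq_X_mul_U_sub_U ℝ ((κ : ℤ) - 2)
    rw [sub_add_cancel, show (κ : ℤ) - 2 + 1 = κ - 1 by ring] at hTU
    rw [chebT, hTU, Polynomial.eval_sub, Polynomial.eval_mul, Polynomial.eval_X, chebU]
  rw [hμ.halfTrace_eq (κ / a * l), sol_scale hμ, solDeriv_one_zero_scale hμ, hT,
    ← sub_eq_iff_eq_add.2 (hμ.halfTrace_eq l)]
  field_simp
  ring

/-- The monodromy matrix of the string with Cantor mass distribution `μ`. -/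
noncomputable def scalingMonodromy (hμ : IsCantorMeasure κ a b μ) : ScalingMonodromy κ where
  c l := sol μ 1 0 l 1
  d l := solDeriv μ 1 0 l 1
  s l := sol μ 0 1 l 1
  θ := halfTrace μ a b
  a := a
  h := b / (2 * a)
  C := b * (1 - a) / (2 * a ^ 2)
  τ := κ / a
  two_le := hμ.two_le
  a_pos := hμ.a_pos
  a_mul_lt_one := hμ.a_mul_lt_one
  h_pos := div_pos hμ.b_pos (by linarith [hμ.a_pos])
  C_pos := div_pos (mul_pos hμ.b_pos (sub_pos.2 hμ.a_lt_one)) (by have := hμ.a_pos; positivity)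
  one_lt_τ := hμ.one_lt_ratio
  continuous_c := continuous_sol_apply_one μ 1 0
  continuous_d := continuous_solDeriv_apply_one μ 1 0
  continuous_s := continuous_sol_apply_one μ 0 1
  det_eq_one l := by
    have hdet := det_fundamental_eq_one (μ := μ) l
    rw [← sol_one_zero_eq_solDeriv_zero_one hμ] at hdet
    linear_combination hdet
  θ_eq := hμ.halfTrace_eq
  d_scale := solDeriv_one_zero_scale hμ
  θ_scale := hμ.halfTrace_scale
  c_zero := by simpa using sol_eq_volterra μ 1 0 0 (x := 1) (by simp)
  d_zero := by simp [solDeriv]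
  s_zero := by simpa using sol_eq_volterra μ 0 1 0 (x := 1) (by simp)
  isPickOn _ := isPickOn_sol_sub_div hμ.measure_Ioc (sol_one_zero_eq_solDeriv_zero_one hμ)
  exists_d_eq_sub_mul _ := exists_solDeriv_eq_sub_mul hμ.measure_Ioc

end IsCantorMeasure

namespace ScalingMonodromy

open Filter Topology

variable {κ : ℕ} (M : ScalingMonodromy κ)

lemma τ_pos : 0 < M.τ := one_pos.trans M.one_lt_τ

lemma κ_ne_zero (M : ScalingMonodromy κ) : κ ≠ 0 := (pos_of_gt M.two_le).ne'

lemma continuous_θ : Continuous M.θ := by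
  rw [funext M.θ_eq]
  exact M.continuous_c.add (M.continuous_d.const_mul _)

lemma a_mul_d_scale (l : ℝ) : M.a * M.d (M.τ * l) = chebU κ (M.θ l) * M.d l := by
  rw [M.d_scale, mul_div_cancel₀ _ M.a_pos.ne']

lemma θ_scale_eq_chebT_add_d_scale (l : ℝ) :
    M.θ (M.τ * l) = chebT κ (M.θ l) + M.C * (M.a * M.d (M.τ * l)) := by
  rw [M.θ_scale, M.a_mul_d_scale]

lemma isPickOn_θ {k : ℝ} (hk : k ∈ Icc (-1 : ℝ) 1) :
    IsPickOn (fun l => (M.θ l - k) / M.d l) {l | M.d l ≠ 0} := by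
  refine IsPickOn.linear_comb (p := 1) (q := 0) (r := M.h) (M.continuous_d.isOpen_preimage _
    isOpen_ne) (M.isPickOn k hk) (M.isPickOn k hk) zero_le_one le_rfl (by norm_num) fun l hl => ?_
  have hl' : M.d l ≠ 0 := hl
  rw [M.θ_eq]
  field_simp
  ring

variable {M}

lemma c_sq_of_d_eq_zero {z : ℝ} (hz : M.d z = 0) : M.c z ^ 2 = 1 := by
  simpa [hz] using M.det_eq_one z

lemma θ_of_d_eq_zero {z : ℝ} (hz : M.d z = 0) : M.θ z = M.c z := by
  simp [M.θ_eq, hz]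

lemma eventually_sign_d {z : ℝ} (hz : M.d z = 0) :
    ∀ᶠ l in 𝓝 z, (z < l → M.c z * M.d l < 0) ∧ (l < z → 0 < M.c z * M.d l) := by
  obtain ⟨K, hK, hKz, hd⟩ := M.exists_d_eq_sub_mul z hz
  filter_upwards [hK.continuousAt.eventually_const_lt hKz] with l hKl
  rw [hd]
  exact ⟨fun h => mul_neg_of_neg_of_pos (sub_neg.2 h) hKl, fun h => mul_pos (sub_pos.2 h) hKl⟩

variable (M)

/-- The parameters lying in a spectral gap: the half-trace has modulus at least one and the same
sign as `d`. This set is stable under multiplication by `τ`. -/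
def gap : Set ℝ := {l | 1 ≤ |M.θ l| ∧ 0 < M.θ l * M.d l}

variable {M}

lemma scale_mem_gap {l : ℝ} (hl : l ∈ M.gap) : M.τ * l ∈ M.gap := by
  obtain ⟨hθ, hθd⟩ := hl
  have hTW : 0 < chebT κ (M.θ l) * (chebU κ (M.θ l) * M.d l) := by
    have hpos := mul_pos (chebT_mul_chebU_mul_pos M.κ_ne_zero hθ) hθd
    exact pos_of_mul_pos_left (by linear_combination hpos) (sq_nonneg (M.θ l))
  have hT : 1 ≤ chebT κ (M.θ l) ^ 2 := by
    rw [one_le_sq_iff_one_le_abs]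
    exact Polynomial.Chebyshev.one_le_abs_eval_T_real κ hθ
  have hC := M.C_pos
  constructor
  · rw [← one_le_sq_iff_one_le_abs, M.θ_scale]
    nlinarith [sq_nonneg (M.C * (chebU κ (M.θ l) * M.d l))]
  · rw [M.θ_scale, M.d_scale, ← mul_div_assoc]
    refine div_pos ?_ M.a_pos
    nlinarith [sq_nonneg (chebU κ (M.θ l) * M.d l)]

lemma scale_pow_mem_gap {l : ℝ} (hl : l ∈ M.gap) (j : ℕ) : M.τ ^ j * l ∈ M.gap := by
  induction j with
  | zero => simpa using hl
  | succ j ih =>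
    rw [pow_succ', mul_assoc]
    exact scale_mem_gap ih

lemma d_ne_zero_of_mem_gap {l : ℝ} (hl : l ∈ M.gap) : M.d l ≠ 0 := right_ne_zero_of_mul hl.2.ne'

variable (M)

lemma eventually_abs_θ_le_one_and_one_sub_θ_sq_le : ∀ᶠ l in 𝓝 0, 0 < l →
    |M.θ l| ≤ 1 ∧ 1 - M.θ l ^ 2 ≤ 2 * (M.h + 1) * |M.d l| := by
  have hs : ∀ᶠ l in 𝓝 0, 0 < M.s l :=
    M.continuous_s.continuousAt.eventually_const_lt (by simp [M.s_zero])
  have hc : ∀ᶠ l in 𝓝 0, 0 < M.c l :=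
    M.continuous_c.continuousAt.eventually_const_lt (by simp [M.c_zero])
  have hsc : ∀ᶠ l in 𝓝 0, M.s l - M.c l < 1 :=
    (M.continuous_s.sub M.continuous_c).continuousAt.eventually_lt_const
      (by simp [M.s_zero, M.c_zero])
  have hθ : ∀ᶠ l in 𝓝 0, 0 < M.θ l := M.continuous_θ.continuousAt.eventually_const_lt
    (by simp [θ_of_d_eq_zero M.d_zero, M.c_zero])
  filter_upwards [hs, hc, hsc, hθ, eventually_sign_d M.d_zero] with l hs hc hsc hθ hd hl
  replace hd : M.d l < 0 := by simpa [M.c_zero] using hd.1 hl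
  obtain ⟨q, hq⟩ : ∃ q, q * (M.c l + 1) = M.s l := ⟨_, div_mul_cancel₀ _ (by positivity)⟩
  have hq0 : 0 < q := pos_of_mul_pos_left (hq ▸ hs) (by positivity)
  have hq1 : q ≤ 1 := by nlinarith
  have hsub : 1 - M.θ l = -M.d l * (M.h + q) := by
    refine mul_left_cancel₀ (by positivity : M.c l + 1 ≠ 0) ?_
    rw [M.θ_eq]
    linear_combination -M.det_eq_one l + M.d l * hq
  have hpos : 0 < -M.d l * (M.h + q) := mul_pos (neg_pos.2 hd) (by linarith [M.h_pos])
  have hle : -M.d l * (M.h + q) ≤ -M.d l * (M.h + 1) := by gcongr; linarith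
  refine ⟨abs_le.2 ⟨by linarith, by linarith⟩, ?_⟩
  rw [abs_of_neg hd]
  nlinarith

lemma abs_θ_le_one_or_pos {l : ℝ} (hl : 0 < l) : |M.θ l| ≤ 1 ∨ 0 < M.θ l * M.d l := by
  refine forall_of_scaling (p := fun l => 0 < l → |M.θ l| ≤ 1 ∨ 0 < M.θ l * M.d l) M.one_lt_τ
    (M.eventually_abs_θ_le_one_and_one_sub_θ_sq_le.mono fun l h hl => Or.inl (h hl).1)
    (fun l ih hl => ?_) l hl
  rcases le_or_gt |M.θ l| 1 with hle | hgt
  · refine or_iff_not_imp_left.2 fun hgt' => ?_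
    have hT := (abs_chebT_le_one κ hle).trans_lt (not_le.1 hgt')
    have hmul : M.θ (M.τ * l) * chebT κ (M.θ l) < M.θ (M.τ * l) ^ 2 := by
      rw [← sq_abs, sq]
      calc _ ≤ |M.θ (M.τ * l)| * |chebT κ (M.θ l)| := (le_abs_self _).trans (abs_mul _ _).le
        _ < _ := by gcongr; exact (abs_nonneg _).trans_lt hT
    refine pos_of_mul_pos_left (a := M.θ (M.τ * l) * M.d (M.τ * l)) ?_
      (mul_pos M.C_pos M.a_pos).le
    linear_combination hmul + M.θ (M.τ * l) * M.θ_scale_eq_chebT_add_d_scale l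
  · have hl' := pos_of_mul_pos_right hl M.τ_pos.le
    exact Or.inr (scale_mem_gap ⟨hgt.le, (ih hl').resolve_left hgt.not_ge⟩).2

lemma mem_gap_of_one_lt_abs_θ {l : ℝ} (hl : 0 < l) (hθ : 1 < |M.θ l|) : l ∈ M.gap :=
  ⟨hθ.le, (M.abs_θ_le_one_or_pos hl).resolve_left hθ.not_ge⟩

lemma one_sub_θ_scale_sq_le {K l : ℝ} (hK : 2 * M.a * M.C ≤ K * (1 - M.a * κ)) (hK0 : 0 ≤ K)
    (hθ : |M.θ l| ≤ 1) (hl : 1 - M.θ l ^ 2 ≤ K * |M.d l|) :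
    1 - M.θ (M.τ * l) ^ 2 ≤ K * |M.d (M.τ * l)| := by
  have hscale : |chebU κ (M.θ l)| * |M.d l| = M.a * |M.d (M.τ * l)| := by
    rw [← abs_mul, ← M.a_mul_d_scale, abs_mul, abs_of_pos M.a_pos]
  have hpell := one_sub_chebT_sq κ (M.θ l)
  have hband : chebU κ (M.θ l) ^ 2 * (1 - M.θ l ^ 2) ≤ κ * K * (M.a * |M.d (M.τ * l)|) :=
    calc _ ≤ chebU κ (M.θ l) ^ 2 * (K * |M.d l|) := by gcongr
      _ = |chebU κ (M.θ l)| * (K * (|chebU κ (M.θ l)| * |M.d l|)) := by rw [← sq_abs]; ring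
      _ ≤ κ * (K * (|chebU κ (M.θ l)| * |M.d l|)) := by
        gcongr
        exact abs_chebU_le κ hθ
      _ = _ := by rw [hscale]; ring
  have hcross : -(chebT κ (M.θ l) * M.d (M.τ * l)) ≤ |M.d (M.τ * l)| :=
    calc _ ≤ |chebT κ (M.θ l)| * |M.d (M.τ * l)| := (neg_le_abs _).trans (abs_mul _ _).le
      _ ≤ 1 * |M.d (M.τ * l)| := by
        gcongr
        exact abs_chebT_le_one κ hθ
      _ = _ := one_mul _
  have hCa := mul_pos M.C_pos M.a_pos
  rw [M.θ_scale_eq_chebT_add_d_scale]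
  nlinarith [sq_nonneg (M.C * (M.a * M.d (M.τ * l))), mul_le_mul_of_nonneg_left hcross hCa.le,
    mul_le_mul_of_nonneg_right hK (abs_nonneg (M.d (M.τ * l)))]

lemma exists_one_sub_θ_sq_le : ∃ K > 0, ∀ l, 0 < l → 1 - M.θ l ^ 2 ≤ K * |M.d l| := by
  have hκ : 0 < 1 - M.a * κ := sub_pos.2 M.a_mul_lt_one
  set K := max (2 * (M.h + 1)) (2 * M.a * M.C / (1 - M.a * κ))
  have hK : 2 * M.a * M.C ≤ K * (1 - M.a * κ) := (div_le_iff₀ hκ).1 (le_max_right _ _)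
  have hK0 : 0 < K := lt_max_of_lt_left (by linarith [M.h_pos])
  refine ⟨K, hK0, forall_of_scaling M.one_lt_τ ?_ fun l ih hl => ?_⟩
  · filter_upwards [M.eventually_abs_θ_le_one_and_one_sub_θ_sq_le] with l h hl
    exact (h hl).2.trans (by gcongr; exact le_max_left _ _)
  · have hl' := pos_of_mul_pos_right hl M.τ_pos.le
    rcases le_or_gt |M.θ l| 1 with hle | hgt
    · exact M.one_sub_θ_scale_sq_le hK hK0.le hle (ih hl')
    · have hgap := (scale_mem_gap (M.mem_gap_of_one_lt_abs_θ hl' hgt)).1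
      rw [← one_le_sq_iff_one_le_abs] at hgap
      linarith [mul_nonneg hK0.le (abs_nonneg (M.d (M.τ * l)))]

end ScalingMonodromy

namespace ScalingMonodromy

open Filter Topology

variable {κ : ℕ} {M : ScalingMonodromy κ} {α β : ℝ}

section Counting

variable (M) in
/-- The number of zeros of `s`, that is, of Dirichlet eigenvalues, in `(α, β]`. -/
noncomputable def count (α β : ℝ) : ℕ := ({l | M.s l = 0} ∩ Ioc α β).ncard

lemma mapsTo_c_zeros_s : MapsTo M.c {l | M.s l = 0} {1, -1} := fun l hl => by
  have hdet := M.det_eq_one l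
  rw [show M.s l = 0 from hl, zero_mul, sub_zero] at hdet
  exact sq_eq_one_iff.1 hdet

lemma injOn_c_zeros_s (hd : ∀ l ∈ Ioo α β, M.d l ≠ 0) :
    InjOn M.c ({l | M.s l = 0} ∩ Ioo α β) := by
  have hsub : {l | M.s l = 0} ∩ Ioo α β ⊆ Ioo α β ∩ M.c ⁻¹' Icc (-1) 1 := fun l hl => by
    rcases mapsTo_c_zeros_s hl.1 with h | h <;>
      exact ⟨hl.2, by norm_num [mem_preimage, show M.c l = _ from h]⟩
  exact (injOn_of_isPickOn (convex_Ioo α β) hd M.isPickOn).mono hsub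

lemma finite_zeros_s_inter_Ioo (hd : ∀ l ∈ Ioo α β, M.d l ≠ 0) :
    ({l | M.s l = 0} ∩ Ioo α β).Finite :=
  .of_injOn (fun _ hl => mapsTo_c_zeros_s hl.1) (injOn_c_zeros_s hd) (by simp)

lemma eventually_d_ne_zero (l : ℝ) : ∀ᶠ x in 𝓝[≠] l, M.d x ≠ 0 := by
  by_cases hl : M.d l = 0
  · filter_upwards [nhdsWithin_le_nhds (eventually_sign_d hl), self_mem_nhdsWithin] with x hx hxl
    rcases lt_or_gt_of_ne hxl with hlt | hgt
    · exact right_ne_zero_of_mul (hx.2 hlt).ne'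
    · exact right_ne_zero_of_mul (hx.1 hgt).ne
  · exact nhdsWithin_le_nhds (M.continuous_d.continuousAt.eventually_ne hl)

variable (M) in
lemma finite_zeros_s_inter_Icc (α β : ℝ) : ({l | M.s l = 0} ∩ Icc α β).Finite := by
  refine isCompact_Icc.induction_on (p := fun A => ({l | M.s l = 0} ∩ A).Finite) (by simp)
    (fun A B hAB hB => hB.subset (inter_subset_inter_right _ hAB))
    (fun A B hA hB => inter_union_distrib_left _ A B ▸ hA.union hB) fun l _ => ?_
  obtain ⟨δ, hδ, hball⟩ := Metric.mem_nhdsWithin_iff.1 (eventually_d_ne_zero (M := M) l)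
  refine ⟨Ioo (l - δ) (l + δ), mem_nhdsWithin_of_mem_nhds (Ioo_mem_nhds (by linarith)
    (by linarith)), ?_⟩
  rw [Real.ball_eq_Ioo] at hball
  have hleft : ∀ x ∈ Ioo (l - δ) l, M.d x ≠ 0 := fun x hx =>
    hball ⟨⟨hx.1, by linarith [hx.2]⟩, hx.2.ne⟩
  have hright : ∀ x ∈ Ioo l (l + δ), M.d x ≠ 0 := fun x hx =>
    hball ⟨⟨by linarith [hx.1], hx.2⟩, hx.1.ne'⟩
  refine (((finite_zeros_s_inter_Ioo hleft).union (finite_zeros_s_inter_Ioo hright)).union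
    (finite_singleton l)).subset ?_
  rintro x ⟨hs, hx⟩
  rcases lt_trichotomy x l with h | h | h
  exacts [Or.inl (Or.inl ⟨hs, hx.1, h⟩), Or.inr h, Or.inl (Or.inr ⟨hs, h, hx.2⟩)]

variable (M) in
lemma finite_zeros_s_inter_Ioc (α β : ℝ) : ({l | M.s l = 0} ∩ Ioc α β).Finite :=
  (M.finite_zeros_s_inter_Icc α β).subset (inter_subset_inter_right _ Ioc_subset_Icc_self)

lemma count_add_count {γ : ℝ} (hαβ : α ≤ β) (hβγ : β ≤ γ) :
    M.count α γ = M.count α β + M.count β γ := by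
  rw [count, count, count, ← ncard_union_eq ((Ioc_disjoint_Ioc_of_le le_rfl).mono
    inter_subset_right inter_subset_right) (M.finite_zeros_s_inter_Ioc _ _)
    (M.finite_zeros_s_inter_Ioc _ _), ← inter_union_distrib_left, Ioc_union_Ioc_eq_Ioc hαβ hβγ]

lemma sum_count {x : ℕ → ℝ} {n : ℕ} (hx : MonotoneOn x (Iic n)) :
    ∑ i ∈ Finset.range n, M.count (x i) (x (i + 1)) = M.count (x 0) (x n) := by
  induction n with
  | zero => simp [count]
  | succ n ih =>
    rw [Finset.sum_range_succ, ih (hx.mono (Iic_subset_Iic.2 n.le_succ)), ← count_add_count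
      (hx (by simp) (by simp) n.zero_le) (hx (by simp) (by simp) n.le_succ)]

lemma count_le_three (hd : ∀ l ∈ Ioo α β, M.d l ≠ 0) : M.count α β ≤ 3 := by
  have hsub : {l | M.s l = 0} ∩ Ioc α β ⊆ insert β ({l | M.s l = 0} ∩ Ioo α β) := by
    rintro l ⟨hs, hαl, hlβ⟩
    rcases hlβ.eq_or_lt with h | h
    exacts [Or.inl h, Or.inr ⟨hs, hαl, h⟩]
  have hpair : ({1, -1} : Set ℝ).ncard = 2 := ncard_pair (by norm_num)
  have htwo : ({l | M.s l = 0} ∩ Ioo α β).ncard ≤ 2 := hpair ▸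
    ncard_le_ncard_of_injOn M.c (fun l hl => mapsTo_c_zeros_s hl.1) (injOn_c_zeros_s hd)
  calc M.count α β ≤ (insert β ({l | M.s l = 0} ∩ Ioo α β)).ncard :=
        ncard_le_ncard hsub ((finite_zeros_s_inter_Ioo hd).insert β)
    _ ≤ _ := (ncard_insert_le _ _).trans (by omega)

lemma exists_finset_d_scale_ne_zero (hd : ∀ l ∈ Ioo α β, M.d l ≠ 0) :
    ∃ W : Finset ℝ, W.card + 1 ≤ κ ∧ ∀ l ∈ Ioo α β, l ∉ W → M.d (M.τ * l) ≠ 0 := by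
  classical
  set p := Polynomial.Chebyshev.U ℝ ((κ : ℤ) - 1)
  have hκ := M.κ_ne_zero
  have hp : p ≠ 0 := by
    rw [Ne, Polynomial.Chebyshev.U_eq_zero_iff]
    omega
  set Y := Ioo α β ∩ {l | chebU κ (M.θ l) = 0}
  have hmaps : MapsTo M.θ Y p.roots.toFinset := fun l hl =>
    Multiset.mem_toFinset.2 (Polynomial.mem_roots'.2 ⟨hp, hl.2⟩)
  have hsub : Y ⊆ Ioo α β ∩ M.θ ⁻¹' Icc (-1) 1 := fun l hl =>
    ⟨hl.1, abs_le.1 (abs_lt_one_of_chebU_eq_zero hκ hl.2).le⟩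
  have hinj : InjOn M.θ Y :=
    (injOn_of_isPickOn (convex_Ioo α β) hd fun k => M.isPickOn_θ).mono hsub
  have hfin : Y.Finite := .of_injOn hmaps hinj (Finset.finite_toSet _)
  refine ⟨hfin.toFinset, ?_, fun l hl hlY hzero => hlY (hfin.mem_toFinset.2 ⟨hl, ?_⟩)⟩
  · have hcard : Y.ncard ≤ κ - 1 := by
      refine (ncard_le_ncard_of_injOn M.θ hmaps hinj (Finset.finite_toSet _)).trans ?_
      rw [ncard_coe_finset]
      refine (Multiset.toFinset_card_le _).trans ((Polynomial.card_roots' _).trans ?_)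
      simp [p, Polynomial.Chebyshev.natDegree_U]
    rw [← ncard_eq_toFinset_card Y hfin]
    omega
  · have hscale := M.a_mul_d_scale l
    rw [hzero, mul_zero] at hscale
    exact (mul_eq_zero.1 hscale.symm).resolve_right (hd l hl)

lemma count_scale_pow_le (hd : ∀ l ∈ Ioo α β, M.d l ≠ 0) (j : ℕ) :
    M.count (M.τ ^ j * α) (M.τ ^ j * β) ≤ 3 * κ ^ j := by
  induction j generalizing α β with
  | zero => simpa using count_le_three hd
  | succ j ih =>
    obtain ⟨W, hW, hWd⟩ := exists_finset_d_scale_ne_zero hd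
    refine (le_mul_card_add_one_of_forall_notMem (K := 3 * κ ^ j) (p := fun l => M.d (M.τ * l) ≠ 0)
      (N := fun α β => M.count (M.τ ^ (j + 1) * α) (M.τ ^ (j + 1) * β)) (fun h₁ h₂ => ?_)
      (fun {A B} h => ?_) W hWd).trans ?_
    · have hτ := (pow_pos M.τ_pos (j + 1)).le
      exact count_add_count (mul_le_mul_of_nonneg_left h₁ hτ) (mul_le_mul_of_nonneg_left h₂ hτ)
    · rw [pow_succ, mul_assoc, mul_assoc]
      refine ih ?_
      rwa [← image_mul_left_Ioo M.τ_pos, forall_mem_image]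
    · rw [pow_succ, ← mul_assoc]
      gcongr

end Counting

section Crossing

variable (M) in
/-- `α < β` are zeros of `d` at which `c` takes opposite values `±1`. -/
structure IsCrossing (α β : ℝ) : Prop where
  lt : α < β
  d_left : M.d α = 0
  d_right : M.d β = 0
  c_right : M.c β = -M.c α

variable (M) in
/-- `α < β` are consecutive zeros of `d`. -/
structure IsConsecutive (α β : ℝ) : Prop where
  lt : α < β
  d_left : M.d α = 0
  d_right : M.d β = 0
  d_ne_zero : ∀ l ∈ Ioo α β, M.d l ≠ 0

lemma c_ne_zero_of_d_eq_zero {z : ℝ} (hz : M.d z = 0) : M.c z ≠ 0 := fun h => by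
  simpa [h] using c_sq_of_d_eq_zero hz

lemma exists_isConsecutive {z w : ℝ} (hz : M.d z = 0) (hzw : z < w) (hw : M.d w = 0) :
    ∃ z' ≤ w, M.IsConsecutive z z' := by
  obtain ⟨u, hu, hne⟩ := mem_nhdsGT_iff_exists_Ioo_subset.1
    (nhdsWithin_mono z (fun x hx => ne_of_gt hx) (eventually_d_ne_zero (M := M) z))
  obtain ⟨ξ, hzξ, hξ⟩ := exists_between (lt_min hu hzw)
  have hξd : 0 < |M.d ξ| := abs_pos.2 (hne ⟨hzξ, hξ.trans_le (min_le_left _ _)⟩)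
  obtain ⟨x, z', hzx, hxξ, hξz', hz'w, hx, hz', hpos⟩ := exists_excursion (L := 0)
    M.continuous_d.abs.continuousOn ⟨hzξ.le, (hξ.trans_le (min_le_right _ _)).le⟩
    (by simp [hz]) (by simp [hw]) hξd
  obtain rfl : z = x := hzx.eq_of_not_lt fun hlt =>
    hne ⟨hlt, (hxξ.trans hξ).trans_le (min_le_left _ _)⟩ (abs_nonpos_iff.1 hx)
  exact ⟨z', hz'w, hzξ.trans hξz', hz, abs_nonpos_iff.1 hz', fun l hl => abs_pos.1 (hpos l hl)⟩

lemma IsConsecutive.c_mul_d_neg (h : M.IsConsecutive α β) {l : ℝ} (hl : l ∈ Ioo α β) :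
    M.c α * M.d l < 0 := by
  obtain ⟨x, ⟨hx, -⟩, hxI⟩ := (((eventually_sign_d h.d_left).filter_mono
    nhdsWithin_le_nhds).and (Ioo_mem_nhdsGT h.lt)).exists
  by_contra! hnonneg
  obtain ⟨y, hy, hy0⟩ := isPreconnected_Ioo.intermediate_value hxI hl
    (M.continuous_d.const_mul (M.c α)).continuousOn ⟨(hx hxI.1).le, hnonneg⟩
  exact mul_ne_zero (c_ne_zero_of_d_eq_zero h.d_left) (h.d_ne_zero y hy) hy0

lemma IsConsecutive.isCrossing (h : M.IsConsecutive α β) : M.IsCrossing α β := by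
  refine ⟨h.lt, h.d_left, h.d_right, ?_⟩
  obtain ⟨x, ⟨-, hx⟩, hxI⟩ := (((eventually_sign_d h.d_right).filter_mono
    nhdsWithin_le_nhds).and (Ioo_mem_nhdsLT h.lt)).exists
  have hα := h.c_mul_d_neg hxI
  have hβ := hx hxI.2
  rcases sq_eq_one_iff.1 (c_sq_of_d_eq_zero h.d_left) with hcα | hcα <;>
    rcases sq_eq_one_iff.1 (c_sq_of_d_eq_zero h.d_right) with hcβ | hcβ <;>
    rw [hcα] at hα ⊢ <;> rw [hcβ] at hβ ⊢ <;> linarith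

lemma IsCrossing.exists_s_mul_c_pos (h : M.IsCrossing α β) :
    ∃ ζ ∈ Ioo α β, 0 < M.s ζ * M.c α := by
  obtain ⟨z, hzβ, hz⟩ := exists_isConsecutive h.d_left h.lt h.d_right
  have hsq := c_sq_of_d_eq_zero h.d_left
  obtain ⟨ζ, hζ, hcζ⟩ := intermediate_value_Ioo' hz.lt.le
    (M.continuous_c.const_mul (M.c α)).continuousOn
    (show (0 : ℝ) ∈ Ioo _ _ by
      simp only [hz.isCrossing.c_right, mul_neg, ← sq, hsq]
      norm_num)
  replace hcζ := (mul_eq_zero.1 hcζ).resolve_left (c_ne_zero_of_d_eq_zero h.d_left)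
  have hdet := M.det_eq_one ζ
  rw [hcζ] at hdet
  refine ⟨ζ, ⟨hζ.1, hζ.2.trans_le hzβ⟩, pos_of_mul_neg_left (b := M.c α * M.d ζ) ?_
    (hz.c_mul_d_neg hζ).le⟩
  have hprod : M.s ζ * M.c α * (M.c α * M.d ζ) = -1 := by
    linear_combination M.s ζ * M.d ζ * hsq - hdet
  linarith

lemma IsCrossing.count_pos {γ : ℝ} (h : M.IsCrossing α β) (h' : M.IsCrossing β γ) :
    0 < M.count α γ := by
  obtain ⟨ζ, hζ, hpos⟩ := h.exists_s_mul_c_pos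
  obtain ⟨ζ', hζ', hpos'⟩ := h'.exists_s_mul_c_pos
  rw [h.c_right, mul_neg] at hpos'
  obtain ⟨x, hx, hsx⟩ := intermediate_value_Icc' (hζ.2.trans hζ'.1).le
    (M.continuous_s.mul_const (M.c α)).continuousOn ⟨(neg_pos.1 hpos').le, hpos.le⟩
  refine (ncard_pos (M.finite_zeros_s_inter_Ioc _ _)).2 ⟨x, ?_, ?_, ?_⟩
  · exact (mul_eq_zero.1 hsx).resolve_right (c_ne_zero_of_d_eq_zero h.d_left)
  · linarith [hx.1, hζ.1]
  · linarith [hx.2, hζ'.2]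

lemma d_scale_and_c_scale {x ε : ℝ} (hε : ε ^ 2 = 1) {i : ℕ}
    (hx : ε * M.θ x = Real.cos (i * Real.pi / κ))
    (hi : M.d x = 0 ∨ Real.sin (i * Real.pi / κ) ≠ 0) :
    M.d (M.τ * x) = 0 ∧ M.c (M.τ * x) = ε ^ κ * (-1) ^ i := by
  have hκ : (κ : ℝ) ≠ 0 := by exact_mod_cast M.κ_ne_zero
  have hθ : M.θ x = ε * Real.cos (i * Real.pi / κ) := by
    linear_combination ε * hx - M.θ x * hε
  have hcheb := chebT_mul_and_chebU_mul κ hε (Real.cos (i * Real.pi / κ))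
  have hT := chebT_cos κ (i * Real.pi / κ)
  have hU := chebU_cos_mul_sin κ (i * Real.pi / κ)
  rw [mul_div_cancel₀ _ hκ] at hT hU
  rw [Real.sin_nat_mul_pi] at hU
  have hd : M.d (M.τ * x) = 0 := by
    rw [M.d_scale]
    rcases hi with h | h
    · simp [h]
    · rw [hθ, hcheb.2, (mul_eq_zero.1 hU).resolve_right h]
      simp
  refine ⟨hd, ?_⟩
  rw [← θ_of_d_eq_zero hd, M.θ_scale_eq_chebT_add_d_scale, hd, hθ, hcheb.1, hT, Real.cos_nat_mul_pi]
  ring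

lemma IsCrossing.exists_nodes (h : M.IsCrossing α β) :
    ∃ x : ℕ → ℝ, StrictMonoOn x (Iic κ) ∧ x 0 = α ∧ x κ = β ∧
      ∀ i ≤ κ, M.c α * M.θ (x i) = Real.cos (i * Real.pi / κ) := by
  have hκ : 0 < (κ : ℝ) := by exact_mod_cast M.κ_ne_zero.bot_lt
  have hsq := c_sq_of_d_eq_zero h.d_left
  have hα : M.c α * M.θ α = 1 := by rw [θ_of_d_eq_zero h.d_left, ← sq, hsq]
  have hβ : M.c α * M.θ β = -1 := by rw [θ_of_d_eq_zero h.d_right, h.c_right, mul_neg, ← sq, hsq]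
  obtain ⟨x, hanti, hxα, hxβ, hval⟩ := exists_strictAntiOn_rightInverse
    (M.continuous_θ.const_mul (M.c α)) h.lt.le (by rw [hα, hβ]; norm_num)
  simp only [hα, hβ] at hanti hxα hxβ hval
  refine ⟨fun i => x (Real.cos (i * Real.pi / κ)), fun i _ j hj hij =>
    hanti (Real.cos_mem_Icc _) (Real.cos_mem_Icc _) ?_, by simp [hxα], ?_,
    fun i _ => hval _ (Real.cos_mem_Icc _)⟩
  · refine Real.cos_lt_cos_of_nonneg_of_le_pi (by positivity) ?_ (by gcongr)
    rw [div_le_iff₀ hκ, mul_comm]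
    have hjκ : (j : ℝ) ≤ κ := by exact_mod_cast hj
    gcongr
  · simp only [mul_div_cancel_left₀ _ hκ.ne', Real.cos_pi, hxβ]

lemma IsCrossing.exists_subdivision (h : M.IsCrossing α β) :
    ∃ x : ℕ → ℝ, StrictMonoOn x (Iic κ) ∧ x 0 = α ∧ x κ = β ∧
      (∀ i ≤ κ, M.c α * M.θ (x i) = Real.cos (i * Real.pi / κ)) ∧
      ∀ i < κ, M.IsCrossing (M.τ * x i) (M.τ * x (i + 1)) := by
  obtain ⟨x, hx, hx0, hxκ, hθ⟩ := h.exists_nodes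
  have hκ : 0 < (κ : ℝ) := by exact_mod_cast M.κ_ne_zero.bot_lt
  have hnode : ∀ i ≤ κ, M.d (M.τ * x i) = 0 ∧ M.c (M.τ * x i) = M.c α ^ κ * (-1) ^ i :=
    fun i hi => by
    refine d_scale_and_c_scale (c_sq_of_d_eq_zero h.d_left) (hθ i hi) ?_
    rcases Nat.eq_zero_or_pos i with rfl | hi0
    · exact Or.inl (hx0 ▸ h.d_left)
    rcases hi.eq_or_lt with rfl | hiκ
    · exact Or.inl (hxκ ▸ h.d_right)
    refine Or.inr (Real.sin_pos_of_pos_of_lt_pi (by positivity) ?_).ne'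
    rw [div_lt_iff₀ hκ, mul_comm]
    gcongr
  refine ⟨x, hx, hx0, hxκ, hθ, fun i hi => ⟨?_, (hnode i hi.le).1, (hnode (i + 1) hi).1, ?_⟩⟩
  · exact mul_lt_mul_of_pos_left (hx hi.le (show i + 1 ≤ κ from hi) i.lt_succ_self) M.τ_pos
  · rw [(hnode i hi.le).2, (hnode (i + 1) hi).2]
    ring

lemma IsCrossing.le_count (h : M.IsCrossing α β) (j : ℕ) :
    κ ^ j ≤ M.count (M.τ ^ (j + 1) * α) (M.τ ^ (j + 1) * β) := by
  have hκ := M.two_le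
  induction j generalizing α β with
  | zero =>
    obtain ⟨x, hx, rfl, rfl, -, hcross⟩ := h.exists_subdivision
    rw [pow_zero, zero_add, pow_one, count_add_count (β := M.τ * x 2)]
    · exact ((hcross 0 (by omega)).count_pos (hcross 1 (by omega))).trans_le (Nat.le_add_right _ _)
    all_goals
      exact mul_le_mul_of_nonneg_left (hx.monotoneOn (mem_Iic.2 (by omega))
        (mem_Iic.2 (by omega)) (by omega)) M.τ_pos.le
  | succ j ih =>
    obtain ⟨x, hx, rfl, rfl, -, hcross⟩ := h.exists_subdivision
    rw [← sum_count (x := fun i => M.τ ^ (j + 2) * x i) (fun i hi k hk hik =>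
      mul_le_mul_of_nonneg_left (hx.monotoneOn hi hk hik) (pow_pos M.τ_pos _).le), pow_succ' κ]
    calc κ * κ ^ j = (Finset.range κ).card • κ ^ j := by simp
      _ ≤ _ := Finset.card_nsmul_le_sum _ _ _ fun i hi => ?_
    have hle := ih (hcross i (Finset.mem_range.1 hi))
    rwa [← mul_assoc, ← mul_assoc, ← pow_succ] at hle

end Crossing

section CountingLimit

/-- `F` is the renormalized eigenvalue counting function: `F l` is the limit of `κ⁻ᵏ` times the
number of Dirichlet eigenvalues in `(0, τᵏ l]`. -/
def IsCountingLimit (M : ScalingMonodromy κ) (F : ℝ → ℝ) : Prop :=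
  ∀ l, 0 ≤ l → Tendsto (fun k : ℕ => (M.count 0 (M.τ ^ k * l) : ℝ) / κ ^ k) atTop (𝓝 (F l))

namespace IsCountingLimit

variable {F : ℝ → ℝ}

lemma tendsto_sub (hF : M.IsCountingLimit F) (hα : 0 ≤ α) (hαβ : α ≤ β) :
    Tendsto (fun k : ℕ => (M.count (M.τ ^ k * α) (M.τ ^ k * β) : ℝ) / κ ^ k) atTop
      (𝓝 (F β - F α)) := by
  refine ((hF β (hα.trans hαβ)).sub (hF α hα)).congr fun k => ?_
  have hτ := (pow_pos M.τ_pos k).le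
  rw [count_add_count (mul_nonneg hτ hα) (mul_le_mul_of_nonneg_left hαβ hτ)]
  push_cast
  ring

lemma monotoneOn (hF : M.IsCountingLimit F) : MonotoneOn F (Ici 0) := fun _ hα _ _ hαβ =>
  sub_nonneg.1 (ge_of_tendsto' (hF.tendsto_sub hα hαβ) fun _ => by positivity)

lemma map_zero (hF : M.IsCountingLimit F) : F 0 = 0 :=
  tendsto_nhds_unique (hF 0 le_rfl) (by simp [count])

lemma map_scale (hF : M.IsCountingLimit F) {l : ℝ} (hl : 0 ≤ l) : F (M.τ * l) = κ * F l := by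
  have hκ : (κ : ℝ) ≠ 0 := by exact_mod_cast M.κ_ne_zero
  refine tendsto_nhds_unique (hF _ (mul_nonneg M.τ_pos.le hl))
    ((((tendsto_add_atTop_iff_nat 1).2 (hF l hl)).const_mul (κ : ℝ)).congr fun k => ?_)
  rw [pow_succ, pow_succ, mul_assoc]
  field_simp

lemma map_scale_pow (hF : M.IsCountingLimit F) {l : ℝ} (hl : 0 ≤ l) (k : ℕ) :
    F (M.τ ^ k * l) = κ ^ k * F l := by
  induction k with
  | zero => simp
  | succ k ih =>
    rw [pow_succ', mul_assoc, hF.map_scale (mul_nonneg (pow_pos M.τ_pos k).le hl), ih]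
    ring

lemma sub_le_three (hF : M.IsCountingLimit F) (hα : 0 ≤ α) (hαβ : α ≤ β)
    (hd : ∀ l ∈ Ioo α β, M.d l ≠ 0) : F β - F α ≤ 3 := by
  have hκ : 0 < (κ : ℝ) := by exact_mod_cast M.κ_ne_zero.bot_lt
  refine le_of_tendsto' (hF.tendsto_sub hα hαβ) fun k => ?_
  rw [div_le_iff₀ (by positivity)]
  exact_mod_cast count_scale_pow_le hd k

lemma eq_of_scale_mem_gap (hF : M.IsCountingLimit F) (hα : 0 ≤ α) (hαβ : α ≤ β)
    (hgap : ∀ l ∈ Ioo α β, M.τ * l ∈ M.gap) : F α = F β := by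
  have hκ : 1 < (κ : ℝ) := by exact_mod_cast M.two_le
  have hcount : ∀ k : ℕ, M.count (M.τ ^ (k + 1) * α) (M.τ ^ (k + 1) * β) ≤ 3 := fun k => by
    refine count_le_three ?_
    rw [← image_mul_left_Ioo (pow_pos M.τ_pos _), forall_mem_image]
    intro l hl
    rw [pow_succ, mul_assoc]
    exact d_ne_zero_of_mem_gap (scale_pow_mem_gap (hgap l hl) k)
  have hzero : Tendsto (fun k : ℕ => (3 : ℝ) / κ ^ (k + 1)) atTop (𝓝 0) :=
    ((tendsto_pow_atTop_atTop_of_one_lt hκ).comp (tendsto_add_atTop_nat 1)).const_div_atTop 3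
  refine (hF.monotoneOn hα (hα.trans hαβ) hαβ).antisymm (sub_nonpos.1 (le_of_tendsto_of_tendsto'
    ((tendsto_add_atTop_iff_nat 1).2 (hF.tendsto_sub hα hαβ)) hzero fun k => ?_))
  have hle : (M.count (M.τ ^ (k + 1) * α) (M.τ ^ (k + 1) * β) : ℝ) ≤ 3 := by
    exact_mod_cast hcount k
  gcongr

lemma one_div_le_sub_of_isCrossing (hF : M.IsCountingLimit F) (hα : 0 ≤ α)
    (h : M.IsCrossing α β) : 1 / (κ : ℝ) ≤ F β - F α := by
  have hκ : 0 < (κ : ℝ) := by exact_mod_cast M.κ_ne_zero.bot_lt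
  refine ge_of_tendsto' ((tendsto_add_atTop_iff_nat 1).2 (hF.tendsto_sub hα h.lt.le)) fun k => ?_
  rw [div_le_div_iff₀ hκ (by positivity), one_mul, pow_succ]
  gcongr
  exact_mod_cast h.le_count k

lemma one_div_pow_le_sub_of_isCrossing (hF : M.IsCountingLimit F) (hα : 0 ≤ α) (hβ : 0 ≤ β) {k : ℕ}
    (h : M.IsCrossing (M.τ ^ k * α) (M.τ ^ k * β)) : 1 / (κ : ℝ) ^ (k + 1) ≤ F β - F α := by
  have hκ : 0 < (κ : ℝ) := by exact_mod_cast M.κ_ne_zero.bot_lt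
  have hle := hF.one_div_le_sub_of_isCrossing (mul_nonneg (pow_pos M.τ_pos k).le hα) h
  rw [hF.map_scale_pow hα, hF.map_scale_pow hβ, ← mul_sub, div_le_iff₀ hκ] at hle
  rw [div_le_iff₀ (by positivity), pow_succ]
  linarith

end IsCountingLimit

end CountingLimit

end ScalingMonodromy

namespace ScalingMonodromy

open Filter Topology

variable {κ : ℕ} {M : ScalingMonodromy κ} {α β : ℝ}

lemma cos_pi_div_nonneg (M : ScalingMonodromy κ) : 0 ≤ Real.cos (Real.pi / κ) := by
  have hκ : 2 ≤ (κ : ℝ) := by exact_mod_cast M.two_le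
  have hπ := Real.pi_pos
  have hdiv : 0 ≤ Real.pi / κ := by positivity
  exact Real.cos_nonneg_of_neg_pi_div_two_le_of_le (by linarith) (by gcongr)

lemma cos_pi_div_lt_one (M : ScalingMonodromy κ) : Real.cos (Real.pi / κ) < 1 := by
  have hκ : 1 ≤ (κ : ℝ) := by exact_mod_cast M.κ_ne_zero.bot_lt
  rw [← Real.cos_zero]
  exact Real.cos_lt_cos_of_nonneg_of_le_pi le_rfl (div_le_self Real.pi_pos.le hκ) (by positivity)

lemma abs_c_of_d_eq_zero {z : ℝ} (hz : M.d z = 0) : |M.c z| = 1 := by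
  rw [← sq_eq_sq₀ (abs_nonneg _) one_pos.le, sq_abs, c_sq_of_d_eq_zero hz, one_pow]

lemma abs_chebT_θ_le {l : ℝ} (hθ : |M.θ l| ≤ 1) :
    |chebT κ (M.θ l)| ≤ |M.θ (M.τ * l)| + M.C * (κ * |M.d l|) := by
  have hC := M.C_pos
  have hU := abs_chebU_le κ hθ
  calc |chebT κ (M.θ l)| = |M.θ (M.τ * l) - M.C * (chebU κ (M.θ l) * M.d l)| := by
        rw [M.θ_scale, add_sub_cancel_right]
    _ ≤ |M.θ (M.τ * l)| + M.C * (|chebU κ (M.θ l)| * |M.d l|) := by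
        refine (abs_sub _ _).trans_eq ?_
        rw [abs_mul, abs_mul, abs_of_pos hC]
    _ ≤ |M.θ (M.τ * l)| + M.C * (κ * |M.d l|) := by gcongr

lemma one_sub_chebT_θ_sq_le {K l : ℝ} (hK : 1 - M.θ l ^ 2 ≤ K * |M.d l|) (hθ : |M.θ l| ≤ 1) :
    1 - chebT κ (M.θ l) ^ 2 ≤ κ ^ 2 * (K * |M.d l|) := by
  have hU2 : chebU κ (M.θ l) ^ 2 ≤ (κ : ℝ) ^ 2 := by
    rw [← sq_abs]
    gcongr
    exact abs_chebU_le κ hθ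
  rw [one_sub_chebT_sq]
  exact mul_le_mul hU2 hK (sub_nonneg.2 ((sq_le_one_iff_abs_le_one _).2 hθ)) (by positivity)

/- Either `|T_κ(θ l)|` is well above `|θ (τ l)|`, and then the correction term `C U_κ(θ l) d l` is
large, or it is well below `1`, and then the Pell identity keeps `1 - θ l ^ 2 ≤ K |d l|` away from
`0`. -/
variable (M) in
lemma exists_le_abs_d {g : ℝ} (hg0 : 0 ≤ g) (hg1 : g < 1) :
    ∃ D > 0, ∀ l, 0 < l → |M.θ (M.τ * l)| = g → |M.θ l| ≤ 1 ∧ D ≤ |M.d l| := by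
  obtain ⟨K, hK, hKd⟩ := M.exists_one_sub_θ_sq_le
  have hκ : 0 < (κ : ℝ) := by exact_mod_cast M.κ_ne_zero.bot_lt
  have hC := M.C_pos
  refine ⟨min ((1 - g) / 2 / (M.C * κ)) ((1 - ((1 + g) / 2) ^ 2) / (κ ^ 2 * K)),
    lt_min (div_pos (by linarith) (by positivity)) (div_pos (by nlinarith) (by positivity)),
    fun l hl hθτ => ?_⟩
  have hθ : |M.θ l| ≤ 1 := by
    by_contra! h
    linarith [(scale_mem_gap (M.mem_gap_of_one_lt_abs_θ hl h)).1]
  refine ⟨hθ, ?_⟩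
  rcases le_total ((1 + g) / 2) |chebT κ (M.θ l)| with hT | hT
  · refine (min_le_left _ _).trans ((div_le_iff₀ (by positivity)).2 ?_)
    linarith [hθτ ▸ abs_chebT_θ_le hθ]
  · refine (min_le_right _ _).trans ((div_le_iff₀ (by positivity)).2 ?_)
    have hT2 : chebT κ (M.θ l) ^ 2 ≤ ((1 + g) / 2) ^ 2 := by
      rw [← sq_abs]
      gcongr
    linarith [one_sub_chebT_θ_sq_le (hKd l hl) hθ]

section Nodes

lemma IsCrossing.exists_first_node (h : M.IsCrossing α β) :
    ∃ x y, α < x ∧ x < y ∧ y ≤ β ∧ M.c α * M.θ x = Real.cos (Real.pi / κ) ∧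
      M.IsCrossing (M.τ * α) (M.τ * x) ∧ M.IsCrossing (M.τ * x) (M.τ * y) := by
  obtain ⟨x, hx, rfl, rfl, hθ, hcross⟩ := h.exists_subdivision
  have hκ := M.two_le
  have hmem : ∀ {i}, i ≤ 2 → i ∈ Iic κ := fun hi => hi.trans hκ
  exact ⟨x 1, x 2, hx (hmem zero_le_two) (hmem one_le_two) one_pos,
    hx (hmem one_le_two) (hmem le_rfl) one_lt_two,
    hx.monotoneOn (hmem le_rfl) self_mem_Iic hκ, by simpa using hθ 1 (by omega),
    hcross 0 (by omega), hcross 1 (by omega)⟩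

lemma IsCrossing.exists_last_node (h : M.IsCrossing α β) :
    ∃ x ∈ Ioo α β, M.c α * M.θ x = -Real.cos (Real.pi / κ) ∧
      M.IsCrossing (M.τ * x) (M.τ * β) := by
  obtain ⟨x, hx, rfl, rfl, hθ, hcross⟩ := h.exists_subdivision
  have hκ := M.two_le
  obtain ⟨j, rfl⟩ : ∃ j, κ = j + 1 := ⟨κ - 1, by omega⟩
  have hcos : Real.cos (j * Real.pi / (j + 1 : ℕ)) = -Real.cos (Real.pi / (j + 1 : ℕ)) := by
    rw [← Real.cos_pi_sub]
    congr 1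
    push_cast
    field_simp
    ring
  exact ⟨x j, ⟨hx (mem_Iic.2 (by omega)) (mem_Iic.2 (by omega)) (by omega),
    hx (mem_Iic.2 (by omega)) (mem_Iic.2 (by omega)) (by omega)⟩,
    (hθ j (by omega)).trans hcos, hcross j (by omega)⟩

lemma IsCrossing.exists_flanked_node (h : M.IsCrossing α β) :
    ∃ p x q, α < p ∧ p < x ∧ x < q ∧ q < β ∧ M.c α * M.θ x = Real.cos (Real.pi / κ) ∧
      |M.θ (M.τ * p)| = Real.cos (Real.pi / κ) ∧ |M.θ (M.τ * q)| = Real.cos (Real.pi / κ) ∧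
      M.IsCrossing (M.τ ^ 2 * p) (M.τ ^ 2 * x) ∧ M.IsCrossing (M.τ ^ 2 * x) (M.τ ^ 2 * q) := by
  have hτ := M.τ_pos
  obtain ⟨x, y, -, -, hyβ, hθx, hleft, hright⟩ := h.exists_first_node
  obtain ⟨p, ⟨hαp, hpx⟩, hθp, hcrossp⟩ := hleft.exists_last_node
  obtain ⟨q, r, hxq, hqr, hry, hθq, hcrossq, -⟩ := hright.exists_first_node
  obtain ⟨p, rfl⟩ : ∃ u, p = M.τ * u := ⟨p / M.τ, (mul_div_cancel₀ _ hτ.ne').symm⟩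
  obtain ⟨q, rfl⟩ : ∃ u, q = M.τ * u := ⟨q / M.τ, (mul_div_cancel₀ _ hτ.ne').symm⟩
  have hqy := hqr.trans_le hry
  rw [mul_lt_mul_iff_right₀ hτ] at hαp hpx hxq hqy
  simp only [sq, mul_assoc]
  refine ⟨p, x, q, hαp, hpx, hxq, hqy.trans_le hyβ, hθx, ?_, ?_, hcrossp, hcrossq⟩
  · rw [← one_mul |M.θ _|, ← abs_c_of_d_eq_zero hleft.d_left, ← abs_mul, hθp, abs_neg,
      abs_of_nonneg M.cos_pi_div_nonneg]
  · rw [← one_mul |M.θ _|, ← abs_c_of_d_eq_zero hright.d_left, ← abs_mul, hθq,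
      abs_of_nonneg M.cos_pi_div_nonneg]

end Nodes

section GapBelowNode

variable {ε l : ℝ}

lemma mul_θ_le_one (hε : ε ^ 2 = 1) (hl : 0 < l) (hd : ε * M.d l < 0) (hθ : 0 < ε * M.θ l) :
    ε * M.θ l ≤ 1 := by
  have habs : |ε| = 1 := (sq_eq_sq₀ (abs_nonneg _) one_pos.le).1 (by rw [sq_abs, hε, one_pow])
  rcases M.abs_θ_le_one_or_pos hl with hle | hpos
  · refine (le_abs_self _).trans ?_
    rwa [abs_mul, habs, one_mul]
  · have hprod : (ε * M.θ l) * (ε * M.d l) = M.θ l * M.d l := by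
      linear_combination M.θ l * M.d l * hε
    linarith [mul_neg_of_pos_of_neg hθ hd]

lemma chebU_θ_mul_d (hε : ε ^ 2 = 1) :
    chebU κ (M.θ l) * M.d l = ε ^ κ * (chebU κ (ε * M.θ l) * (ε * M.d l)) := by
  have hθ : M.θ l = ε * (ε * M.θ l) := by linear_combination -M.θ l * hε
  conv_lhs => rw [hθ]
  linear_combination M.d l * (chebT_mul_and_chebU_mul κ hε (ε * M.θ l)).2

lemma θ_scale_of_sq_eq_one (hε : ε ^ 2 = 1) :
    M.θ (M.τ * l) =
      ε ^ κ * (chebT κ (ε * M.θ l) + M.C * (chebU κ (ε * M.θ l) * (ε * M.d l))) := by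
  have hθ : M.θ l = ε * (ε * M.θ l) := by linear_combination -M.θ l * hε
  have hT : chebT κ (M.θ l) = ε ^ κ * chebT κ (ε * M.θ l) := by
    conv_lhs => rw [hθ]
    exact (chebT_mul_and_chebU_mul κ hε _).1
  rw [M.θ_scale, chebU_θ_mul_d hε, hT]
  ring

lemma scale_mem_gap_of_mul_sub_le (hε : ε ^ 2 = 1) (hl : 0 < l) (hd : ε * M.d l < 0)
    (hlow : Real.cos (Real.pi / κ) < ε * M.θ l)
    (hup : κ * (ε * M.θ l - Real.cos (Real.pi / κ)) ≤ M.C * -(ε * M.d l)) : M.τ * l ∈ M.gap := by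
  have hv1 := mul_θ_le_one hε hl hd (M.cos_pi_div_nonneg.trans_lt hlow)
  have hUd := chebU_θ_mul_d (M := M) (l := l) hε
  have hθτ := θ_scale_of_sq_eq_one (M := M) (l := l) hε
  set v := ε * M.θ l
  set w := -(ε * M.d l) with hw
  have hU := chebU_pos M.κ_ne_zero hlow hv1
  have hle : chebT κ v - M.C * (chebU κ v * w) ≤ -1 := by
    linarith [one_add_chebT_le M.κ_ne_zero hlow hv1, mul_le_mul_of_nonneg_left hup hU.le]
  have hεκ : (ε ^ κ) ^ 2 = 1 := by rw [← pow_mul, mul_comm, pow_mul, hε, one_pow]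
  refine ⟨?_, ?_⟩
  · rw [← sq_le_sq₀ zero_le_one (abs_nonneg _), sq_abs, hθτ, mul_pow, hεκ]
    nlinarith
  · have hprod : M.θ (M.τ * l) * M.d (M.τ * l) =
        -(chebT κ v - M.C * (chebU κ v * w)) * (chebU κ v * w) / M.a := by
      rw [M.d_scale, hUd, hθτ, hw]
      linear_combination (chebT κ v + M.C * (chebU κ v * (ε * M.d l))) *
        (chebU κ v * (ε * M.d l)) / M.a * hεκ
    rw [hprod]
    exact div_pos (mul_pos (by linarith) (mul_pos hU (neg_pos.2 hd))) M.a_pos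

variable (M) in
/-- The quotient `(θ l - c z cos (π / κ)) / d l` for a zero `z` of `d`. It increases between `z` and
the next zero of `d`, and vanishes where the first subband above `z` ends. -/
noncomputable def nodeQuotient (z l : ℝ) : ℝ := (M.θ l - M.c z * Real.cos (Real.pi / κ)) / M.d l

variable {z z' x : ℝ}

lemma isPickOn_nodeQuotient (hz : M.d z = 0) : IsPickOn (M.nodeQuotient z) {l | M.d l ≠ 0} :=
  M.isPickOn_θ <| abs_le.1 <| by
    rw [abs_mul, abs_c_of_d_eq_zero hz, one_mul]
    exact Real.abs_cos_le_one _

lemma IsConsecutive.strictMonoOn_nodeQuotient (h : M.IsConsecutive z z') :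
    StrictMonoOn (M.nodeQuotient z) (Ioo z z') :=
  ((isPickOn_nodeQuotient h.d_left).mono h.d_ne_zero).strictMonoOn (convex_Ioo z z')

lemma c_mul_θ_sub_cos (hz : M.d z = 0) (hl : M.d l ≠ 0) :
    M.c z * M.θ l - Real.cos (Real.pi / κ) = M.nodeQuotient z l * (M.c z * M.d l) := by
  rw [nodeQuotient, mul_left_comm, div_mul_cancel₀ _ hl]
  linear_combination Real.cos (Real.pi / κ) * c_sq_of_d_eq_zero hz

lemma nodeQuotient_eq_of_add_mul_eq_zero {g : ℝ} (hz : M.d z = 0) (hl : M.d l ≠ 0)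
    (hg : M.c z * M.θ l - Real.cos (Real.pi / κ) + g * (M.c z * M.d l) = 0) :
    M.nodeQuotient z l = -g := by
  have hne := mul_ne_zero (c_ne_zero_of_d_eq_zero hz) hl
  refine mul_right_cancel₀ hne ?_
  linear_combination hg - c_mul_θ_sub_cos hz hl

lemma IsConsecutive.exists_nodeQuotient_eq {g : ℝ} (h : M.IsConsecutive z z') (hg : 0 < g)
    (hx : x ∈ Ioo z z') (hθ : M.c z * M.θ x = Real.cos (Real.pi / κ)) :
    ∃ y ∈ Ioo z x, M.nodeQuotient z y = -g := by
  have hcont : Continuous fun l =>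
      M.c z * M.θ l - Real.cos (Real.pi / κ) + g * (M.c z * M.d l) := by
    have := M.continuous_θ
    have := M.continuous_d
    fun_prop
  obtain ⟨y, hy, hy0⟩ := intermediate_value_Ioo' hx.1.le hcont.continuousOn
    (show (0 : ℝ) ∈ Ioo _ _ by
      constructor
      · rw [hθ, sub_self, zero_add]
        exact mul_neg_of_pos_of_neg hg (h.c_mul_d_neg hx)
      · rw [θ_of_d_eq_zero h.d_left, h.d_left, ← sq, c_sq_of_d_eq_zero h.d_left]
        linarith [M.cos_pi_div_lt_one])
  exact ⟨y, hy, nodeQuotient_eq_of_add_mul_eq_zero h.d_left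
    (h.d_ne_zero y ⟨hy.1, hy.2.trans hx.2⟩) hy0⟩

lemma IsConsecutive.scale_mem_gap_of_nodeQuotient (h : M.IsConsecutive z z') (hz : 0 ≤ z)
    (hl : l ∈ Ioo z z') (hlow : -(M.C / κ) ≤ M.nodeQuotient z l) (hneg : M.nodeQuotient z l < 0) :
    M.τ * l ∈ M.gap := by
  have hκ : 0 < (κ : ℝ) := by exact_mod_cast M.κ_ne_zero.bot_lt
  have hd := h.c_mul_d_neg hl
  have hsub := c_mul_θ_sub_cos h.d_left (h.d_ne_zero l hl)
  refine scale_mem_gap_of_mul_sub_le (c_sq_of_d_eq_zero h.d_left) (hz.trans_lt hl.1) hd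
    (sub_pos.1 (hsub ▸ mul_pos_of_neg_of_neg hneg hd)) ?_
  rw [hsub, ← le_div_iff₀' hκ, mul_div_right_comm]
  linarith [mul_le_mul_of_nonpos_right hlow hd.le]

lemma nodeQuotient_eq_zero (hz : M.d z = 0) (hθ : M.c z * M.θ x = Real.cos (Real.pi / κ)) :
    M.nodeQuotient z x = 0 :=
  div_eq_zero_iff.2 <| Or.inl <| by
    linear_combination M.c z * hθ - M.θ x * c_sq_of_d_eq_zero hz

lemma IsConsecutive.exists_scale_mem_gap (h : M.IsConsecutive z z') (hz : 0 ≤ z)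
    (hx : x ∈ Ioo z z') (hθ : M.c z * M.θ x = Real.cos (Real.pi / κ)) :
    ∃ y ∈ Ioo z x, M.nodeQuotient z y = -(M.C / κ) ∧ ∀ l ∈ Ioo y x, M.τ * l ∈ M.gap := by
  have hκ : 0 < (κ : ℝ) := by exact_mod_cast M.κ_ne_zero.bot_lt
  obtain ⟨y, hy, hmy⟩ := h.exists_nodeQuotient_eq (div_pos M.C_pos hκ) hx hθ
  refine ⟨y, hy, hmy, fun l hl => ?_⟩
  have hlI : l ∈ Ioo z z' := ⟨hy.1.trans hl.1, hl.2.trans hx.2⟩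
  have hmono := h.strictMonoOn_nodeQuotient
  refine h.scale_mem_gap_of_nodeQuotient hz hlI ?_ ?_
  · exact hmy ▸ (hmono ⟨hy.1, hy.2.trans hx.2⟩ hlI hl.1).le
  · exact nodeQuotient_eq_zero h.d_left hθ ▸ hmono hlI hx hl.2

variable (M) in
lemma exists_abs_nodeQuotient_le :
    ∃ B > 0, ∀ z l, M.d z = 0 → 0 < l → |M.θ (M.τ * l)| = Real.cos (Real.pi / κ) →
      |M.nodeQuotient z l| ≤ B := by
  obtain ⟨D, hD, hDd⟩ := M.exists_le_abs_d M.cos_pi_div_nonneg M.cos_pi_div_lt_one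
  refine ⟨2 / D, by positivity, fun z l hz hl hθl => ?_⟩
  obtain ⟨hθ, hd⟩ := hDd l hl hθl
  have hcos : |M.c z * Real.cos (Real.pi / κ)| ≤ 1 := by
    rw [abs_mul, abs_c_of_d_eq_zero hz, one_mul]
    exact Real.abs_cos_le_one _
  rw [nodeQuotient, abs_div]
  gcongr
  linarith [abs_sub (M.θ l) (M.c z * Real.cos (Real.pi / κ))]

end GapBelowNode

namespace IsCountingLimit

variable {F : ℝ → ℝ} {x : ℝ}

lemma exists_hasPlateau (hF : M.IsCountingLimit F) :
    ∃ γ > 0, ∀ z z', 0 ≤ z → M.IsConsecutive z z' → HasPlateau F γ (1 / κ ^ 3) z z' := by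
  have hκ : 0 < (κ : ℝ) := by exact_mod_cast M.κ_ne_zero.bot_lt
  have hCκ : 0 < M.C / κ := div_pos M.C_pos hκ
  obtain ⟨B, hB, hbound⟩ := M.exists_abs_nodeQuotient_le
  refine ⟨M.C / κ / B, by positivity, fun z z' hz h => ?_⟩
  obtain ⟨p, x, q, hzp, hpx, hxq, hqz', hθx, hθp, hθq, hcrossp, hcrossq⟩ :=
    h.isCrossing.exists_flanked_node
  obtain ⟨y, hy, hmy, hgap⟩ := h.exists_scale_mem_gap hz ⟨hzp.trans hpx, hxq.trans hqz'⟩ hθx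
  have hflat := hF.eq_of_scale_mem_gap (hz.trans hy.1.le) hy.2.le hgap
  have hleft := hF.one_div_pow_le_sub_of_isCrossing (hz.trans hzp.le) (by linarith) hcrossp
  have hright := hF.one_div_pow_le_sub_of_isCrossing (by linarith) (by linarith) hcrossq
  have hpy : p < y := by
    by_contra! hyp
    have hle := hF.monotoneOn (hz.trans hy.1.le) (hz.trans hzp.le) hyp
    have hpos : 0 < 1 / (κ : ℝ) ^ 3 := by positivity
    linarith
  refine ⟨p, y, x, q, hzp, hpy, hy.2, hxq, hqz', hflat, hflat ▸ hleft, hright, ?_⟩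
  have hmx := nodeQuotient_eq_zero h.d_left hθx
  have hmp := neg_le_of_abs_le (hbound z p h.d_left (by linarith) hθp)
  have hmq := le_of_abs_le (hbound z q h.d_left (by linarith) hθq)
  have hdistortion := (isPickOn_nodeQuotient h.d_left).mul_sub_le_or (B := B) hpy hy.2 hxq
    (fun l hl => h.d_ne_zero l ⟨hzp.trans_le hl.1, hl.2.trans_lt hqz'⟩)
    (by linarith) (by linarith)
  rw [hmx, hmy, sub_neg_eq_add, zero_add] at hdistortion
  simpa only [div_mul_eq_mul_div _ B, div_le_iff₀' hB] using hdistortion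

lemma exists_d_eq_zero (hF : M.IsCountingLimit F) (hx : 0 ≤ x) (hFx : 0 < F x) {l : ℝ}
    (hl : 0 ≤ l) : ∃ w > l, M.d w = 0 := by
  by_contra! hne
  have hκ : 1 < (κ : ℝ) := by exact_mod_cast M.two_le
  obtain ⟨j, hj⟩ := ((tendsto_pow_atTop_atTop_of_one_lt hκ).atTop_mul_const hFx).eventually_gt_atTop
    (F l + 3) |>.exists
  have hscaled : 0 ≤ M.τ ^ j * x := mul_nonneg (pow_pos M.τ_pos j).le hx
  have hmono := hF.monotoneOn hscaled (hl.trans (le_max_left l (M.τ ^ j * x))) (le_max_right _ _)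
  rw [hF.map_scale_pow hx] at hmono
  linarith [hF.sub_le_three hl (le_max_left l (M.τ ^ j * x)) fun w hw => hne w hw.1]

lemma exists_isConsecutive_around (hF : M.IsCountingLimit F) (hx : 0 ≤ x) (hFx : 0 < F x) {l : ℝ}
    (hl : 0 ≤ l) : ∃ z z', 0 ≤ z ∧ z ≤ l ∧ l < z' ∧ M.IsConsecutive z z' := by
  obtain ⟨z, ⟨hdz, hz⟩, hgreatest⟩ := (isCompact_Icc.inter_left
    (isClosed_singleton.preimage M.continuous_d)).exists_isGreatest ⟨0, M.d_zero, le_rfl, hl⟩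
  obtain ⟨w, hlw, hdw⟩ := hF.exists_d_eq_zero hx hFx hl
  obtain ⟨z', -, hzz'⟩ := exists_isConsecutive hdz (hz.2.trans_lt hlw) hdw
  refine ⟨z, z', hz.1, hz.2, ?_, hzz'⟩
  by_contra! hz'l
  exact hzz'.lt.not_ge (hgreatest ⟨hzz'.d_right, hz.1.trans hzz'.lt.le, hz'l⟩)

lemma exists_isConsecutive_scale_pow (hF : M.IsCountingLimit F) (hx : 0 ≤ x) (hFx : 0 < F x)
    (k : ℕ) : ∃ z z', 0 ≤ z ∧ z ≤ x ∧ x < z' ∧ M.IsConsecutive (M.τ ^ k * z) (M.τ ^ k * z') ∧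
      F z' - F z ≤ 3 / κ ^ k := by
  have hκ : 0 < (κ : ℝ) := by exact_mod_cast M.κ_ne_zero.bot_lt
  have hτ : 0 < M.τ ^ k := pow_pos M.τ_pos k
  obtain ⟨z, z', hz, hzx, hxz', h⟩ := hF.exists_isConsecutive_around hx hFx (mul_nonneg hτ.le hx)
  have hthree := hF.sub_le_three hz h.lt.le h.d_ne_zero
  obtain ⟨z, rfl⟩ : ∃ u, z = M.τ ^ k * u := ⟨z / M.τ ^ k, (mul_div_cancel₀ _ hτ.ne').symm⟩
  obtain ⟨z', rfl⟩ : ∃ u, z' = M.τ ^ k * u := ⟨z' / M.τ ^ k, (mul_div_cancel₀ _ hτ.ne').symm⟩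
  rw [mul_nonneg_iff_of_pos_left hτ] at hz
  rw [mul_le_mul_iff_right₀ hτ] at hzx
  rw [mul_lt_mul_iff_right₀ hτ] at hxz'
  rw [hF.map_scale_pow hz, hF.map_scale_pow (hx.trans hxz'.le), ← mul_sub] at hthree
  exact ⟨z, z', hz, hzx, hxz', h, (le_div_iff₀' (by positivity)).2 hthree⟩

theorem not_hasDerivAt (hF : M.IsCountingLimit F) {ρ : ℝ} (hx : 0 < x) (hρ : 0 < ρ) :
    ¬HasDerivAt F ρ x := by
  intro hderiv
  have hκ : 1 < (κ : ℝ) := by exact_mod_cast M.two_le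
  obtain ⟨γ, hγ, hplateau⟩ := hF.exists_hasPlateau
  refine not_hasDerivAt_of_hasPlateau hγ (K := 3 * κ ^ 3) (by positivity) hρ (fun δ hδ => ?_) hderiv
  obtain ⟨⟨u, hu, huF⟩, v, hv, hvF⟩ := exists_lt_and_lt_of_hasDerivAt_pos hderiv hρ (lt_min hδ hx)
  have hu0 : 0 ≤ u := by linarith [min_le_right δ x, hu.1]
  have hFx : 0 < F x := (hF.map_zero ▸ hF.monotoneOn self_mem_Ici hu0 hu0).trans_lt huF
  obtain ⟨k, hk⟩ := ((tendsto_pow_atTop_atTop_of_one_lt hκ).const_div_atTop 3).eventually_lt_const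
    (lt_min (sub_pos.2 huF) (sub_pos.2 hvF)) |>.exists
  obtain ⟨hku, hkv⟩ := lt_min_iff.1 hk
  obtain ⟨z, z', hz, hzx, hxz', h, hinc⟩ := hF.exists_isConsecutive_scale_pow hx.le hFx k
  have hz' : 0 ≤ z' := hx.le.trans hxz'.le
  have hFz := hF.monotoneOn hz hx.le hzx
  have hFz' := hF.monotoneOn hx.le hz' hxz'.le
  have huz : u < z := lt_of_not_ge fun hzu => by linarith [hF.monotoneOn hz hu0 hzu]
  have hzv : z' < v := lt_of_not_ge fun hvz => by
    linarith [hF.monotoneOn (hx.le.trans hv.1.le) hz' hvz]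
  refine ⟨z, z', 1 / κ ^ 3 / κ ^ k, by linarith [min_le_left δ x, hu.1], hzx, hxz',
    by linarith [min_le_left δ x, hv.2], by positivity, hinc.trans_eq (by field_simp), ?_⟩
  refine HasPlateau.of_scale (pow_pos M.τ_pos k) (pow_pos (one_pos.trans hκ) k) hz
    (fun l hl => hF.map_scale_pow hl k) ?_
  rw [mul_div_cancel₀ _ (by positivity)]
  exact hplateau _ _ (mul_nonneg (pow_pos M.τ_pos k).le hz) h

end IsCountingLimit

end ScalingMonodromy

section CantorFunction

/-- `P` is the continuous distribution function of the measure `μ`, which is carried by `[0, 1]`. -/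
structure IsDistributionFunction (P : ℝ → ℝ) (μ : Measure ℝ) : Prop where
  continuousOn : ContinuousOn P (Icc 0 1)
  monotoneOn : MonotoneOn P (Icc 0 1)
  map_zero : P 0 = 0
  map_one : P 1 = 1
  measure_Icc : ∀ x ∈ Icc (0 : ℝ) 1, μ (Icc 0 x) = ENNReal.ofReal (P x)
  measure_compl : μ (Icc (0 : ℝ) 1)ᶜ = 0

namespace IsDistributionFunction

variable {P : ℝ → ℝ} {μ : Measure ℝ}

lemma isProbabilityMeasure (h : IsDistributionFunction P μ) : IsProbabilityMeasure μ where
  measure_univ := by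
    rw [← measure_add_measure_compl (measurableSet_Icc (a := (0 : ℝ)) (b := 1)), h.measure_compl,
      h.measure_Icc 1 (by simp), h.map_one, ENNReal.ofReal_one, add_zero]

lemma measure_Ioc (h : IsDistributionFunction P μ) {x y : ℝ} (hx : 0 ≤ x) (hxy : x ≤ y)
    (hy : y ≤ 1) : μ (Ioc x y) = ENNReal.ofReal (P y - P x) := by
  have := h.isProbabilityMeasure
  have hPx : 0 ≤ P x := h.map_zero ▸ h.monotoneOn (by simp) ⟨hx, hxy.trans hy⟩ hx
  have hdiff : Ioc x y = Icc 0 y \ Icc 0 x := by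
    ext t
    simp only [mem_Ioc, mem_sdiff, mem_Icc]
    grind
  rw [hdiff, measure_sdiff (Icc_subset_Icc_right hxy) measurableSet_Icc.nullMeasurableSet
    (measure_ne_top _ _), h.measure_Icc y ⟨hx.trans hxy, hy⟩, h.measure_Icc x ⟨hx, hxy.trans hy⟩,
    ENNReal.ofReal_sub _ hPx]

lemma measure_singleton_le (h : IsDistributionFunction P μ) {x y : ℝ} (hy : 0 ≤ y) (hyx : y < x)
    (hx : x ≤ 1) : μ {x} ≤ ENNReal.ofReal (P x - P y) :=
  have hsub : {x} ⊆ Ioc y x := singleton_subset_iff.2 ⟨hyx, le_rfl⟩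
  (measure_mono hsub).trans_eq (h.measure_Ioc hy hyx.le hx)

lemma nullSingletonClass (h : IsDistributionFunction P μ) : NullSingletonClass μ where
  measure_singleton x := by
    by_cases hx : x ∈ Icc (0 : ℝ) 1
    swap
    · exact measure_mono_null (singleton_subset_iff.2 hx) h.measure_compl
    rcases hx.1.eq_or_lt with rfl | hx0
    · simpa [h.map_zero] using h.measure_Icc 0 hx
    have hlim : Filter.Tendsto (fun y => ENNReal.ofReal (P x - P y)) (nhdsWithin x (Ico 0 x))
        (nhds 0) := by
      have hcont : ContinuousWithinAt P (Ico 0 x) x :=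
        (h.continuousOn x hx).mono fun t ht => ⟨ht.1, ht.2.le.trans hx.2⟩
      simpa using ENNReal.tendsto_ofReal (hcont.tendsto.const_sub (P x))
    have : (nhdsWithin x (Ico 0 x)).NeBot := by
      rw [← mem_closure_iff_nhdsWithin_neBot, closure_Ico hx0.ne]
      exact ⟨hx0.le, le_rfl⟩
    exact nonpos_iff_eq_zero.1 <| ge_of_tendsto hlim <| Filter.eventually_of_mem
      self_mem_nhdsWithin fun y hy => h.measure_singleton_le hy.1 hy.2 hx.2

lemma restrict_Ioc_eq_smul_map (h : IsDistributionFunction P μ) {r α a c : ℝ} (hr : 0 < r)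
    (ha : 0 < a) (hα : 0 ≤ α) (hα1 : α + a ≤ 1)
    (hc : ∀ x ∈ Icc (0 : ℝ) 1, r * P (α + a * x) = P x + c) :
    μ.restrict (Ioc α (α + a)) =
      (ENNReal.ofReal r)⁻¹ • (μ.restrict (Ioc 0 1)).map fun x => α + a * x := by
  have := h.isProbabilityMeasure
  have hφ : Measurable fun x : ℝ => α + a * x := by fun_prop
  refine Measure.ext_of_Iic _ _ fun q => ?_
  obtain ⟨q, rfl⟩ : ∃ u, q = α + a * u := ⟨(q - α) / a, by field_simp; ring⟩
  have hpre : (fun x => α + a * x) ⁻¹' Iic (α + a * q) = Iic q := by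
    ext x
    simp [ha]
  have hmin : min (α + a) (α + a * q) = α + a * min 1 q := by
    rw [mul_min_of_nonneg _ _ ha.le, mul_one, min_add_add_left]
  rw [Measure.smul_apply, Measure.map_apply hφ measurableSet_Iic,
    Measure.restrict_apply measurableSet_Iic, hpre, Measure.restrict_apply measurableSet_Iic,
    smul_eq_mul, inter_comm, Ioc_inter_Iic, inter_comm, Ioc_inter_Iic, hmin]
  rcases le_total (min 1 q) 0 with hu | hu
  · rw [Ioc_eq_empty_of_le hu, Ioc_eq_empty_of_le (by nlinarith), measure_empty, mul_zero]
  have hu1 : min 1 q ≤ 1 := min_le_left _ _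
  rw [h.measure_Ioc hα (by nlinarith) (by nlinarith), h.measure_Ioc le_rfl hu hu1,
    ← ENNReal.ofReal_inv_of_pos hr, ← ENNReal.ofReal_mul (inv_nonneg.2 hr.le)]
  have hcu := hc _ ⟨hu, hu1⟩
  have hc0 := hc 0 (by simp)
  rw [mul_zero, add_zero] at hc0
  congr 1
  field_simp
  linarith

lemma measure_Ioc_eq_zero (h : IsDistributionFunction P μ) {x y c : ℝ} (hx : 0 ≤ x) (hxy : x < y)
    (hy : y ≤ 1) (hc : ∀ t ∈ Ioo x y, P t = c) : μ (Ioc x y) = 0 := by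
  have hconst : EqOn P (fun _ => c) (Icc x y) :=
    EqOn.of_subset_closure hc (h.continuousOn.mono (Icc_subset_Icc hx hy)) continuousOn_const
      Ioo_subset_Icc_self (closure_Ioo hxy.ne).superset
  rw [h.measure_Ioc hx hxy.le hy, hconst ⟨hxy.le, le_rfl⟩, hconst ⟨le_rfl, hxy.le⟩, sub_self,
    ENNReal.ofReal_zero]

lemma isCantorMeasure {κ : ℕ} {a b : ℝ} (h : IsDistributionFunction P μ) (hP : CantorType κ a b P)
    (hκ : 2 ≤ κ) (ha : 0 < a) (ha' : a < 1 / κ) (hb : b = (1 - κ * a) / (κ - 1)) :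
    IsCantorMeasure κ a b μ := by
  obtain ⟨-, -, -, hgap, hblock⟩ := hP
  have hκ' : (2 : ℝ) ≤ κ := by exact_mod_cast hκ
  have hb0 : 0 < b := hb ▸ div_pos
    (sub_pos.2 ((lt_div_iff₀' (by linarith)).1 ha')) (by linarith)
  have hlength : (κ - 1) * (a + b) + a = 1 := by
    rw [hb]
    field_simp [show (κ : ℝ) - 1 ≠ 0 by linarith]
    ring
  have hle : ∀ k : ℕ, k + 1 ≤ κ → (k : ℝ) * (a + b) ≤ (κ - 1) * (a + b) := fun k hk => by
    have : (k : ℝ) + 1 ≤ κ := by exact_mod_cast hk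
    gcongr
    linarith
  refine ⟨hκ, ha, hb0, hlength, ?_, fun k hk => ?_, fun k hk => ?_⟩
  · rw [h.measure_Ioc le_rfl zero_le_one le_rfl, h.map_one, h.map_zero, sub_zero,
      ENNReal.ofReal_one]
  · obtain ⟨c, hc⟩ := hblock k (by omega)
    rw [h.restrict_Ioc_eq_smul_map (by positivity) ha (by positivity) (by linarith [hle k hk]) hc,
      ENNReal.ofReal_natCast]
  · obtain ⟨c, hc⟩ := hgap (k + 1) (by omega) (by omega)
    have hk1 := hle (k + 1) hk
    push_cast at hc hk1
    rw [add_sub_cancel_right] at hc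
    exact h.measure_Ioc_eq_zero (by positivity) (by linarith) (by linarith) hc

end IsDistributionFunction

end CantorFunction

section Eigenvalues

variable {μ : Measure ℝ} [NullSingletonClass μ] {l : ℝ}

lemma exists_isSolution_of_continuousOn {y g : ℝ → ℝ} (hy : ContinuousOn y (Icc 0 1))
    (hg : ContinuousOn g (Icc 0 1)) (hyg : ∀ x ∈ Icc (0 : ℝ) 1, y x = y 0 + ∫ t in 0..x, g t)
    (hgy : ∀ x ∈ Icc (0 : ℝ) 1, g x = g 0 - l * ∫ t in Icc 0 x, y t ∂μ) :
    ∃ y' g', IsSolution μ l y' g' ∧ EqOn y' y (Icc 0 1) := by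
  let ext (f : ℝ → ℝ) : ℝ → ℝ := IccExtend zero_le_one ((Icc (0 : ℝ) 1).domRestrict f)
  have hext (f : ℝ → ℝ) : EqOn (ext f) f (Icc 0 1) := fun x hx => IccExtend_of_mem _ _ hx
  have h0 : (0 : ℝ) ∈ Icc 0 1 := by simp
  refine ⟨ext y, ext g, ⟨hy.domRestrict.Icc_extend', hg.domRestrict.Icc_extend', fun x hx => ?_,
    fun x hx => ?_⟩, hext y⟩
  · rw [hext y hx, hext y h0, hyg x hx]
    congr 1
    refine intervalIntegral.integral_congr fun t ht => ?_
    rw [uIcc_of_le hx.1] at ht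
    exact (hext g ⟨ht.1, ht.2.trans hx.2⟩).symm
  · rw [hext g hx, hext g h0, hgy x hx, intervalIntegral.integral_of_le hx.1,
      ← integral_Icc_eq_integral_Ioc]
    congr 2
    exact setIntegral_congr_fun measurableSet_Icc fun t ht =>
      (hext y ⟨ht.1, ht.2.trans hx.2⟩).symm

variable [IsProbabilityMeasure μ]

variable (μ l) in
lemma exists_sol_ne_zero :
    ∃ x ∈ Icc (0 : ℝ) 1, sol μ 0 1 l x ≠ 0 := by
  by_contra! hzero
  have hint : ∀ t ∈ Icc (0 : ℝ) 1, ∫ s in 0..t, sol μ 0 1 l s ∂μ = 0 := fun t ht =>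
    intervalIntegral.integral_zero_ae <| .of_forall fun s hs => by
      rw [uIoc_of_le ht.1] at hs
      exact hzero s ⟨hs.1.le, hs.2.trans ht.2⟩
  have h1 := sol_eq_volterra μ 0 1 l (x := 1) (by simp)
  rw [hzero 1 (by simp), intervalIntegral.integral_zero_ae (.of_forall fun t ht => hint t
    (by rw [uIoc_of_le zero_le_one] at ht; exact ⟨ht.1.le, ht.2⟩))] at h1
  norm_num at h1

lemma isDirichletEigen_iff : IsDirichletEigen μ l ↔ sol μ 0 1 l 1 = 0 := by
  constructor
  · rintro ⟨y, g, hy, hg, ⟨x, hx, hyx⟩, hyg, hgy, hy0, hy1⟩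
    obtain ⟨y', g', hsol, heq⟩ := exists_isSolution_of_continuousOn hy hg hyg hgy
    have hrepr : ∀ t ∈ Icc (0 : ℝ) 1, y t = g' 0 * sol μ 0 1 l t := fun t ht => by
      rw [← heq ht, hsol.fst_eq_sol ht, sol_eq_linear_comb _ _ _ ht, heq (by simp), hy0]
      ring
    rw [hrepr x hx] at hyx
    rw [hrepr 1 (by simp)] at hy1
    exact (mul_eq_zero.1 hy1).resolve_left (left_ne_zero_of_mul hyx)
  · intro h
    have hsol := isSolution_sol μ 0 1 l
    refine ⟨_, _, hsol.continuous_fst.continuousOn, hsol.continuous_snd.continuousOn,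
      exists_sol_ne_zero μ l, hsol.fst_eq, fun x hx => ?_, sol_zero μ 0 1 l, h⟩
    rw [hsol.snd_eq x hx, intervalIntegral.integral_of_le hx.1, integral_Icc_eq_integral_Ioc]

lemma IsCantorMeasure.count_scalingMonodromy {κ : ℕ} {a b : ℝ} (hμ : IsCantorMeasure κ a b μ)
    (α β : ℝ) :
    hμ.scalingMonodromy.count α β = ({l | IsDirichletEigen μ l} ∩ Ioc α β).ncard := by
  simp only [isDirichletEigen_iff]
  rfl

end Eigenvalues

section Singularity

variable {κ : ℕ} {M : ScalingMonodromy κ}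

open ScalingMonodromy Filter Topology

lemma isCountingLimit_of_tendsto {D : ℝ} {s : ℝ → ℝ} (hD : M.τ ^ D = κ) (hD0 : D ≠ 0)
    (hper : Function.Periodic s (Real.log M.τ))
    (hasymp : Tendsto (fun Λ => (M.count 0 Λ : ℝ) / Λ ^ D - s (Real.log Λ)) atTop (𝓝 0)) :
    M.IsCountingLimit fun l => l ^ D * s (Real.log l) := by
  intro l hl
  have hτ := M.τ_pos
  have hκ : 0 < (κ : ℝ) := by exact_mod_cast M.κ_ne_zero.bot_lt
  rcases hl.eq_or_lt with rfl | hl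
  · simp [count, Real.zero_rpow hD0]
  have hlim := ((hasymp.comp ((tendsto_pow_atTop_atTop_of_one_lt M.one_lt_τ).atTop_mul_const
    hl)).add_const (s (Real.log l))).const_mul (l ^ D)
  rw [zero_add] at hlim
  refine hlim.congr fun k => ?_
  have hlog : Real.log (M.τ ^ k * l) = Real.log l + k * Real.log M.τ := by
    rw [Real.log_mul (pow_pos hτ k).ne' hl.ne', Real.log_pow, add_comm]
  have hpow : (M.τ ^ k * l) ^ D = κ ^ k * l ^ D := by
    rw [Real.mul_rpow (pow_pos hτ k).le hl.le, ← Real.rpow_natCast, ← Real.rpow_mul hτ.le,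
      mul_comm (k : ℝ), Real.rpow_mul hτ.le, hD, Real.rpow_natCast]
  have : 0 < l ^ D := Real.rpow_pos_of_pos hl D
  rw [Function.comp_apply, hlog, hpow, hper.nat_mul k]
  field_simp
  ring

namespace ScalingMonodromy.IsCountingLimit

variable {F : ℝ → ℝ}

lemma monotone_comp_exp (hF : M.IsCountingLimit F) : Monotone fun t => F (Real.exp t) :=
  fun t u htu => hF.monotoneOn (Real.exp_pos t).le (Real.exp_pos u).le (Real.exp_le_exp.2 htu)

lemma not_hasDerivAt_comp_exp (hF : M.IsCountingLimit F) {ρ : ℝ} (hρ : 0 < ρ) (t : ℝ) :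
    ¬HasDerivAt (fun t => F (Real.exp t)) ρ t := by
  intro hderiv
  have ht := Real.exp_pos t
  rw [← Real.log_exp t] at hderiv
  refine hF.not_hasDerivAt ht (mul_pos hρ (inv_pos.2 ht))
    ((hderiv.comp (Real.exp t) (Real.hasDerivAt_log ht.ne')).congr_of_eventuallyEq ?_)
  filter_upwards [eventually_gt_nhds ht] with l hl
  rw [Function.comp_apply, Real.exp_log hl]

theorem mutuallySingular (hF : M.IsCountingLimit F) :
    hF.monotone_comp_exp.stieltjesFunction.measure.MutuallySingular volume := by
  refine (Measure.rnDeriv_eq_zero _ _).1 ?_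
  filter_upwards [hF.monotone_comp_exp.ae_hasDerivAt, Measure.rnDeriv_lt_top
    hF.monotone_comp_exp.stieltjesFunction.measure volume] with t hderiv hlt
  by_contra hne
  exact hF.not_hasDerivAt_comp_exp (ENNReal.toReal_pos hne hlt.ne) t hderiv

end ScalingMonodromy.IsCountingLimit

end Singularity

end CantorString

open CantorString in
theorem asymptotic_coefficient_singular_general (κ : ℕ) (a b : ℝ) (hκ : 2 ≤ κ)
    (ha : 0 < a) (ha' : a < 1 / κ) (hb : b = (1 - κ * a) / (κ - 1))
    (D ν : ℝ) (hD : D = Real.log κ / Real.log (κ / a)) (hν : ν = Real.log (κ / a))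
    (P : ℝ → ℝ) (hP : CantorType κ a b P) (hPmono : MonotoneOn P (Set.Icc 0 1))
    (μ : Measure ℝ)
    (hμ : ∀ x ∈ Set.Icc (0 : ℝ) 1, μ (Set.Icc 0 x) = ENNReal.ofReal (P x))
    (hμc : μ (Set.Icc (0 : ℝ) 1)ᶜ = 0)
    (s : ℝ → ℝ) (hper : Function.Periodic s ν)
    (hasymp : Filter.Tendsto
      (fun Λ : ℝ => (({l : ℝ | IsDirichletEigen μ l} ∩ Set.Ioc 0 Λ).ncard : ℝ) / Λ ^ D
        - s (Real.log Λ))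
      Filter.atTop (nhds 0)) :
    ∃ hσ : Monotone fun t => Real.exp (D * t) * s t,
      hσ.stieltjesFunction.measure.MutuallySingular volume := by
  have hPμ : IsDistributionFunction P μ := ⟨hP.1, hPmono, hP.2.1, hP.2.2.1, hμ, hμc⟩
  have := hPμ.isProbabilityMeasure
  have := hPμ.nullSingletonClass
  have hcantor := hPμ.isCantorMeasure hP hκ ha ha' hb
  have hlogκ : 0 < Real.log κ := Real.log_pos (by exact_mod_cast hκ)
  have hlogτ : 0 < Real.log (κ / a) := Real.log_pos hcantor.one_lt_ratio
  have hτD : ((κ : ℝ) / a) ^ D = κ := by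
    rw [Real.rpow_def_of_pos (by positivity), hD, mul_div_cancel₀ _ hlogτ.ne',
      Real.exp_log (by positivity)]
  simp only [← hcantor.count_scalingMonodromy] at hasymp
  have hF := isCountingLimit_of_tendsto (M := hcantor.scalingMonodromy) hτD
    (hD ▸ (div_pos hlogκ hlogτ).ne') (hν ▸ hper) hasymp
  have hσ : (fun t => Real.exp t ^ D * s (Real.log (Real.exp t))) =
      fun t => Real.exp (D * t) * s t := funext fun t => by
    rw [Real.log_exp, ← Real.exp_mul, mul_comm t]
  exact hσ ▸ ⟨hF.monotone_comp_exp, hF.mutuallySingular⟩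

theorem asymptotic_coefficient_singular (κ : ℕ) (a b : ℝ) (hκ : 2 ≤ κ)
    (ha : 0 < a) (ha' : a < 1 / κ) (hb : b = (1 - κ * a) / (κ - 1))
    (D ν : ℝ) (hD : D = Real.log κ / Real.log (κ / a)) (hν : ν = Real.log (κ / a))
    (P : ℝ → ℝ) (hP : CantorType κ a b P) (hPmono : MonotoneOn P (Set.Icc 0 1))
    (μ : Measure ℝ)
    (hμ : ∀ x ∈ Set.Icc (0 : ℝ) 1, μ (Set.Icc 0 x) = ENNReal.ofReal (P x))
    (hμc : μ (Set.Icc (0 : ℝ) 1)ᶜ = 0)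
    (hfin : ∀ Λ : ℝ, 0 < Λ → ({l : ℝ | IsDirichletEigen μ l} ∩ Set.Ioc 0 Λ).Finite)
    (s : ℝ → ℝ) (hs : Continuous s) (hper : Function.Periodic s ν)
    (hasymp : Filter.Tendsto
      (fun Λ : ℝ => (({l : ℝ | IsDirichletEigen μ l} ∩ Set.Ioc 0 Λ).ncard : ℝ) / Λ ^ D
        - s (Real.log Λ))
      Filter.atTop (nhds 0)) :
    ∃ σ : ℝ → ℝ, ∃ hσ : Monotone σ,
      (hσ.stieltjesFunction.measure.restrict (Set.Icc 0 ν)).MutuallySingular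
        (volume.restrict (Set.Icc 0 ν)) ∧
      ∀ t ∈ Set.Icc (0 : ℝ) ν, s t = Real.exp (-D * t) * σ t := by
  obtain ⟨hσ, hsing⟩ := asymptotic_coefficient_singular_general κ a b hκ ha ha' hb D ν hD hν P hP
    hPmono μ hμ hμc s hper hasymp
  refine ⟨_, hσ, hsing.mono Measure.restrict_le_self Measure.restrict_le_self, fun t _ => ?_⟩
  rw [neg_mul, Real.exp_neg, inv_mul_cancel_left₀ (Real.exp_pos _).ne']
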